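/- There exist positive numerical constants ρ_r′, ρ_s′, and c′ such that the following holds. Under the observation model with incoherence parameter ν, if r ≤ ρ_r′ · n2 · ν⁻¹ · (log n1)⁻² and m ≤ ρ_s′ · n1 · n2, then with probability at least 1 − c′·n1^{−10} over the random support Ω and the random signs, the following event occurs: for every δ ≥ 0 and every noise matrix Z0 with ‖Z0‖_F ≥ δ, every minimizer (L̂, Ŝ) of StablePCP_c(δ) with λ = 1/√n1 and data D = L0 + S0 + Z0 satisfies ‖(L̂, Ŝ) − (L0, S0)‖_F ≤ √(720·n1·n2 + 2) · ‖Z0‖_F. -/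

import Mathlib

open Matrix
open scoped BigOperators

/-- Frobenius norm of a real matrix. -/
noncomputable def frob {n1 n2 : ℕ} (A : Matrix (Fin n1) (Fin n2) ℝ) : ℝ :=
  Real.sqrt (∑ i, ∑ j, A i j ^ 2)

/-- Entrywise ℓ¹ norm. -/
noncomputable def l1norm {n1 n2 : ℕ} (A : Matrix (Fin n1) (Fin n2) ℝ) : ℝ :=
  ∑ i, ∑ j, |A i j|

/-- Trace inner product ⟨A,B⟩ = trace(AᵀB). -/
noncomputable def minner {n1 n2 : ℕ} (A B : Matrix (Fin n1) (Fin n2) ℝ) : ℝ :=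
  ∑ i, ∑ j, A i j * B i j

/-- Spectral norm (largest singular value), as the ℓ²→ℓ² operator norm. -/
noncomputable def spec {n1 n2 : ℕ} (A : Matrix (Fin n1) (Fin n2) ℝ) : ℝ :=
  sSup {c : ℝ | ∃ x : Fin n2 → ℝ, (∑ j, x j ^ 2) ≤ 1 ∧
    c = Real.sqrt (∑ i, (∑ j, A i j * x j) ^ 2)}

/-- Nuclear norm (sum of singular values), via duality with the spectral norm. -/
noncomputable def nuc {n1 n2 : ℕ} (A : Matrix (Fin n1) (Fin n2) ℝ) : ℝ :=
  sSup {c : ℝ | ∃ B : Matrix (Fin n1) (Fin n2) ℝ, spec B ≤ 1 ∧ c = minner A B}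

/-- P_Ω: the matrix agreeing with `M` on `Ω` and zero off `Ω`. -/
noncomputable def projS {n1 n2 : ℕ} (Ω : Finset (Fin n1 × Fin n2))
    (M : Matrix (Fin n1) (Fin n2) ℝ) : Matrix (Fin n1) (Fin n2) ℝ :=
  Matrix.of fun i j => if (i, j) ∈ Ω then M i j else 0

/-- Entrywise sign matrix. -/
noncomputable def signM {n1 n2 : ℕ} (A : Matrix (Fin n1) (Fin n2) ℝ) :
    Matrix (Fin n1) (Fin n2) ℝ :=
  Matrix.of fun i j => Real.sign (A i j)

/-- The tangent space T = {UQᵀ + RVᵀ}. -/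
def memT {n1 n2 r : ℕ} (U : Matrix (Fin n1) (Fin r) ℝ) (V : Matrix (Fin n2) (Fin r) ℝ)
    (M : Matrix (Fin n1) (Fin n2) ℝ) : Prop :=
  ∃ (Q : Matrix (Fin n2) (Fin r) ℝ) (R : Matrix (Fin n1) (Fin r) ℝ), M = U * Qᵀ + R * Vᵀ

/-- Membership in T⊥, the orthogonal complement of the tangent space. -/
def memTperp {n1 n2 r : ℕ} (U : Matrix (Fin n1) (Fin r) ℝ) (V : Matrix (Fin n2) (Fin r) ℝ)
    (W : Matrix (Fin n1) (Fin n2) ℝ) : Prop :=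
  ∀ M, memT U V M → minner W M = 0

/-- (L̂, Ŝ) is a global minimizer of the √PCP objective
`‖L‖_* + λ‖S‖₁ + μ‖L + S − D‖_F`. -/
def IsRootPCPMin {n1 n2 : ℕ} (D : Matrix (Fin n1) (Fin n2) ℝ) (lam mu : ℝ)
    (Lh Sh : Matrix (Fin n1) (Fin n2) ℝ) : Prop :=
  ∀ L S : Matrix (Fin n1) (Fin n2) ℝ,
    nuc Lh + lam * l1norm Sh + mu * frob (Lh + Sh - D) ≤
      nuc L + lam * l1norm S + mu * frob (L + S - D)

/-- (L̂, Ŝ) is a minimizer of StablePCP_c(δ):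
minimize `‖L‖_* + λ‖S‖₁` subject to `‖L + S − D‖_F ≤ δ`. -/
def IsStablePCPMin {n1 n2 : ℕ} (D : Matrix (Fin n1) (Fin n2) ℝ) (lam δ : ℝ)
    (Lh Sh : Matrix (Fin n1) (Fin n2) ℝ) : Prop :=
  frob (Lh + Sh - D) ≤ δ ∧
    ∀ L S : Matrix (Fin n1) (Fin n2) ℝ, frob (L + S - D) ≤ δ →
      nuc Lh + lam * l1norm Sh ≤ nuc L + lam * l1norm S

/-- Frobenius distance between pairs: ‖(L,S) − (L',S')‖_F. -/
noncomputable def pairDist {n1 n2 : ℕ} (L S L' S' : Matrix (Fin n1) (Fin n2) ℝ) : ℝ :=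
  Real.sqrt (frob (L - L') ^ 2 + frob (S - S') ^ 2)

/-- Sample space of the random sparsity model: a uniformly random support of
cardinality m together with iid uniform random signs. -/
abbrev SampleSpace (n1 n2 m : ℕ) : Type :=
  {Ω : Finset (Fin n1 × Fin n2) // Ω.card = m} × ((Fin n1 × Fin n2) → Bool)

/-- The sparse matrix S0 built from fixed magnitudes `a` and a random sample:
S0 vanishes off Ω and equals ±a on Ω according to the random signs. -/
noncomputable def sparseOf {n1 n2 m : ℕ} (a : Fin n1 × Fin n2 → ℝ) (ω : SampleSpace n1 n2 m) :
    Matrix (Fin n1) (Fin n2) ℝ :=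
  Matrix.of fun i j =>
    if (i, j) ∈ ω.1.1 then (if ω.2 (i, j) then a (i, j) else -a (i, j)) else 0

open Classical in
/-- Uniform probability of an event on a finite sample space. -/
noncomputable def unifProb {α : Type*} [Fintype α] (E : α → Prop) : ℝ :=
  ((Finset.univ.filter fun a => E a).card : ℝ) / (Fintype.card α : ℝ)

namespace StablePCP

section Bernoulli

variable {ι : Type*} [Fintype ι]

/-- The product Bernoulli weight of a configuration. -/
noncomputable def bernWeight (q : ℝ) (z : ι → Bool) : ℝ := ∏ i, (if z i then q else 1 - q)

/-- Expectation of `f` when the coordinates are independent and `true` with probability `q`. -/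
noncomputable def bernE [DecidableEq ι] (q : ℝ) (f : (ι → Bool) → ℝ) : ℝ :=
  ∑ z, bernWeight q z * f z

open Classical in
/-- The `{0,1}`-valued indicator of a proposition. -/
noncomputable def ind (p : Prop) : ℝ := if p then 1 else 0

lemma ind_of {p : Prop} (h : p) : ind p = 1 := by simp [ind, h]

lemma ind_of_not {p : Prop} (h : ¬p) : ind p = 0 := by simp [ind, h]

lemma ind_nonneg (p : Prop) : 0 ≤ ind p := by
  unfold ind; split_ifs <;> norm_num

lemma ind_le_one (p : Prop) : ind p ≤ 1 := by
  unfold ind; split_ifs <;> norm_num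

lemma ind_mono {p p' : Prop} (h : p → p') : ind p ≤ ind p' := by
  by_cases hp : p
  · rw [ind_of hp, ind_of (h hp)]
  · rw [ind_of_not hp]; exact ind_nonneg _

lemma ind_or_le (p p' : Prop) : ind (p ∨ p') ≤ ind p + ind p' := by
  by_cases hp : p
  · rw [ind_of hp]; linarith [ind_le_one (p ∨ p'), ind_nonneg p']
  · linarith [ind_nonneg p, ind_mono (p := p ∨ p') (p' := p') (by tauto)]

lemma ind_exists_le {κ : Type*} (s : Finset κ) (E : κ → Prop) :
    ind (∃ k ∈ s, E k) ≤ ∑ k ∈ s, ind (E k) := by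
  by_cases h : ∃ k ∈ s, E k
  · obtain ⟨k, hk, hE⟩ := h
    calc ind _ ≤ 1 := ind_le_one _
      _ = ind (E k) := (ind_of hE).symm
      _ ≤ _ := Finset.single_le_sum (f := fun k => ind (E k)) (fun _ _ => ind_nonneg _) hk
  · rw [ind_of_not h]; exact Finset.sum_nonneg fun _ _ => ind_nonneg _

lemma bernWeight_nonneg {q : ℝ} (h0 : 0 ≤ q) (h1 : q ≤ 1) (z : ι → Bool) :
    0 ≤ bernWeight q z :=
  Finset.prod_nonneg fun i _ => by split_ifs <;> linarith

variable [DecidableEq ι]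

lemma bernE_prod (q : ℝ) (g : ι → Bool → ℝ) :
    bernE q (fun z => ∏ i, g i (z i)) = ∏ i, (q * g i true + (1 - q) * g i false) := by
  unfold bernE bernWeight
  simp_rw [← Finset.prod_mul_distrib]
  have := Fintype.prod_sum (fun (i : ι) (b : Bool) => (if b then q else 1 - q) * g i b)
  rw [← this]
  simp

lemma bernE_mono {q : ℝ} (h0 : 0 ≤ q) (h1 : q ≤ 1) {f g : (ι → Bool) → ℝ}
    (h : ∀ z, f z ≤ g z) : bernE q f ≤ bernE q g :=
  Finset.sum_le_sum fun z _ => mul_le_mul_of_nonneg_left (h z) (bernWeight_nonneg h0 h1 z)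

lemma bernE_add (q : ℝ) (f g : (ι → Bool) → ℝ) :
    bernE q (fun z => f z + g z) = bernE q f + bernE q g := by
  simp [bernE, mul_add, Finset.sum_add_distrib]

lemma bernE_mul_left (q c : ℝ) (f : (ι → Bool) → ℝ) :
    bernE q (fun z => c * f z) = c * bernE q f := by
  simp only [bernE, Finset.mul_sum]
  exact Finset.sum_congr rfl fun z _ => by ring

lemma bernE_sum {κ : Type*} (q : ℝ) (s : Finset κ) (f : κ → (ι → Bool) → ℝ) :
    bernE q (fun z => ∑ k ∈ s, f k z) = ∑ k ∈ s, bernE q (f k) := by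
  simp only [bernE, Finset.mul_sum]
  exact Finset.sum_comm

lemma bernE_one (q : ℝ) : bernE q (fun _ : ι → Bool => (1 : ℝ)) = 1 := by
  have := bernE_prod q (fun (_ : ι) (_ : Bool) => (1 : ℝ))
  simpa using this

lemma bernE_const (q c : ℝ) : bernE q (fun _ : ι → Bool => c) = c := by
  have := bernE_mul_left (ι := ι) q c (fun _ => 1)
  simpa [bernE_one] using this

lemma bernE_nonneg {q : ℝ} (h0 : 0 ≤ q) (h1 : q ≤ 1) {f : (ι → Bool) → ℝ}
    (h : ∀ z, 0 ≤ f z) : 0 ≤ bernE q f :=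
  Finset.sum_nonneg fun z _ => mul_nonneg (bernWeight_nonneg h0 h1 z) (h z)

lemma bernE_comm {κ : Type*} [Fintype κ] [DecidableEq κ] (p q : ℝ)
    (f : (ι → Bool) → (κ → Bool) → ℝ) :
    bernE p (fun z => bernE q (fun s => f z s)) = bernE q (fun s => bernE p (fun z => f z s)) := by
  simp only [bernE, Finset.mul_sum]
  rw [Finset.sum_comm]
  exact Finset.sum_congr rfl fun z _ => Finset.sum_congr rfl fun s _ => by ring

/-- Intersecting two independent Bernoulli sets multiplies the inclusion probabilities. -/
lemma bernE_and (p q : ℝ) (f : (ι → Bool) → ℝ) :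
    bernE p (fun z => bernE q (fun w => f (fun i => z i && w i))) = bernE (p * q) f := by
  have key : ∀ u : ι → Bool, bernE p (fun z => bernE q (fun w =>
      if (fun i => z i && w i) = u then 1 else 0)) = bernWeight (p * q) u := by
    intro u
    have h1 : ∀ z w : ι → Bool, (if (fun i => z i && w i) = u then (1 : ℝ) else 0)
        = ∏ i, (if (z i && w i) = u i then (1 : ℝ) else 0) := by
      intro z w
      by_cases h : (fun i => z i && w i) = u
      · rw [if_pos h]; subst h; simp
      · rw [if_neg h]
        obtain ⟨i, hi⟩ := Function.ne_iff.mp h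
        exact (Finset.prod_eq_zero (Finset.mem_univ i) (if_neg hi)).symm
    simp_rw [h1]
    have h2 : ∀ z : ι → Bool, bernE q (fun w => ∏ i, (if (z i && w i) = u i then (1 : ℝ) else 0))
        = ∏ i, (q * (if z i = u i then 1 else 0) + (1 - q) * (if false = u i then 1 else 0)) := by
      intro z
      rw [bernE_prod q (fun i b => if (z i && b) = u i then (1 : ℝ) else 0)]
      simp
    simp_rw [h2]
    rw [bernE_prod p (fun i b => q * (if b = u i then 1 else 0)
      + (1 - q) * (if false = u i then 1 else 0))]
    unfold bernWeight
    refine Finset.prod_congr rfl fun i _ => ?_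
    cases u i <;> simp
    ring
  have h3 : ∀ z w : ι → Bool, f (fun i => z i && w i)
      = ∑ u, f u * (if (fun i => z i && w i) = u then 1 else 0) := by
    intro z w; simp
  simp_rw [h3]
  simp_rw [bernE_sum, bernE_mul_left, key]
  simp [bernE, mul_comm]

/-- Conditioning on one coordinate being selected. -/
lemma bernE_coord (q : ℝ) (i : ι) (g : (ι → Bool) → ℝ) :
    bernE q (fun z => if z i then g (Function.update z i true) else 0)
      = q * bernE q (fun z => g (Function.update z i true)) := by
  have split : ∀ h : (ι → Bool) → ℝ, bernE q h
      = ∑ z : {j // j ≠ i} → Bool, (∏ j, if z j then q else 1 - q) *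
        (q * h ((Equiv.funSplitAt i Bool).symm (true, z))
          + (1 - q) * h ((Equiv.funSplitAt i Bool).symm (false, z))) := by
    intro h
    unfold bernE bernWeight
    rw [← (Equiv.funSplitAt i Bool).symm.sum_comp, Fintype.sum_prod_type_right]
    refine Finset.sum_congr rfl fun z _ => ?_
    have hw : ∀ b : Bool, (∏ j, if ((Equiv.funSplitAt i Bool).symm (b, z)) j then q else 1 - q)
        = (if b then q else 1 - q) * ∏ j, if z j then q else 1 - q := by
      intro b
      rw [Fintype.prod_eq_mul_prod_subtype_ne _ i]
      congr 1
      · simp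
      · refine Finset.prod_congr rfl fun j _ => ?_
        have := j.2
        simp [this]
    simp only [hw, Fintype.sum_bool]
    simp
    ring
  have hu : ∀ (b : Bool) (z : {j // j ≠ i} → Bool),
      Function.update ((Equiv.funSplitAt i Bool).symm (b, z)) i true
        = (Equiv.funSplitAt i Bool).symm (true, z) := by
    intro b z
    funext j
    by_cases hj : j = i
    · subst hj; simp
    · simp [hj]
  rw [split, split, Finset.mul_sum]
  refine Finset.sum_congr rfl fun z _ => ?_
  simp only [hu]
  simp
  ring

end Bernoulli

section Chernoff

variable {ι : Type*} [Fintype ι]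

lemma col_quad {P : Matrix ι ι ℝ} (hP : Pᵀ = P) (B : Matrix ι ι ℝ) (i : ι) :
    P.col i ⬝ᵥ (B *ᵥ P.col i) = (P * B * P) i i := by
  have hs : ∀ a, P i a = P a i := fun a => by conv_lhs => rw [← hP, transpose_apply]
  rw [Matrix.mul_assoc, Matrix.mul_apply]
  simp only [dotProduct, mulVec, col_apply, Matrix.mul_apply]
  exact Finset.sum_congr rfl fun a _ => by rw [hs]

variable [DecidableEq ι]

lemma exists_diagonalization {A : Matrix ι ι ℝ} (hA : A.PosSemidef) :
    ∃ (e : ι → ℝ) (O : Matrix ι ι ℝ), (∀ i, 0 ≤ e i) ∧ Oᵀ * O = 1 ∧ O * Oᵀ = 1 ∧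
      A = O * diagonal e * Oᵀ := by
  refine ⟨hA.isHermitian.eigenvalues, hA.isHermitian.eigenvectorUnitary.1,
    fun i => hA.eigenvalues_nonneg i, ?_, ?_, ?_⟩
  · have := Matrix.mem_unitaryGroup_iff'.mp hA.isHermitian.eigenvectorUnitary.2
    simpa [star_eq_conjTranspose] using this
  · have := Matrix.mem_unitaryGroup_iff.mp hA.isHermitian.eigenvectorUnitary.2
    simpa [star_eq_conjTranspose] using this
  · have := hA.isHermitian.spectral_theorem
    rw [Unitary.conjStarAlgAut_apply] at this
    simpa [star_eq_conjTranspose] using this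

lemma conj_diagonal_pow {e : ι → ℝ} {O : Matrix ι ι ℝ} (h1 : Oᵀ * O = 1) (h2 : O * Oᵀ = 1)
    (n : ℕ) : (O * diagonal e * Oᵀ) ^ n = O * diagonal (fun i => e i ^ n) * Oᵀ := by
  induction n with
  | zero => simp [h2]
  | succ n ih =>
    rw [pow_succ, ih]
    calc O * diagonal (fun i => e i ^ n) * Oᵀ * (O * diagonal e * Oᵀ)
        = O * diagonal (fun i => e i ^ n) * (Oᵀ * O) * diagonal e * Oᵀ := by
          simp only [Matrix.mul_assoc]
      _ = _ := by
          rw [h1, Matrix.mul_one, Matrix.mul_assoc O, diagonal_mul_diagonal]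
          simp [pow_succ]

/-- Spectral representation of the moments of a vector with respect to a positive matrix. -/
lemma exists_spectral_moments {A : Matrix ι ι ℝ} (hA : A.PosSemidef) (u : ι → ℝ) :
    ∃ e c : ι → ℝ, (∀ i, 0 ≤ e i) ∧ ∀ (a : ℝ) (l n : ℕ),
      u ⬝ᵥ ((A ^ l * (A + a • (1 : Matrix ι ι ℝ)) ^ n) *ᵥ u)
        = ∑ i, e i ^ l * (e i + a) ^ n * c i ^ 2 := by
  obtain ⟨e, O, he, h1, h2, hAO⟩ := exists_diagonalization hA
  refine ⟨e, Oᵀ *ᵥ u, he, fun a l n => ?_⟩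
  have h3 : A + a • (1 : Matrix ι ι ℝ) = O * diagonal (fun i => e i + a) * Oᵀ := by
    have : diagonal (fun i => e i + a) = diagonal e + a • (1 : Matrix ι ι ℝ) := by
      rw [smul_one_eq_diagonal, diagonal_add]
    rw [this, Matrix.mul_add, Matrix.add_mul, ← hAO]
    simp [h2]
  rw [h3, hAO, conj_diagonal_pow h1 h2, conj_diagonal_pow h1 h2]
  have h4 : O * diagonal (fun i => e i ^ l) * Oᵀ * (O * diagonal (fun i => (e i + a) ^ n) * Oᵀ)
      = O * diagonal (fun i => e i ^ l * (e i + a) ^ n) * Oᵀ := by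
    calc _ = O * diagonal (fun i => e i ^ l) * (Oᵀ * O) * diagonal (fun i => (e i + a) ^ n) * Oᵀ := by
          simp only [Matrix.mul_assoc]
      _ = _ := by
          rw [h1, Matrix.mul_one, Matrix.mul_assoc O, diagonal_mul_diagonal]
  rw [h4, ← mulVec_mulVec, ← mulVec_mulVec, dotProduct_mulVec, ← mulVec_transpose]
  simp only [dotProduct, mulVec_diagonal]
  exact Finset.sum_congr rfl fun i _ => by ring

lemma trace_pow_ge {A : Matrix ι ι ℝ} (hA : A.PosSemidef) {t : ℝ} (ht : 0 ≤ t) (x : ι → ℝ)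
    (hx : t * (x ⬝ᵥ x) < x ⬝ᵥ (A *ᵥ x)) (k : ℕ) : t ^ k ≤ (A ^ k).trace := by
  obtain ⟨e, O, he, h1, h2, hAO⟩ := exists_diagonalization hA
  have htr : (A ^ k).trace = ∑ i, e i ^ k := by
    rw [hAO, conj_diagonal_pow h1 h2, trace_mul_comm, ← Matrix.mul_assoc, h1, Matrix.one_mul,
      trace_diagonal]
  have hxA : x ⬝ᵥ (A *ᵥ x) = ∑ i, e i * (Oᵀ *ᵥ x) i ^ 2 := by
    rw [hAO, ← mulVec_mulVec, ← mulVec_mulVec, dotProduct_mulVec, ← mulVec_transpose]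
    simp only [dotProduct, mulVec_diagonal]
    exact Finset.sum_congr rfl fun i _ => by ring
  have hxx : x ⬝ᵥ x = ∑ i, (Oᵀ *ᵥ x) i ^ 2 := by
    have : x ⬝ᵥ x = x ⬝ᵥ ((O * Oᵀ) *ᵥ x) := by rw [h2, one_mulVec]
    rw [this, ← mulVec_mulVec, dotProduct_mulVec, ← mulVec_transpose]
    simp only [dotProduct]
    exact Finset.sum_congr rfl fun i _ => by ring
  have : ∃ i, t < e i := by
    by_contra! hcon
    have : x ⬝ᵥ (A *ᵥ x) ≤ t * (x ⬝ᵥ x) := by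
      rw [hxA, hxx, Finset.mul_sum]
      exact Finset.sum_le_sum fun i _ => mul_le_mul_of_nonneg_right (hcon i) (sq_nonneg _)
    linarith
  obtain ⟨i, hi⟩ := this
  rw [htr]
  calc t ^ k ≤ e i ^ k := pow_le_pow_left₀ ht hi.le k
    _ ≤ _ := Finset.single_le_sum (f := fun i => e i ^ k) (fun j _ => pow_nonneg (he j) k)
      (Finset.mem_univ i)

lemma quad_add_vecMulVec (A B : Matrix ι ι ℝ) (u v : ι → ℝ) (l : ℕ) :
    v ⬝ᵥ ((A ^ l * ((A + vecMulVec u u) * B)) *ᵥ v)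
      = v ⬝ᵥ ((A ^ (l + 1) * B) *ᵥ v) + v ⬝ᵥ (A ^ l *ᵥ u) * (u ⬝ᵥ (B *ᵥ v)) := by
  rw [Matrix.add_mul, Matrix.mul_add, ← Matrix.mul_assoc, ← pow_succ, add_mulVec, dotProduct_add]
  congr 1
  rw [← mulVec_mulVec, ← mulVec_mulVec, vecMulVec_mulVec, mulVec_smul, dotProduct_smul]
  simp [mul_comm]

/-- Moments of a rank-one perturbation dominate the unperturbed moments. -/
lemma quad_le_quad_rankOne {A : Matrix ι ι ℝ} (hA : A.PosSemidef) (u : ι → ℝ) (n l : ℕ) :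
    u ⬝ᵥ (A ^ (l + n) *ᵥ u) ≤ u ⬝ᵥ ((A ^ l * (A + vecMulVec u u) ^ n) *ᵥ u) := by
  have hB : (A + vecMulVec u u).PosSemidef := by
    have := posSemidef_vecMulVec_self_star u
    simp only [star_trivial] at this
    exact hA.add this
  induction n generalizing l with
  | zero => simp
  | succ n ih =>
    rw [pow_succ', quad_add_vecMulVec]
    have h1 := ih (l + 1)
    have h2 : 0 ≤ u ⬝ᵥ (A ^ l *ᵥ u) := by
      simpa using (hA.pow l).dotProduct_mulVec_nonneg u
    have h3 : 0 ≤ u ⬝ᵥ ((A + vecMulVec u u) ^ n *ᵥ u) := by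
      simpa using (hB.pow n).dotProduct_mulVec_nonneg u
    have h4 := mul_nonneg h2 h3
    rw [show l + (n + 1) = l + 1 + n by ring]
    linarith

/-- A rank-one perturbation `u uᵀ` acts on the moments of `u` at most like the shift by `u ⬝ᵥ u`. -/
lemma quad_rankOne_le {A : Matrix ι ι ℝ} (hA : A.PosSemidef) (u : ι → ℝ) (n l : ℕ) :
    u ⬝ᵥ ((A ^ l * (A + vecMulVec u u) ^ n) *ᵥ u)
      ≤ u ⬝ᵥ ((A ^ l * (A + (u ⬝ᵥ u) • (1 : Matrix ι ι ℝ)) ^ n) *ᵥ u) := by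
  obtain ⟨e, c, he, hec⟩ := exists_spectral_moments hA u
  induction n generalizing l with
  | zero => simp
  | succ n ih =>
    rw [pow_succ', quad_add_vecMulVec]
    have h1 := ih (l + 1)
    have h2 := ih 0
    rw [pow_zero, Matrix.one_mul, Matrix.one_mul] at h2
    have ha0 : u ⬝ᵥ u = ∑ i, c i ^ 2 := by simpa using hec 0 0 0
    have hal : u ⬝ᵥ (A ^ l *ᵥ u) = ∑ i, e i ^ l * c i ^ 2 := by simpa using hec 0 l 0
    have hn0 : u ⬝ᵥ ((A + (u ⬝ᵥ u) • (1 : Matrix ι ι ℝ)) ^ n *ᵥ u)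
        = ∑ i, (e i + u ⬝ᵥ u) ^ n * c i ^ 2 := by simpa using hec (u ⬝ᵥ u) 0 n
    have hal0 : 0 ≤ u ⬝ᵥ (A ^ l *ᵥ u) := by
      rw [hal]; exact Finset.sum_nonneg fun i _ => mul_nonneg (pow_nonneg (he i) l) (sq_nonneg _)
    have ha00 : 0 ≤ u ⬝ᵥ u := by
      rw [ha0]; exact Finset.sum_nonneg fun i _ => sq_nonneg _
    have h3 := mul_le_mul_of_nonneg_left h2 hal0
    have cheb : (∑ i, e i ^ l * c i ^ 2) * (∑ i, (e i + u ⬝ᵥ u) ^ n * c i ^ 2)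
        ≤ (∑ i, c i ^ 2) * (∑ i, e i ^ l * (e i + u ⬝ᵥ u) ^ n * c i ^ 2) := by
      have hpos : 0 ≤ ∑ i, ∑ j, c i ^ 2 * c j ^ 2 *
          ((e i ^ l - e j ^ l) * ((e i + u ⬝ᵥ u) ^ n - (e j + u ⬝ᵥ u) ^ n)) := by
        refine Finset.sum_nonneg fun i _ => Finset.sum_nonneg fun j _ => ?_
        refine mul_nonneg (mul_nonneg (sq_nonneg _) (sq_nonneg _)) ?_
        rcases le_total (e i) (e j) with h | h
        · exact mul_nonneg_of_nonpos_of_nonpos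
            (sub_nonpos.mpr (pow_le_pow_left₀ (he i) h l))
            (sub_nonpos.mpr (pow_le_pow_left₀ (by linarith [he i]) (by linarith) n))
        · exact mul_nonneg (sub_nonneg.mpr (pow_le_pow_left₀ (he j) h l))
            (sub_nonneg.mpr (pow_le_pow_left₀ (by linarith [he j]) (by linarith) n))
      have hexp : ∑ i, ∑ j, c i ^ 2 * c j ^ 2 *
          ((e i ^ l - e j ^ l) * ((e i + u ⬝ᵥ u) ^ n - (e j + u ⬝ᵥ u) ^ n))
          = 2 * ((∑ i, c i ^ 2) * (∑ i, e i ^ l * (e i + u ⬝ᵥ u) ^ n * c i ^ 2))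
            - 2 * ((∑ i, e i ^ l * c i ^ 2) * (∑ i, (e i + u ⬝ᵥ u) ^ n * c i ^ 2)) := by
        have t1 : (∑ i, c i ^ 2) * (∑ i, e i ^ l * (e i + u ⬝ᵥ u) ^ n * c i ^ 2)
            = ∑ i, ∑ j, c i ^ 2 * (e j ^ l * (e j + u ⬝ᵥ u) ^ n * c j ^ 2) :=
          Finset.sum_mul_sum _ _ _ _
        have t2 : (∑ i, c i ^ 2) * (∑ i, e i ^ l * (e i + u ⬝ᵥ u) ^ n * c i ^ 2)
            = ∑ i, ∑ j, (e i ^ l * (e i + u ⬝ᵥ u) ^ n * c i ^ 2) * c j ^ 2 := by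
          rw [mul_comm]; exact Finset.sum_mul_sum _ _ _ _
        have t3 : (∑ i, e i ^ l * c i ^ 2) * (∑ i, (e i + u ⬝ᵥ u) ^ n * c i ^ 2)
            = ∑ i, ∑ j, (e i ^ l * c i ^ 2) * ((e j + u ⬝ᵥ u) ^ n * c j ^ 2) :=
          Finset.sum_mul_sum _ _ _ _
        have t4 : (∑ i, e i ^ l * c i ^ 2) * (∑ i, (e i + u ⬝ᵥ u) ^ n * c i ^ 2)
            = ∑ i, ∑ j, ((e i + u ⬝ᵥ u) ^ n * c i ^ 2) * (e j ^ l * c j ^ 2) := by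
          rw [mul_comm]; exact Finset.sum_mul_sum _ _ _ _
        rw [two_mul, two_mul]
        nth_rewrite 1 [t1]
        rw [t2]
        nth_rewrite 1 [t3]
        rw [t4]
        simp only [← Finset.sum_add_distrib, ← Finset.sum_sub_distrib]
        exact Finset.sum_congr rfl fun i _ => Finset.sum_congr rfl fun j _ => by ring
      linarith
    have hfin : u ⬝ᵥ ((A ^ l * (A + (u ⬝ᵥ u) • (1 : Matrix ι ι ℝ)) ^ (n + 1)) *ᵥ u)
        = u ⬝ᵥ ((A ^ (l + 1) * (A + (u ⬝ᵥ u) • (1 : Matrix ι ι ℝ)) ^ n) *ᵥ u)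
          + (u ⬝ᵥ u) * ∑ i, e i ^ l * (e i + u ⬝ᵥ u) ^ n * c i ^ 2 := by
      rw [hec, hec, Finset.mul_sum, ← Finset.sum_add_distrib]
      exact Finset.sum_congr rfl fun i _ => by ring
    rw [← hal, ← hn0, ← ha0] at cheb
    rw [hfin, pow_succ'] at *
    linarith

lemma add_pow_le_three_mul {x a μ : ℝ} (hx : 0 ≤ x) (ha : 0 ≤ a) (haμ : a ≤ μ) {k K : ℕ}
    (hk : k ≤ K) : (x + a) ^ k ≤ 3 * x ^ k + ((K + 1) * μ) ^ k := by
  have hμ : 0 ≤ μ := ha.trans haμ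
  rcases Nat.eq_zero_or_pos k with rfl | hkpos
  · norm_num
  have hK : (0 : ℝ) < K := by exact_mod_cast lt_of_lt_of_le hkpos hk
  rcases le_total (K * μ) x with h | h
  · have h1 : x + a ≤ x * (1 + 1 / K) := by
      have : μ ≤ x * (1 / K) := by rw [mul_one_div, le_div_iff₀ hK]; linarith
      linarith
    have h2 : (1 + 1 / (K : ℝ)) ^ k ≤ 3 := by
      calc (1 + 1 / (K : ℝ)) ^ k ≤ (1 + 1 / (K : ℝ)) ^ K :=
            pow_le_pow_right₀ (by linarith [one_div_pos.mpr hK]) hk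
        _ ≤ (Real.exp (1 / K)) ^ K :=
            pow_le_pow_left₀ (by positivity) (by linarith [Real.add_one_le_exp (1 / (K : ℝ))]) K
        _ = Real.exp 1 := by rw [← Real.exp_nat_mul]; congr 1; field_simp
        _ ≤ 3 := by linarith [Real.exp_one_lt_d9]
    calc (x + a) ^ k ≤ (x * (1 + 1 / K)) ^ k := pow_le_pow_left₀ (by linarith) h1 k
      _ = x ^ k * (1 + 1 / (K : ℝ)) ^ k := mul_pow _ _ _
      _ ≤ x ^ k * 3 := mul_le_mul_of_nonneg_left h2 (pow_nonneg hx k)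
      _ ≤ _ := by
          have : 0 ≤ ((K + 1) * μ) ^ k := by positivity
          linarith
  · calc (x + a) ^ k ≤ ((K + 1) * μ) ^ k := pow_le_pow_left₀ (by linarith) (by linarith) k
      _ ≤ _ := by linarith [pow_nonneg hx k]

lemma quad_rankOne_le_three_mul {A : Matrix ι ι ℝ} (hA : A.PosSemidef) (u : ι → ℝ) {μ : ℝ}
    (hu : u ⬝ᵥ u ≤ μ) {k K : ℕ} (hk : k ≤ K) :
    u ⬝ᵥ ((A + vecMulVec u u) ^ k *ᵥ u)
      ≤ 3 * (u ⬝ᵥ (A ^ k *ᵥ u)) + ((K + 1) * μ) ^ k * (u ⬝ᵥ u) := by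
  have h := quad_rankOne_le hA u k 0
  obtain ⟨e, c, he, hec⟩ := exists_spectral_moments hA u
  have ha00 : 0 ≤ u ⬝ᵥ u := by
    exact Finset.sum_nonneg fun i _ => mul_self_nonneg (u i)
  have h0 : u ⬝ᵥ u = ∑ i, c i ^ 2 := by simpa using hec 0 0 0
  have h1 : u ⬝ᵥ (A ^ k *ᵥ u) = ∑ i, e i ^ k * c i ^ 2 := by simpa using hec 0 k 0
  rw [hec, pow_zero, Matrix.one_mul] at h
  refine h.trans ?_
  rw [h1]
  nth_rewrite 2 [h0]
  rw [Finset.mul_sum, Finset.mul_sum, ← Finset.sum_add_distrib]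
  refine Finset.sum_le_sum fun i _ => ?_
  have := mul_le_mul_of_nonneg_right (add_pow_le_three_mul (he i) ha00 hu hk) (sq_nonneg (c i))
  rw [pow_zero, one_mul]
  linarith

/-- The diagonal matrix of the coordinate projection onto a random set. -/
noncomputable def maskM (z : ι → Bool) : Matrix ι ι ℝ := diagonal fun i => if z i then 1 else 0

lemma compress_posSemidef {P : Matrix ι ι ℝ} (hP : Pᵀ = P) (z : ι → Bool) :
    (P * maskM z * P).PosSemidef := by
  have h : (maskM z).PosSemidef :=
    PosSemidef.diagonal fun i => by dsimp only; split_ifs <;> simp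
  have := h.mul_mul_conjTranspose_same P
  rwa [conjTranspose_eq_transpose_of_trivial, hP] at this

lemma compress_update {P : Matrix ι ι ℝ} (hP : Pᵀ = P) (z : ι → Bool) (i : ι) :
    P * maskM (Function.update z i true) * P
      = P * maskM (Function.update z i false) * P + vecMulVec (P.col i) (P.col i) := by
  have h : maskM (Function.update z i true)
      = maskM (Function.update z i false) + Matrix.single i i (1 : ℝ) := by
    ext a b
    by_cases hab : a = b
    · subst hab
      by_cases hai : a = i
      · subst hai; simp [maskM]
      · simp [maskM, hai, Ne.symm hai]
    · have : ¬ (i = a ∧ i = b) := fun h => hab (h.1.symm.trans h.2)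
      simp [maskM, hab, this]
  rw [h, Matrix.mul_add, Matrix.add_mul]
  congr 1
  ext a b
  have hs : P i b = P b i := by conv_lhs => rw [← hP, transpose_apply]
  simp [Matrix.mul_apply, Matrix.single_apply, ite_and, vecMulVec_apply, hs]

lemma trace_compress_succ {P : Matrix ι ι ℝ} (hP : Pᵀ = P) (hPP : P * P = P) (z : ι → Bool)
    (k : ℕ) : ((P * maskM z * P) ^ (k + 1) * P).trace
      = ∑ i, if z i then P.col i ⬝ᵥ ((P * maskM z * P) ^ k *ᵥ P.col i) else 0 := by
  have h1 : (P * maskM z * P) ^ (k + 1) * P = (P * maskM z * P) ^ k * P * maskM z * P := by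
    rw [pow_succ]; simp only [Matrix.mul_assoc, hPP]
  rw [h1, trace_mul_comm, ← Matrix.mul_assoc, ← Matrix.mul_assoc, trace]
  refine Finset.sum_congr rfl fun i _ => ?_
  rw [col_quad hP, diag_apply, maskM, mul_diagonal]
  split_ifs <;> simp

lemma trace_compress {P : Matrix ι ι ℝ} (hP : Pᵀ = P) (hPP : P * P = P) (z : ι → Bool)
    (k : ℕ) : ((P * maskM z * P) ^ k * P).trace
      = ∑ i, P.col i ⬝ᵥ ((P * maskM z * P) ^ k *ᵥ P.col i) := by
  have h : ((P * maskM z * P) ^ k * P).trace = (P * (P * maskM z * P) ^ k * P).trace := by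
    rw [trace_mul_comm (P * _), ← Matrix.mul_assoc, hPP, trace_mul_comm]
  rw [h, trace]
  exact Finset.sum_congr rfl fun i _ => by rw [col_quad hP, diag_apply]

/-- Moment bound for the compression of a projection to a random coordinate set. -/
lemma bernE_trace_le {P : Matrix ι ι ℝ} (hP : Pᵀ = P) (hPP : P * P = P) {μ q γ : ℝ} {K : ℕ}
    (hμ : ∀ i, P i i ≤ μ) (h0 : 0 ≤ q) (h1 : q ≤ 1) (hγ1 : 4 * q ≤ γ) (hμ0 : 0 ≤ μ)
    (hγ2 : (K + 1) * μ ≤ γ) {k : ℕ} (hk : k ≤ K) :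
    bernE q (fun z => ((P * maskM z * P) ^ k * P).trace) ≤ P.trace * γ ^ k := by
  have hγ0 : 0 ≤ γ := by linarith
  have hcc : ∀ i, P.col i ⬝ᵥ P.col i = P i i := by
    intro i
    have := col_quad hP 1 i
    rwa [one_mulVec, Matrix.mul_one, hPP] at this
  have htr0 : 0 ≤ P.trace := by
    refine Finset.sum_nonneg fun i _ => ?_
    rw [diag_apply, ← hcc]
    exact Finset.sum_nonneg fun j _ => mul_self_nonneg _
  induction k with
  | zero => simp [bernE_const]
  | succ k ih =>
    have ih := ih (by omega)
    simp_rw [trace_compress_succ hP hPP]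
    rw [bernE_sum]
    have step : ∀ i, bernE q (fun z =>
        if z i then P.col i ⬝ᵥ ((P * maskM z * P) ^ k *ᵥ P.col i) else 0)
        ≤ q * bernE q (fun z => 3 * (P.col i ⬝ᵥ ((P * maskM z * P) ^ k *ᵥ P.col i))
          + γ ^ k * P i i) := by
      intro i
      have e1 : (fun z : ι → Bool =>
          if z i then P.col i ⬝ᵥ ((P * maskM z * P) ^ k *ᵥ P.col i) else 0)
          = fun z => if z i then P.col i ⬝ᵥ ((P * maskM (Function.update z i true) * P) ^ k
              *ᵥ P.col i) else 0 := by
        funext z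
        by_cases hz : z i = true
        · have : Function.update z i true = z := by rw [← hz, Function.update_eq_self]
          rw [this]
        · simp [hz]
      rw [e1, bernE_coord q i (fun z => P.col i ⬝ᵥ ((P * maskM z * P) ^ k *ᵥ P.col i))]
      refine mul_le_mul_of_nonneg_left (bernE_mono h0 h1 fun z => ?_) h0
      have hpsd := compress_posSemidef hP (Function.update z i false)
      rw [compress_update hP]
      have h2 := quad_rankOne_le_three_mul hpsd (P.col i) ((hcc i).trans_le (hμ i))
        (show k ≤ K by omega)
      have h3 : P.col i ⬝ᵥ ((P * maskM (Function.update z i false) * P) ^ k *ᵥ P.col i)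
          ≤ P.col i ⬝ᵥ ((P * maskM z * P) ^ k *ᵥ P.col i) := by
        by_cases hz : z i = true
        · have hzz : z = Function.update z i true := by rw [← hz, Function.update_eq_self]
          conv_rhs => rw [hzz, compress_update hP]
          simpa using quad_le_quad_rankOne hpsd (P.col i) k 0
        · have hzz : Function.update z i false = z := by
            rw [← Bool.eq_false_of_not_eq_true hz, Function.update_eq_self]
          rw [hzz]
      have hPii : 0 ≤ P i i := by
        rw [← hcc]; exact Finset.sum_nonneg fun j _ => mul_self_nonneg _
      have h4 : ((K + 1) * μ) ^ k ≤ γ ^ k := pow_le_pow_left₀ (by positivity) hγ2 k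
      rw [hcc] at h2
      have h5 := mul_le_mul_of_nonneg_right h4 hPii
      linarith
    refine (Finset.sum_le_sum fun i _ => step i).trans ?_
    rw [← Finset.mul_sum, ← bernE_sum]
    simp only [Finset.sum_add_distrib, ← Finset.mul_sum, ← trace_compress hP hPP]
    rw [bernE_add, bernE_mul_left, bernE_const]
    have hPt : ∑ i, P i i = P.trace := rfl
    rw [hPt]
    calc q * (3 * bernE q (fun z => ((P * maskM z * P) ^ k * P).trace) + γ ^ k * P.trace)
        ≤ q * (3 * (P.trace * γ ^ k) + γ ^ k * P.trace) := by
          refine mul_le_mul_of_nonneg_left ?_ h0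
          linarith
      _ = 4 * q * (P.trace * γ ^ k) := by ring
      _ ≤ γ * (P.trace * γ ^ k) :=
          mul_le_mul_of_nonneg_right hγ1 (mul_nonneg htr0 (pow_nonneg hγ0 k))
      _ = _ := by ring

/-- Tail bound for the norm of a projection restricted to a random coordinate set. -/
lemma bernE_compress_tail {P : Matrix ι ι ℝ} (hP : Pᵀ = P) (hPP : P * P = P) {μ q γ t : ℝ}
    {K : ℕ} (hK : 0 < K) (hμ : ∀ i, P i i ≤ μ) (h0 : 0 ≤ q) (h1 : q ≤ 1) (hγ1 : 4 * q ≤ γ)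
    (hμ0 : 0 ≤ μ) (hγ2 : (K + 1) * μ ≤ γ) (ht : 0 < t) :
    bernE q (fun z => ind (∃ x : ι → ℝ, t * (x ⬝ᵥ x) < x ⬝ᵥ ((P * maskM z * P) *ᵥ x)))
      ≤ P.trace * (γ / t) ^ K := by
  have h2 := bernE_trace_le hP hPP hμ h0 h1 hγ1 hμ0 hγ2 le_rfl
  have h3 : bernE q (fun z => t ^ K *
      ind (∃ x : ι → ℝ, t * (x ⬝ᵥ x) < x ⬝ᵥ ((P * maskM z * P) *ᵥ x)))
      ≤ bernE q (fun z => ((P * maskM z * P) ^ K * P).trace) := by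
    refine bernE_mono h0 h1 fun z => ?_
    have hpsd := compress_posSemidef hP z
    have he : (P * maskM z * P) ^ K * P = (P * maskM z * P) ^ K := by
      obtain ⟨k, rfl⟩ := Nat.exists_eq_succ_of_ne_zero hK.ne'
      rw [Nat.succ_eq_add_one, pow_succ]
      simp only [Matrix.mul_assoc, hPP]
    rw [he]
    by_cases hx : ∃ x : ι → ℝ, t * (x ⬝ᵥ x) < x ⬝ᵥ ((P * maskM z * P) *ᵥ x)
    · rw [ind_of hx, mul_one]
      obtain ⟨x, hx⟩ := hx
      exact trace_pow_ge hpsd ht.le x hx K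
    · rw [ind_of_not hx, mul_zero]
      exact (hpsd.pow K).trace_nonneg
  rw [bernE_mul_left] at h3
  rw [div_pow, ← mul_div_assoc, le_div_iff₀ (by positivity)]
  linarith

end Chernoff

section MomentGenerating

variable {ι : Type*} [Fintype ι] [DecidableEq ι]

/-- The sign `±1` encoded by a Boolean. -/
noncomputable def sgn (b : Bool) : ℝ := if b then 1 else -1

/-- The centred and rescaled selector `1 - b / q`. -/
noncomputable def ctr (q : ℝ) (b : Bool) : ℝ := 1 - if b then q⁻¹ else 0

lemma bernE_exp_sum (q : ℝ) (g : ι → Bool → ℝ) :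
    bernE q (fun z => Real.exp (∑ i, g i (z i)))
      = ∏ i, (q * Real.exp (g i true) + (1 - q) * Real.exp (g i false)) := by
  simp_rw [Real.exp_sum]
  exact bernE_prod q fun i b => Real.exp (g i b)

lemma bernE_exp_sum_le {q : ℝ} (h0 : 0 ≤ q) (h1 : q ≤ 1) (g : ι → Bool → ℝ) (c : ι → ℝ)
    (h : ∀ i, q * Real.exp (g i true) + (1 - q) * Real.exp (g i false) ≤ Real.exp (c i)) :
    bernE q (fun z => Real.exp (∑ i, g i (z i))) ≤ Real.exp (∑ i, c i) := by
  rw [bernE_exp_sum, Real.exp_sum]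
  refine Finset.prod_le_prod (fun i _ => ?_) fun i _ => h i
  have := sub_nonneg.mpr h1
  positivity

lemma mgf_sgn (t : ι → ℝ) :
    bernE (1 / 2) (fun s => Real.exp (∑ i, t i * sgn (s i))) ≤ Real.exp (∑ i, t i ^ 2 / 2) := by
  refine bernE_exp_sum_le (by norm_num) (by norm_num) (fun i b => t i * sgn b) _ fun i => ?_
  have := Real.cosh_le_exp_half_sq (t i)
  rw [Real.cosh_eq] at this
  simp only [sgn]
  norm_num
  linarith

lemma mgf_ctr_coord_small {q t : ℝ} (h0 : 0 < q) (h1 : q ≤ 1) (ht : |t| ≤ q) :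
    q * Real.exp (t * ctr q true) + (1 - q) * Real.exp (t * ctr q false)
      ≤ Real.exp (t ^ 2 / q) := by
  have bound : ∀ x : ℝ, |x| ≤ 1 → Real.exp x ≤ 1 + x + x ^ 2 := fun x hx => by
    have := (abs_le.mp (Real.abs_exp_sub_one_sub_id_le hx)).2
    linarith
  have hx1 : t * ctr q true = t - t / q := by simp [ctr]; ring
  have hx2 : t * ctr q false = t := by simp [ctr]
  rw [hx1, hx2]
  have ht1 : |t / q| ≤ 1 := by rw [abs_div, abs_of_pos h0, div_le_one h0]; exact ht
  have hq : t = q * (t / q) := by field_simp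
  have hb1 : |t - t / q| ≤ 1 := by
    have : t - t / q = -((1 - q) * (t / q)) := by field_simp; ring
    rw [this, abs_neg, abs_mul, abs_of_nonneg (by linarith)]
    nlinarith [abs_nonneg (t / q)]
  have e1 := bound _ hb1
  have e2 := bound t (ht.trans h1)
  have e3 := Real.add_one_le_exp (t ^ 2 / q)
  have h1q : 0 ≤ 1 - q := by linarith
  have e4 : q * (1 + (t - t / q) + (t - t / q) ^ 2) + (1 - q) * (1 + t + t ^ 2)
      = 1 + t ^ 2 / q - t ^ 2 := by field_simp; ring
  nlinarith [mul_le_mul_of_nonneg_left e1 h0.le, mul_le_mul_of_nonneg_left e2 h1q, sq_nonneg t]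

lemma mgf_ctr_coord {q t : ℝ} (h0 : 0 < q) (h1 : q ≤ 1) :
    q * Real.exp (t * ctr q true) + (1 - q) * Real.exp (t * ctr q false)
      ≤ Real.exp (t ^ 2 / q ^ 2) := by
  have h1q : 0 ≤ 1 - q := by linarith
  rcases le_or_gt |t| q with h | h
  · refine (mgf_ctr_coord_small h0 h1 h).trans (Real.exp_le_exp.mpr ?_)
    exact div_le_div_of_nonneg_left (sq_nonneg t) (by positivity) (by nlinarith)
  · have hq1 : 1 ≤ q⁻¹ := (one_le_inv₀ h0).mpr h1
    have ha : 1 < |t| / q := by rwa [lt_div_iff₀ h0, one_mul]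
    have hsq : t ^ 2 / q ^ 2 = (|t| / q) ^ 2 := by rw [div_pow, sq_abs]
    have key : ∀ b, t * ctr q b ≤ t ^ 2 / q ^ 2 := by
      intro b
      have hc : |ctr q b| ≤ q⁻¹ := by
        cases b
        · simp only [ctr]; simpa using hq1
        · simp only [ctr, if_true]; rw [abs_le]; constructor <;> linarith
      calc t * ctr q b ≤ |t| * |ctr q b| := by rw [← abs_mul]; exact le_abs_self _
        _ ≤ |t| * q⁻¹ := mul_le_mul_of_nonneg_left hc (abs_nonneg _)
        _ = |t| / q := rfl
        _ ≤ _ := by rw [hsq]; nlinarith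
    have e1 := mul_le_mul_of_nonneg_left (Real.exp_le_exp.mpr (key true)) h0.le
    have e2 := mul_le_mul_of_nonneg_left (Real.exp_le_exp.mpr (key false)) h1q
    linarith

lemma mgf_ctr_small {q : ℝ} (h0 : 0 < q) (h1 : q ≤ 1) (t : ι → ℝ) (ht : ∀ i, |t i| ≤ q) :
    bernE q (fun z => Real.exp (∑ i, t i * ctr q (z i))) ≤ Real.exp (∑ i, t i ^ 2 / q) :=
  bernE_exp_sum_le h0.le h1 (fun i b => t i * ctr q b) _ fun i => mgf_ctr_coord_small h0 h1 (ht i)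

lemma mgf_ctr {q : ℝ} (h0 : 0 < q) (h1 : q ≤ 1) (t : ι → ℝ) :
    bernE q (fun z => Real.exp (∑ i, t i * ctr q (z i))) ≤ Real.exp (∑ i, t i ^ 2 / q ^ 2) :=
  bernE_exp_sum_le h0.le h1 (fun i b => t i * ctr q b) _ fun _ => mgf_ctr_coord h0 h1

lemma mgf_sparse_sgn_coord {ρ κ t : ℝ} (h0 : 0 ≤ ρ) (h1 : ρ ≤ 1) (hκ : 0 < κ)
    (hρκ : ρ * Real.exp (1 / κ) ≤ 2 * κ) :
    ρ * Real.cosh t + (1 - ρ) ≤ Real.exp (κ * t ^ 2) := by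
  have hcosh : Real.cosh t ≤ Real.exp |t| := by
    rw [← Real.cosh_abs, Real.cosh_eq]
    have : Real.exp (-|t|) ≤ Real.exp |t| := Real.exp_le_exp.mpr (by linarith [abs_nonneg t])
    linarith
  rcases le_or_gt |t| (1 / κ) with h | h
  · have hc : Real.cosh t - 1 ≤ t ^ 2 / 2 * Real.exp (1 / κ) := by
      have e1 : Real.exp |t| * Real.exp (-|t|) = 1 := by rw [← Real.exp_add]; simp
      have e2 : Real.cosh t - 1 = Real.exp |t| * (1 - Real.exp (-|t|)) ^ 2 / 2 := by
        rw [← Real.cosh_abs, Real.cosh_eq]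
        linear_combination (1 - Real.exp (-|t|) / 2) * e1
      have e3 : 0 ≤ 1 - Real.exp (-|t|) := by
        have : Real.exp (-|t|) ≤ 1 := Real.exp_le_one_iff.mpr (by linarith [abs_nonneg t])
        linarith
      have e4 : 1 - Real.exp (-|t|) ≤ |t| := by linarith [Real.add_one_le_exp (-|t|)]
      have e5 : (1 - Real.exp (-|t|)) ^ 2 ≤ t ^ 2 := by
        rw [← sq_abs t]; exact pow_le_pow_left₀ e3 e4 2
      have e6 : Real.exp |t| ≤ Real.exp (1 / κ) := Real.exp_le_exp.mpr h
      rw [e2]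
      have := mul_le_mul e6 e5 (sq_nonneg _) (Real.exp_pos _).le
      linarith
    have h2 := mul_le_mul_of_nonneg_left hc h0
    have h3 := mul_le_mul_of_nonneg_right hρκ (sq_nonneg t)
    linarith [Real.add_one_le_exp (κ * t ^ 2)]
  · have h2 : Real.exp |t| ≤ Real.exp (κ * t ^ 2) := by
      refine Real.exp_le_exp.mpr ?_
      have h3 : 1 < κ * |t| := by rwa [div_lt_iff₀' hκ] at h
      rw [← sq_abs t]
      nlinarith [abs_nonneg t]
    have h4 : ρ * Real.cosh t ≤ ρ * Real.exp (κ * t ^ 2) :=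
      mul_le_mul_of_nonneg_left (hcosh.trans h2) h0
    have h5 : 1 ≤ Real.exp (κ * t ^ 2) := Real.one_le_exp (by positivity)
    nlinarith

/-- The sparse random sign vector with support `z` and signs `s`. -/
noncomputable def sparseSgn (z s : ι → Bool) (i : ι) : ℝ := if z i then sgn (s i) else 0

lemma mgf_sparseSgn {ρ κ : ℝ} (h0 : 0 ≤ ρ) (h1 : ρ ≤ 1) (hκ : 0 < κ)
    (hρκ : ρ * Real.exp (1 / κ) ≤ 2 * κ) (t : ι → ℝ) :
    bernE ρ (fun z => bernE (1 / 2) (fun s => Real.exp (∑ i, t i * sparseSgn z s i)))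
      ≤ Real.exp (∑ i, κ * t i ^ 2) := by
  have e1 : ∀ z : ι → Bool, bernE (1 / 2) (fun s => Real.exp (∑ i, t i * sparseSgn z s i))
      = ∏ i, (if z i then Real.cosh (t i) else 1) := by
    intro z
    simp only [sparseSgn]
    rw [bernE_exp_sum (1 / 2) fun i b => t i * (if z i then sgn b else 0)]
    refine Finset.prod_congr rfl fun i _ => ?_
    split_ifs
    · simp only [sgn, Real.cosh_eq]; norm_num; ring
    · norm_num
  simp_rw [e1]
  rw [bernE_prod ρ fun i b => if b then Real.cosh (t i) else 1, Real.exp_sum]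
  refine Finset.prod_le_prod (fun i _ => ?_) fun i _ => ?_
  · have := sub_nonneg.mpr h1
    have := (Real.cosh_pos (t i)).le
    simp
    positivity
  · simpa using mgf_sparse_sgn_coord (t := t i) h0 h1 hκ hρκ

end MomentGenerating

section Net

lemma sum_half_pow_natAbs (M : ℕ) :
    ∑ k ∈ Finset.Icc (-(M : ℤ)) M, (1 / 2 : ℝ) ^ k.natAbs ≤ 3 - 2 * (1 / 2) ^ M := by
  induction M with
  | zero => norm_num
  | succ M ih =>
    have h : Finset.Icc (-((M + 1 : ℕ) : ℤ)) ((M + 1 : ℕ) : ℤ)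
        = insert (-((M : ℤ) + 1)) (insert ((M : ℤ) + 1) (Finset.Icc (-(M : ℤ)) M)) := by
      ext k; simp only [Finset.mem_Icc, Finset.mem_insert]; push_cast; omega
    have h1 : ((M : ℤ) + 1).natAbs = M + 1 := by omega
    have h2 : (-((M : ℤ) + 1)).natAbs = M + 1 := by omega
    rw [h, Finset.sum_insert, Finset.sum_insert, h1, h2, pow_succ]
    · linarith
    · simp
    · simp only [Finset.mem_insert, Finset.mem_Icc]; omega

lemma card_lattice_ball_le (n R : ℕ) :
    (((Fintype.piFinset fun _ : Fin n => Finset.Icc (-(R : ℤ)) R).filter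
      fun v => ∑ i, (v i).natAbs ≤ R).card : ℝ) ≤ 2 ^ R * 3 ^ n := by
  have h1 : ∑ v ∈ Fintype.piFinset fun _ : Fin n => Finset.Icc (-(R : ℤ)) R,
      ∏ i, (1 / 2 : ℝ) ^ (v i).natAbs ≤ 3 ^ n := by
    have hprod := Finset.prod_univ_sum (fun _ : Fin n => Finset.Icc (-(R : ℤ)) R)
      (fun _ k => (1 / 2 : ℝ) ^ k.natAbs)
    rw [← hprod]
    calc _ ≤ ∏ _i : Fin n, (3 : ℝ) := by
          refine Finset.prod_le_prod (fun i _ => Finset.sum_nonneg fun _ _ => by positivity)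
            fun i _ => (sum_half_pow_natAbs R).trans ?_
          have : (0 : ℝ) < (1 / 2) ^ R := by positivity
          linarith
      _ = 3 ^ n := by simp
  have h2 : (((Fintype.piFinset fun _ : Fin n => Finset.Icc (-(R : ℤ)) R).filter
      fun v => ∑ i, (v i).natAbs ≤ R).card : ℝ) * (1 / 2) ^ R
      ≤ ∑ v ∈ Fintype.piFinset fun _ : Fin n => Finset.Icc (-(R : ℤ)) R,
        ∏ i, (1 / 2 : ℝ) ^ (v i).natAbs := by
    rw [← nsmul_eq_mul, ← Finset.sum_const]
    refine (Finset.sum_le_sum fun v hv => ?_).trans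
      (Finset.sum_le_sum_of_subset_of_nonneg (Finset.filter_subset _ _)
        fun v _ _ => Finset.prod_nonneg fun _ _ => by positivity)
    rw [Finset.prod_pow_eq_pow_sum]
    exact pow_le_pow_of_le_one (by norm_num) (by norm_num) (Finset.mem_filter.mp hv).2
  have h3 := h2.trans h1
  rw [one_div, inv_pow, ← div_eq_mul_inv, div_le_iff₀ (by positivity)] at h3
  linarith

/-- A `1/4`-net of the Euclidean unit ball contained in the ball. -/
lemma exists_ball_net (n : ℕ) :
    ∃ N : Finset (Fin n → ℝ), (N.card : ℝ) ≤ Real.exp (18 * n) ∧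
      (∀ x ∈ N, ∑ i, x i ^ 2 ≤ 1) ∧
      ∀ x : Fin n → ℝ, ∑ i, x i ^ 2 ≤ 1 → ∃ y ∈ N, ∑ i, (x i - y i) ^ 2 ≤ 1 / 16 := by
  classical
  rcases Nat.eq_zero_or_pos n with rfl | hn
  · exact ⟨{0}, by simp, by simp, fun x _ => ⟨0, by simp, by simp⟩⟩
  have hn' : (0 : ℝ) < n := by exact_mod_cast hn
  set h : ℝ := 1 / (4 * Real.sqrt n) with hh
  have hpos : 0 < h := by have := Real.sqrt_pos.mpr hn'; positivity
  have hsq : h ^ 2 = 1 / (16 * n) := by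
    rw [hh, div_pow, mul_pow, Real.sq_sqrt hn'.le]; norm_num
  let F : (Fin n → ℤ) → (Fin n → ℝ) := fun v i => h * v i
  let B := (Fintype.piFinset fun _ : Fin n => Finset.Icc (-((16 * n : ℕ) : ℤ)) (16 * n : ℕ)).filter
      fun v => ∑ i, (v i).natAbs ≤ 16 * n
  refine ⟨(B.image F).filter fun x => ∑ i, x i ^ 2 ≤ 1, ?_, ?_, ?_⟩
  · have h1 : (((B.image F).filter fun x => ∑ i, x i ^ 2 ≤ 1).card : ℝ) ≤ B.card := by
      exact_mod_cast (Finset.card_filter_le _ _).trans Finset.card_image_le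
    refine h1.trans ((card_lattice_ball_le n (16 * n)).trans ?_)
    have e2 : (2 : ℝ) ≤ Real.exp 1 := by linarith [Real.exp_one_gt_d9]
    have e3 : (3 : ℝ) ≤ Real.exp 2 := by linarith [Real.add_one_le_exp (2 : ℝ)]
    calc (2 : ℝ) ^ (16 * n) * 3 ^ n ≤ (Real.exp 1) ^ (16 * n) * (Real.exp 2) ^ n := by gcongr
      _ = Real.exp (18 * n) := by
        rw [← Real.exp_nat_mul, ← Real.exp_nat_mul, ← Real.exp_add]
        congr 1; push_cast; ring
  · intro x hx; exact (Finset.mem_filter.mp hx).2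
  · intro x hx
    let v : Fin n → ℤ := fun i =>
      if 0 ≤ x i then (⌊|x i| / h⌋₊ : ℤ) else -(⌊|x i| / h⌋₊ : ℤ)
    have hvabs : ∀ i, (v i).natAbs = ⌊|x i| / h⌋₊ := by
      intro i; simp only [v]; split_ifs <;> simp
    have hfl : ∀ i, (⌊|x i| / h⌋₊ : ℝ) * h ≤ |x i| := fun i => by
      rw [← le_div_iff₀ hpos]; exact Nat.floor_le (by positivity)
    have hfl2 : ∀ i, |x i| ≤ ((⌊|x i| / h⌋₊ : ℝ) + 1) * h := fun i => by
      rw [← div_le_iff₀ hpos]; exact (Nat.lt_floor_add_one _).le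
    have hsmall : ∀ i, (h * v i) ^ 2 ≤ x i ^ 2 := by
      intro i
      have : (h * v i) ^ 2 = ((⌊|x i| / h⌋₊ : ℝ) * h) ^ 2 := by
        simp only [v]; split_ifs <;> push_cast <;> ring
      rw [this, ← sq_abs (x i)]
      exact pow_le_pow_left₀ (by positivity) (hfl i) 2
    have hdiff : ∀ i, (x i - h * v i) ^ 2 ≤ h ^ 2 := by
      intro i
      have e1 := hfl i
      have e2 := hfl2 i
      rw [sq_le_sq, abs_of_pos hpos, abs_le]
      by_cases hx0 : 0 ≤ x i
      · rw [abs_of_nonneg hx0] at e1 e2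
        simp only [v, if_pos hx0, abs_of_nonneg hx0]
        push_cast
        constructor <;> nlinarith
      · have hx1 : x i < 0 := not_le.mp hx0
        rw [abs_of_neg hx1] at e1 e2
        simp only [v, if_neg hx0, abs_of_neg hx1]
        push_cast
        constructor <;> nlinarith
    have hnorm : ∑ i, (F v i) ^ 2 ≤ 1 := (Finset.sum_le_sum fun i _ => hsmall i).trans hx
    have hsum : ∑ i, (v i).natAbs ≤ 16 * n := by
      have e1 : ∑ i, ((v i).natAbs : ℝ) ≤ ∑ i, (v i : ℝ) ^ 2 := by
        refine Finset.sum_le_sum fun i _ => ?_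
        have : (v i).natAbs ≤ (v i).natAbs ^ 2 := Nat.le_self_pow two_ne_zero _
        calc ((v i).natAbs : ℝ) ≤ (((v i).natAbs ^ 2 : ℕ) : ℝ) := by exact_mod_cast this
          _ = _ := by
            rw [Nat.cast_pow, Nat.cast_natAbs, Int.cast_abs, sq_abs]
      have e2 : h ^ 2 * ∑ i, (v i : ℝ) ^ 2 ≤ 1 := by
        rw [Finset.mul_sum]
        refine le_trans (le_of_eq ?_) hnorm
        exact Finset.sum_congr rfl fun i _ => by simp only [F]; ring
      rw [hsq, one_div, inv_mul_le_iff₀ (by positivity), mul_one] at e2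
      have e3 := e1.trans e2
      exact_mod_cast e3
    refine ⟨F v, Finset.mem_filter.mpr ⟨Finset.mem_image_of_mem _ (Finset.mem_filter.mpr
      ⟨Fintype.mem_piFinset.mpr fun i => ?_, hsum⟩), hnorm⟩, ?_⟩
    · have : (v i).natAbs ≤ 16 * n :=
        (Finset.single_le_sum (f := fun i => (v i).natAbs) (fun _ _ => Nat.zero_le _)
          (Finset.mem_univ i)).trans hsum
      rw [Finset.mem_Icc]; omega
    · calc ∑ i, (x i - F v i) ^ 2 ≤ ∑ _i : Fin n, h ^ 2 := Finset.sum_le_sum fun i _ => hdiff i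
        _ = 1 / 16 := by
          rw [Finset.sum_const, Finset.card_univ, Fintype.card_fin, nsmul_eq_mul, hsq]
          field_simp

variable {n1 n2 : ℕ}

/-- The bilinear form of a matrix, written as a function on index pairs. -/
noncomputable def bil (X : Fin n1 × Fin n2 → ℝ) (x : Fin n1 → ℝ) (y : Fin n2 → ℝ) : ℝ :=
  ∑ p, x p.1 * y p.2 * X p

/-- The spectral norm of `X` is at most `c`. -/
def SpecLE (X : Fin n1 × Fin n2 → ℝ) (c : ℝ) : Prop :=
  ∀ x y, ∑ i, x i ^ 2 ≤ 1 → ∑ j, y j ^ 2 ≤ 1 → bil X x y ≤ c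

lemma bil_le_sum_abs (X : Fin n1 × Fin n2 → ℝ) (x : Fin n1 → ℝ) (y : Fin n2 → ℝ)
    (hx : ∑ i, x i ^ 2 ≤ 1) (hy : ∑ j, y j ^ 2 ≤ 1) : bil X x y ≤ ∑ p, |X p| := by
  refine Finset.sum_le_sum fun p _ => ?_
  have h1 : |x p.1| ≤ 1 := by
    have := (Finset.single_le_sum (f := fun i => x i ^ 2) (fun i _ => sq_nonneg _)
      (Finset.mem_univ p.1)).trans hx
    exact abs_le_one_iff_mul_self_le_one.mpr (by simpa [sq] using this)
  have h2 : |y p.2| ≤ 1 := by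
    have := (Finset.single_le_sum (f := fun i => y i ^ 2) (fun i _ => sq_nonneg _)
      (Finset.mem_univ p.2)).trans hy
    exact abs_le_one_iff_mul_self_le_one.mpr (by simpa [sq] using this)
  calc x p.1 * y p.2 * X p ≤ |x p.1 * y p.2 * X p| := le_abs_self _
    _ = |x p.1| * |y p.2| * |X p| := by rw [abs_mul, abs_mul]
    _ ≤ 1 * 1 * |X p| := by gcongr
    _ = _ := by ring

lemma exists_spec_net (n1 n2 : ℕ) :
    ∃ N : Finset ((Fin n1 → ℝ) × (Fin n2 → ℝ)), (N.card : ℝ) ≤ Real.exp (18 * (n1 + n2)) ∧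
      (∀ w ∈ N, ∑ i, w.1 i ^ 2 ≤ 1 ∧ ∑ j, w.2 j ^ 2 ≤ 1) ∧
      ∀ (X : Fin n1 × Fin n2 → ℝ) (s : ℝ), (∀ w ∈ N, bil X w.1 w.2 ≤ s) → SpecLE X (2 * s) := by
  obtain ⟨N1, hc1, hb1, hn1⟩ := exists_ball_net n1
  obtain ⟨N2, hc2, hb2, hn2⟩ := exists_ball_net n2
  refine ⟨N1 ×ˢ N2, ?_, ?_, ?_⟩
  · rw [Finset.card_product, Nat.cast_mul, mul_add, Real.exp_add]
    exact mul_le_mul hc1 hc2 (Nat.cast_nonneg _) (Real.exp_pos _).le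
  · intro w hw
    rw [Finset.mem_product] at hw
    exact ⟨hb1 _ hw.1, hb2 _ hw.2⟩
  · intro X s hs
    let C : Set ℝ := {c | ∃ x y, ∑ i, x i ^ 2 ≤ 1 ∧ ∑ j, y j ^ 2 ≤ 1 ∧ c = bil X x y}
    have hbdd : BddAbove C := ⟨∑ p, |X p|, by
      rintro c ⟨x, y, hx, hy, rfl⟩; exact bil_le_sum_abs X x y hx hy⟩
    have hne : C.Nonempty := ⟨bil X 0 0, 0, 0, by simp, by simp, rfl⟩
    have hle : ∀ x y, ∑ i, x i ^ 2 ≤ 1 → ∑ j, y j ^ 2 ≤ 1 → bil X x y ≤ sSup C :=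
      fun x y hx hy => le_csSup hbdd ⟨x, y, hx, hy, rfl⟩
    have hM : sSup C ≤ s + sSup C / 2 := by
      refine csSup_le hne ?_
      rintro c ⟨x, y, hx, hy, rfl⟩
      obtain ⟨x', hx', hdx⟩ := hn1 x hx
      obtain ⟨y', hy', hdy⟩ := hn2 y hy
      have h1 := hs (x', y') (Finset.mk_mem_product hx' hy')
      have h2 := hle (fun i => 4 * (x i - x' i)) y'
        (by simp only [mul_pow, ← Finset.mul_sum]; linarith) (hb2 _ hy')
      have h3 := hle x (fun i => 4 * (y i - y' i)) hx
        (by simp only [mul_pow, ← Finset.mul_sum]; linarith)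
      have h4 : bil X x y = bil X x' y' + (bil X (fun i => 4 * (x i - x' i)) y') / 4
          + (bil X x (fun i => 4 * (y i - y' i))) / 4 := by
        simp only [bil, Finset.sum_div, ← Finset.sum_add_distrib]
        exact Finset.sum_congr rfl fun p _ => by ring
      simp only at h1
      linarith
    intro x y hx hy
    linarith [hle x y hx hy]

lemma sum_bil_sq_le (x : Fin n1 → ℝ) (y : Fin n2 → ℝ)
    (hx : ∑ i, x i ^ 2 ≤ 1) (hy : ∑ j, y j ^ 2 ≤ 1) :
    ∑ p : Fin n1 × Fin n2, (x p.1 * y p.2) ^ 2 ≤ 1 := by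
  have : ∑ p : Fin n1 × Fin n2, (x p.1 * y p.2) ^ 2 = (∑ i, x i ^ 2) * ∑ j, y j ^ 2 := by
    rw [Fintype.sum_prod_type, Finset.sum_mul_sum]
    exact Finset.sum_congr rfl fun i _ => Finset.sum_congr rfl fun j _ => by ring
  rw [this]
  exact mul_le_one₀ hx (Finset.sum_nonneg fun _ _ => sq_nonneg _) hy

/-- Spectral-norm tail bound for random matrices with sub-Gaussian bilinear forms. -/
lemma spec_tail {Ω : Type*} [Fintype Ω] (w : Ω → ℝ) (hw : ∀ ω, 0 ≤ w ω)
    (X : Ω → Fin n1 × Fin n2 → ℝ) {κ s : ℝ} (hκ : 0 < κ) (hs : 0 ≤ s)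
    (hmgf : ∀ x y, ∑ i, x i ^ 2 ≤ 1 → ∑ j, y j ^ 2 ≤ 1 → ∀ θ : ℝ,
      ∑ ω, w ω * Real.exp (θ * bil (X ω) x y) ≤ Real.exp (κ * θ ^ 2)) :
    ∑ ω, w ω * ind (¬SpecLE (X ω) (2 * s)) ≤ Real.exp (18 * (n1 + n2) - s ^ 2 / (4 * κ)) := by
  obtain ⟨N, hcard, hball, hnet⟩ := exists_spec_net n1 n2
  set θ : ℝ := s / (2 * κ) with hθ
  have hθ0 : 0 ≤ θ := by positivity
  have hpt : ∀ ω, ind (¬SpecLE (X ω) (2 * s))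
      ≤ ∑ v ∈ N, Real.exp (-(θ * s)) * Real.exp (θ * bil (X ω) v.1 v.2) := by
    intro ω
    refine (ind_mono (p' := ∃ v ∈ N, s < bil (X ω) v.1 v.2) fun h => ?_).trans
      ((ind_exists_le N _).trans (Finset.sum_le_sum fun v _ => ?_))
    · by_contra! hcon
      exact h (hnet _ _ hcon)
    · by_cases h : s < bil (X ω) v.1 v.2
      · rw [ind_of h, ← Real.exp_add]
        exact Real.one_le_exp (by nlinarith)
      · rw [ind_of_not h]; positivity
  calc ∑ ω, w ω * ind (¬SpecLE (X ω) (2 * s))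
      ≤ ∑ ω, w ω * ∑ v ∈ N, Real.exp (-(θ * s)) * Real.exp (θ * bil (X ω) v.1 v.2) :=
        Finset.sum_le_sum fun ω _ => mul_le_mul_of_nonneg_left (hpt ω) (hw ω)
    _ = ∑ v ∈ N, Real.exp (-(θ * s)) * ∑ ω, w ω * Real.exp (θ * bil (X ω) v.1 v.2) := by
        simp only [Finset.mul_sum]
        rw [Finset.sum_comm]
        exact Finset.sum_congr rfl fun v _ => Finset.sum_congr rfl fun ω _ => by ring
    _ ≤ ∑ _v ∈ N, Real.exp (-(θ * s)) * Real.exp (κ * θ ^ 2) :=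
        Finset.sum_le_sum fun v hv => mul_le_mul_of_nonneg_left
          (hmgf _ _ (hball v hv).1 (hball v hv).2 θ) (Real.exp_pos _).le
    _ = N.card * Real.exp (-(s ^ 2 / (4 * κ))) := by
        rw [Finset.sum_const, nsmul_eq_mul, ← Real.exp_add]
        congr 2
        rw [hθ]; field_simp; ring
    _ ≤ Real.exp (18 * (n1 + n2)) * Real.exp (-(s ^ 2 / (4 * κ))) :=
        mul_le_mul_of_nonneg_right hcard (Real.exp_pos _).le
    _ = _ := by rw [← Real.exp_add]; congr 1

end Net

section ProjectionEntries

variable {ι : Type*} [Fintype ι] {P : Matrix ι ι ℝ}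

lemma sum_sq_row (hP : Pᵀ = P) (hPP : P * P = P) (p : ι) : ∑ i, P p i ^ 2 = P p p := by
  conv_rhs => rw [← hPP, Matrix.mul_apply]
  refine Finset.sum_congr rfl fun i _ => ?_
  have : P i p = P p i := by conv_lhs => rw [← hP, Matrix.transpose_apply]
  rw [this, sq]

lemma diag_nonneg_of_proj (hP : Pᵀ = P) (hPP : P * P = P) (p : ι) : 0 ≤ P p p := by
  rw [← sum_sq_row hP hPP]; exact Finset.sum_nonneg fun _ _ => sq_nonneg _

lemma abs_entry_le (hP : Pᵀ = P) (hPP : P * P = P) {μ : ℝ} (hμ : ∀ i, P i i ≤ μ) (p i : ι) :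
    |P p i| ≤ μ := by
  have hμ0 : 0 ≤ μ := (diag_nonneg_of_proj hP hPP p).trans (hμ p)
  have h1 : P p i = ∑ k, P p k * P i k := by
    conv_lhs => rw [← hPP, Matrix.mul_apply]
    refine Finset.sum_congr rfl fun k _ => ?_
    have : P k i = P i k := by conv_lhs => rw [← hP, Matrix.transpose_apply]
    rw [this]
  refine abs_le_of_sq_le_sq ?_ hμ0
  rw [h1]
  refine (Finset.sum_mul_sq_le_sq_mul_sq _ _ _).trans ?_
  rw [sum_sq_row hP hPP, sum_sq_row hP hPP, sq]
  exact mul_le_mul (hμ p) (hμ i) (diag_nonneg_of_proj hP hPP i) hμ0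

end ProjectionEntries

section Chernoff

variable {ι : Type*} [Fintype ι] [DecidableEq ι]

lemma ind_lt_le_exp {a x θ : ℝ} (hθ : 0 ≤ θ) :
    ind (a < x) ≤ Real.exp (-(θ * a)) * Real.exp (θ * x) := by
  by_cases h : a < x
  · rw [ind_of h, ← Real.exp_add]
    exact Real.one_le_exp (by nlinarith)
  · rw [ind_of_not h]; positivity

lemma bernE_chernoff {q : ℝ} (h0 : 0 ≤ q) (h1 : q ≤ 1) (f : (ι → Bool) → ℝ) {a θ c : ℝ}
    (hθ : 0 ≤ θ) (h : bernE q (fun z => Real.exp (θ * f z)) ≤ Real.exp c) :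
    bernE q (fun z => ind (a < f z)) ≤ Real.exp (c - θ * a) := by
  refine (bernE_mono h0 h1 fun z => ind_lt_le_exp hθ).trans ?_
  rw [bernE_mul_left, sub_eq_add_neg, Real.exp_add, mul_comm]
  exact mul_le_mul_of_nonneg_right h (Real.exp_pos _).le

lemma ind_abs_le (a x : ℝ) : ind (a < |x|) ≤ ind (a < x) + ind (a < -x) :=
  (ind_mono fun h => lt_abs.mp h).trans (ind_or_le _ _)

lemma bernE_not (q : ℝ) (f : (ι → Bool) → ℝ) :
    bernE (1 - q) f = bernE q (fun b => f fun i => !b i) := by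
  unfold bernE
  refine Fintype.sum_equiv (Equiv.piCongrRight fun _ => Equiv.boolNot) _ _ fun z => ?_
  have h1 : (fun i => !(Equiv.piCongrRight (fun _ : ι => Equiv.boolNot)) z i) = z := by
    funext i; simp
  simp only [h1]
  congr 1
  refine Finset.prod_congr rfl fun i _ => ?_
  cases h : z i <;> simp [h]

end Chernoff

section Golfing

variable {n1 n2 : ℕ} {P : Matrix (Fin n1 × Fin n2) (Fin n1 × Fin n2) ℝ}

/-- The residual of one golfing batch before projection. -/
noncomputable def ctrVec (q : ℝ) (b : Fin n1 × Fin n2 → Bool) (Z : Fin n1 × Fin n2 → ℝ) :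
    Fin n1 × Fin n2 → ℝ := fun i => ctr q (b i) * Z i

lemma SpecLE.neg {X : Fin n1 × Fin n2 → ℝ} {c : ℝ} (h : SpecLE X c) : SpecLE (-X) c := by
  intro x y hx hy
  have := h (-x) y (by simpa using hx) hy
  refine le_trans (le_of_eq ?_) this
  simp [bil]

lemma SpecLE.add {X Y : Fin n1 × Fin n2 → ℝ} {c d : ℝ} (h : SpecLE X c) (h' : SpecLE Y d) :
    SpecLE (X + Y) (c + d) := by
  intro x y hx hy
  refine le_trans (le_of_eq ?_) (add_le_add (h x y hx hy) (h' x y hx hy))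
  simp [bil, mul_add, Finset.sum_add_distrib]

lemma SpecLE.mono {X : Fin n1 × Fin n2 → ℝ} {c d : ℝ} (h : SpecLE X c) (hcd : c ≤ d) :
    SpecLE X d := fun x y hx hy => (h x y hx hy).trans hcd

lemma SpecLE.smul {X : Fin n1 × Fin n2 → ℝ} {c a : ℝ} (h : SpecLE X c) (ha : 0 ≤ a) :
    SpecLE (a • X) (a * c) := by
  intro x y hx hy
  refine le_trans (le_of_eq ?_) (mul_le_mul_of_nonneg_left (h x y hx hy) ha)
  simp only [bil, Finset.mul_sum, Pi.smul_apply, smul_eq_mul]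
  exact Finset.sum_congr rfl fun _ _ => by ring

lemma specLE_zero {c : ℝ} (hc : 0 ≤ c) : SpecLE (0 : Fin n1 × Fin n2 → ℝ) c := by
  intro x y _ _; simpa [bil] using hc

lemma ctrVec_entry_tail (hP : Pᵀ = P) (hPP : P * P = P) {μ : ℝ} (hμ0 : 0 < μ)
    (hμ : ∀ i, P i i ≤ μ) {q ε M : ℝ} (h0 : 0 < q) (h1 : q ≤ 1) (hε : 0 < ε) (hε1 : ε ≤ 1)
    (hM : 0 < M) {Z : Fin n1 × Fin n2 → ℝ} (hZ : ∀ i, |Z i| ≤ M) (p : Fin n1 × Fin n2) :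
    bernE q (fun b => ind (ε * M < |(P *ᵥ ctrVec q b Z) p|))
      ≤ 2 * Real.exp (-(q * ε ^ 2 / (4 * μ))) := by
  set θ : ℝ := q * ε / (2 * μ * M) with hθ
  have hθ0 : 0 ≤ θ := by positivity
  have hZsq : ∀ i, Z i ^ 2 ≤ M ^ 2 := fun i => sq_le_sq.mpr ((hZ i).trans (le_abs_self M))
  have hsum : ∑ i, (P p i * Z i) ^ 2 ≤ μ * M ^ 2 := by
    calc ∑ i, (P p i * Z i) ^ 2 ≤ ∑ i, P p i ^ 2 * M ^ 2 := Finset.sum_le_sum fun i _ => by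
          rw [mul_pow]; exact mul_le_mul_of_nonneg_left (hZsq i) (sq_nonneg _)
      _ = P p p * M ^ 2 := by rw [← Finset.sum_mul, sum_sq_row hP hPP]
      _ ≤ _ := mul_le_mul_of_nonneg_right (hμ p) (sq_nonneg _)
  have key : ∀ σ : ℝ, σ ^ 2 = 1 →
      bernE q (fun b => ind (ε * M < σ * (P *ᵥ ctrVec q b Z) p))
        ≤ Real.exp (-(q * ε ^ 2 / (4 * μ))) := by
    intro σ hσ
    have hσ' : |σ| = 1 := by
      rcases (mul_self_eq_one_iff (a := σ)).mp ((sq σ).symm.trans hσ) with h | h <;> simp [h]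
    have hm := mgf_ctr_small (ι := Fin n1 × Fin n2) h0 h1 (fun i => θ * (σ * (P p i * Z i))) (by
      intro i
      rw [abs_mul, abs_mul, abs_mul, hσ', one_mul, abs_of_nonneg hθ0]
      calc θ * (|P p i| * |Z i|) ≤ θ * (μ * M) := by
            refine mul_le_mul_of_nonneg_left ?_ hθ0
            exact mul_le_mul (abs_entry_le hP hPP hμ p i) (hZ i) (abs_nonneg _) hμ0.le
        _ = q * (ε / 2) := by rw [hθ]; field_simp
        _ ≤ q := by nlinarith)
    have hb := bernE_chernoff (a := ε * M) h0.le h1 (fun b => σ * (P *ᵥ ctrVec q b Z) p) hθ0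
      (c := θ ^ 2 * (μ * M ^ 2) / q) (by
        refine le_trans (le_of_eq ?_) (hm.trans (Real.exp_le_exp.mpr ?_))
        · congr 1; funext b; congr 1
          simp only [Matrix.mulVec, dotProduct, ctrVec, Finset.mul_sum]
          exact Finset.sum_congr rfl fun i _ => by ring
        · rw [← Finset.sum_div]
          refine div_le_div_of_nonneg_right ?_ h0.le
          refine le_trans (le_of_eq ?_) (mul_le_mul_of_nonneg_left hsum (sq_nonneg θ))
          rw [Finset.mul_sum]
          refine Finset.sum_congr rfl fun i _ => ?_
          linear_combination (θ ^ 2 * (P p i * Z i) ^ 2) * hσ)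
    refine hb.trans (Real.exp_le_exp.mpr (le_of_eq ?_))
    rw [hθ]; field_simp; ring
  refine (bernE_mono h0.le h1 fun b => ind_abs_le _ _).trans ?_
  rw [bernE_add]
  have k1 := key 1 (by norm_num)
  have k2 := key (-1) (by norm_num)
  simp only [one_mul, neg_one_mul] at k1 k2
  linarith

lemma ctrVec_spec_tail (hn : n2 ≤ n1) {q M : ℝ} (h0 : 0 < q) (h1 : q ≤ 1)
    (hM : 0 < M) {Z : Fin n1 × Fin n2 → ℝ} (hZ : ∀ i, |Z i| ≤ M) :
    bernE q (fun b => ind (¬SpecLE (ctrVec q b Z) (26 * Real.sqrt n1 * M / q)))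
      ≤ Real.exp (-(6 * n1)) := by
  have hZsq : ∀ i, Z i ^ 2 ≤ M ^ 2 := fun i => sq_le_sq.mpr ((hZ i).trans (le_abs_self M))
  have h := spec_tail (n1 := n1) (n2 := n2) (bernWeight q) (bernWeight_nonneg h0.le h1)
    (fun b => ctrVec q b Z) (κ := M ^ 2 / q ^ 2) (s := 13 * Real.sqrt n1 * M / q)
    (by positivity) (by positivity) (by
      intro x y hx hy θ
      have hm := mgf_ctr (ι := Fin n1 × Fin n2) h0 h1 (fun p => θ * (x p.1 * y p.2 * Z p))
      refine le_trans (le_of_eq ?_) (hm.trans (Real.exp_le_exp.mpr ?_))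
      · unfold bernE
        refine Finset.sum_congr rfl fun b _ => ?_
        congr 2
        simp only [bil, ctrVec, Finset.mul_sum]
        exact Finset.sum_congr rfl fun i _ => by ring
      · rw [← Finset.sum_div, div_mul_eq_mul_div]
        refine div_le_div_of_nonneg_right ?_ (sq_nonneg q)
        calc ∑ p : Fin n1 × Fin n2, (θ * (x p.1 * y p.2 * Z p)) ^ 2
            ≤ ∑ p : Fin n1 × Fin n2, θ ^ 2 * M ^ 2 * (x p.1 * y p.2) ^ 2 :=
              Finset.sum_le_sum fun p _ => by
                have := mul_le_mul_of_nonneg_left (hZsq p) (sq_nonneg (θ * (x p.1 * y p.2)))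
                nlinarith
          _ ≤ θ ^ 2 * M ^ 2 * 1 := by
              rw [← Finset.mul_sum]
              exact mul_le_mul_of_nonneg_left (sum_bil_sq_le x y hx hy) (by positivity)
          _ = _ := by ring)
  have e1 : 2 * (13 * Real.sqrt n1 * M / q) = 26 * Real.sqrt n1 * M / q := by ring
  rw [e1] at h
  refine h.trans (Real.exp_le_exp.mpr ?_)
  have e2 : (13 * Real.sqrt n1 * M / q) ^ 2 / (4 * (M ^ 2 / q ^ 2)) = 169 / 4 * n1 := by
    rw [div_pow, mul_pow, mul_pow, Real.sq_sqrt (Nat.cast_nonneg _)]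
    field_simp; ring
  have : (n2 : ℝ) ≤ n1 := by exact_mod_cast hn
  rw [e2]
  nlinarith [(Nat.cast_nonneg n1 : (0 : ℝ) ≤ n1)]

/-- A golfing certificate: `Y` vanishes on the set `z`, reproduces `Z` on the range of `P` up to a
residual of size `ε ^ k * M`, and is small off that range. -/
def Golfed (P : Matrix (Fin n1 × Fin n2) (Fin n1 × Fin n2) ℝ) (q ε : ℝ) (k : ℕ) (M : ℝ)
    (Z : Fin n1 × Fin n2 → ℝ) (z : Fin n1 × Fin n2 → Bool) : Prop :=
  ∃ Y Z' : Fin n1 × Fin n2 → ℝ, (∀ i, z i = true → Y i = 0) ∧ P *ᵥ Z' = Z' ∧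
    P *ᵥ Y = Z - Z' ∧ (∀ i, |Z' i| ≤ ε ^ k * M) ∧
    SpecLE ((1 - P) *ᵥ Y) (52 * Real.sqrt n1 / q * M) ∧ ∀ i, |Y i| ≤ 2 / q * M

lemma Golfed.step
    (hspec : ∀ X c, SpecLE X c → SpecLE ((1 - P) *ᵥ X) c) {q ε M : ℝ} {k : ℕ} (h0 : 0 < q)
    (hε2 : ε ≤ 1 / 2) (hM : 0 < M) {Z : Fin n1 × Fin n2 → ℝ} (hPZ : P *ᵥ Z = Z)
    (hZ : ∀ i, |Z i| ≤ M) {b z : Fin n1 × Fin n2 → Bool}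
    (hs : SpecLE (ctrVec q b Z) (26 * Real.sqrt n1 * M / q))
    (hG : Golfed P q ε k (ε * M) (P *ᵥ ctrVec q b Z) z) :
    Golfed P q ε (k + 1) M Z (fun i => !b i && z i) := by
  obtain ⟨Y, Z', hY0, hPZ', hPY, hZ', hYs, hYb⟩ := hG
  have hc : Z - ctrVec q b Z = fun i => (if b i then q⁻¹ * Z i else 0) := by
    funext i; simp only [Pi.sub_apply, ctrVec, ctr]; split_ifs <;> ring
  refine ⟨(Z - ctrVec q b Z) + Y, Z', ?_, hPZ', ?_, ?_, ?_, ?_⟩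
  · intro i hi
    simp only [Bool.and_eq_true, Bool.not_eq_true'] at hi
    rw [Pi.add_apply, hc, hY0 i hi.2]
    simp [hi.1]
  · rw [Matrix.mulVec_add, Matrix.mulVec_sub, hPZ, hPY]; abel
  · intro i
    refine (hZ' i).trans (le_of_eq (by ring))
  · have e1 : (1 - P) *ᵥ (Z - ctrVec q b Z + Y)
        = -((1 - P) *ᵥ ctrVec q b Z) + (1 - P) *ᵥ Y := by
      rw [Matrix.mulVec_add, Matrix.mulVec_sub]
      have : (1 - P) *ᵥ Z = 0 := by rw [Matrix.sub_mulVec, Matrix.one_mulVec, hPZ, sub_self]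
      rw [this, zero_sub]
    rw [e1]
    refine (((hspec _ _ hs).neg).add hYs).mono ?_
    have : 0 ≤ Real.sqrt n1 * M / q := by positivity
    have e2 : 26 * Real.sqrt n1 * M / q + 52 * Real.sqrt n1 / q * (ε * M)
        = (26 + 52 * ε) * (Real.sqrt n1 * M / q) := by ring
    have e3 : 52 * Real.sqrt n1 / q * M = 52 * (Real.sqrt n1 * M / q) := by ring
    rw [e2, e3]
    nlinarith
  · intro i
    rw [Pi.add_apply, hc]
    refine (abs_add_le _ _).trans ?_
    have e1 : |if b i then q⁻¹ * Z i else 0| ≤ M / q := by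
      split_ifs
      · rw [abs_mul, abs_of_pos (inv_pos.mpr h0), div_eq_inv_mul]
        exact mul_le_mul_of_nonneg_left (hZ i) (inv_pos.mpr h0).le
      · rw [abs_zero]; positivity
    have : 0 ≤ M / q := by positivity
    have e2 : 2 / q * (ε * M) = 2 * ε * (M / q) := by ring
    have e3 : 2 / q * M = 2 * (M / q) := by ring
    have := hYb i
    rw [e2] at this
    rw [e3]
    nlinarith

lemma golfed_tail (hn : n2 ≤ n1) (hP : Pᵀ = P) (hPP : P * P = P) {μ : ℝ} (hμ0 : 0 < μ)
    (hμ : ∀ i, P i i ≤ μ) (hspec : ∀ X c, SpecLE X c → SpecLE ((1 - P) *ᵥ X) c)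
    {q ε : ℝ} (h0 : 0 < q) (h1 : q ≤ 1) (hε : 0 < ε) (hε2 : ε ≤ 1 / 2) (k : ℕ) :
    ∀ {M : ℝ}, 0 < M → ∀ {Z : Fin n1 × Fin n2 → ℝ}, P *ᵥ Z = Z → (∀ i, |Z i| ≤ M) →
    bernE ((1 - q) ^ k) (fun z => ind (¬Golfed P q ε k M Z z))
      ≤ k * (2 * (n1 * n2) * Real.exp (-(q * ε ^ 2 / (4 * μ))) + Real.exp (-(6 * n1))) := by
  induction k with
  | zero =>
    intro M hM Z hPZ hZ
    have : ∀ z, Golfed P q ε 0 M Z z := fun z => ⟨0, Z, fun _ _ => rfl, hPZ, by simp,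
      fun i => by simpa only [pow_zero, one_mul] using hZ i,
      by simpa using specLE_zero (by positivity), by intro i; simp; positivity⟩
    simp [this, ind_of_not, bernE]
  | succ k ih =>
    intro M hM Z hPZ hZ
    set η : ℝ := 2 * (n1 * n2) * Real.exp (-(q * ε ^ 2 / (4 * μ))) + Real.exp (-(6 * n1)) with hη
    have hη0 : 0 ≤ η := by positivity
    have hq1 : (0 : ℝ) ≤ 1 - q := by linarith
    have hρ0 : 0 ≤ (1 - q) ^ k := pow_nonneg hq1 k
    have hρ1 : (1 - q) ^ k ≤ 1 := pow_le_one₀ hq1 (by linarith)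
    let Bad : (Fin n1 × Fin n2 → Bool) → Prop := fun b =>
      (∃ p ∈ Finset.univ, ε * M < |(P *ᵥ ctrVec q b Z) p|) ∨
        ¬SpecLE (ctrVec q b Z) (26 * Real.sqrt n1 * M / q)
    have hbad : bernE q (fun b => ind (Bad b)) ≤ η := by
      refine (bernE_mono h0.le h1 fun b => (ind_or_le _ _).trans
        (add_le_add (ind_exists_le _ _) le_rfl)).trans ?_
      rw [bernE_add, bernE_sum]
      refine add_le_add ?_ (ctrVec_spec_tail hn h0 h1 hM hZ)
      refine (Finset.sum_le_sum fun p _ =>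
        ctrVec_entry_tail hP hPP hμ0 hμ h0 h1 hε (by linarith) hM hZ p).trans (le_of_eq ?_)
      simp only [Finset.sum_const, Finset.card_univ, Fintype.card_prod, Fintype.card_fin,
        nsmul_eq_mul]
      push_cast; ring
    rw [pow_succ', ← bernE_and, bernE_not]
    have hinner : ∀ b : Fin n1 × Fin n2 → Bool,
        bernE ((1 - q) ^ k) (fun z => ind (¬Golfed P q ε (k + 1) M Z fun i => !b i && z i))
          ≤ ind (Bad b) + k * η := by
      intro b
      by_cases hb : Bad b
      · rw [ind_of hb]
        have := bernE_mono (ι := Fin n1 × Fin n2) hρ0 hρ1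
          (fun z => ind_le_one (¬Golfed P q ε (k + 1) M Z fun i => !b i && z i))
        rw [bernE_one] at this
        have : (0 : ℝ) ≤ k * η := by positivity
        linarith
      · rw [ind_of_not hb, zero_add]
        simp only [Bad, not_or, not_exists, not_and, not_lt, not_not, Finset.mem_univ,
          forall_true_left] at hb
        refine (bernE_mono hρ0 hρ1 fun z => ind_mono fun hG hG' => hG
          (Golfed.step hspec h0 hε2 hM hPZ hZ hb.2 hG')).trans ?_
        refine ih (by positivity) ?_ hb.1
        rw [Matrix.mulVec_mulVec, hPP]
    refine (bernE_mono h0.le h1 hinner).trans ?_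
    rw [bernE_add, bernE_const]
    push_cast
    linarith

end Golfing

section Neumann

lemma maskM_transpose {ι : Type*} [DecidableEq ι] (z : ι → Bool) : (maskM z)ᵀ = maskM z := by
  simp [maskM]

variable {ι : Type*} [Fintype ι]

lemma dotProduct_sq_le (u v : ι → ℝ) : (u ⬝ᵥ v) ^ 2 ≤ (u ⬝ᵥ u) * (v ⬝ᵥ v) := by
  have := Finset.sum_mul_sq_le_sq_mul_sq Finset.univ u v
  simpa [dotProduct, sq] using this

lemma dotProduct_self_nonneg' (u : ι → ℝ) : 0 ≤ u ⬝ᵥ u :=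
  Finset.sum_nonneg fun _ _ => mul_self_nonneg _

lemma dotProduct_mulVec_symm {A : Matrix ι ι ℝ} (hA : Aᵀ = A) (u v : ι → ℝ) :
    u ⬝ᵥ (A *ᵥ v) = (A *ᵥ u) ⬝ᵥ v := by
  rw [Matrix.dotProduct_mulVec, ← Matrix.mulVec_transpose, hA]

lemma proj_contract {P : Matrix ι ι ℝ} (hP : Pᵀ = P) (hPP : P * P = P) (v : ι → ℝ) :
    (P *ᵥ v) ⬝ᵥ (P *ᵥ v) ≤ v ⬝ᵥ v := by
  have h1 : (P *ᵥ v) ⬝ᵥ (P *ᵥ v) = v ⬝ᵥ (P *ᵥ v) := by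
    rw [← dotProduct_mulVec_symm hP, Matrix.mulVec_mulVec, hPP]
  have h2 := dotProduct_self_nonneg' (v - P *ᵥ v)
  rw [sub_dotProduct, dotProduct_sub, dotProduct_sub, dotProduct_comm (P *ᵥ v) v] at h2
  linarith

variable [DecidableEq ι]

lemma maskM_mulVec (z : ι → Bool) (v : ι → ℝ) (i : ι) :
    (maskM z *ᵥ v) i = if z i then v i else 0 := by
  rw [maskM, Matrix.mulVec_diagonal]; split_ifs <;> simp

lemma maskM_mul_self (z : ι → Bool) : maskM z * maskM z = maskM z := by
  rw [maskM, Matrix.diagonal_mul_diagonal]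
  congr 1; funext i; split_ifs <;> simp

lemma maskM_contract (z : ι → Bool) (v : ι → ℝ) :
    (maskM z *ᵥ v) ⬝ᵥ (maskM z *ᵥ v) ≤ v ⬝ᵥ v := by
  refine Finset.sum_le_sum fun i _ => ?_
  rw [maskM_mulVec]; split_ifs
  · exact le_rfl
  · simpa using mul_self_nonneg (v i)

variable {P : Matrix ι ι ℝ} {z : ι → Bool} {τ : ℝ}

lemma mask_proj_le (hP : Pᵀ = P)
    (hz : ∀ x : ι → ℝ, x ⬝ᵥ ((P * maskM z * P) *ᵥ x) ≤ τ * (x ⬝ᵥ x)) (x : ι → ℝ) :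
    (maskM z *ᵥ (P *ᵥ x)) ⬝ᵥ (maskM z *ᵥ (P *ᵥ x)) ≤ τ * (x ⬝ᵥ x) := by
  refine le_trans (le_of_eq ?_) (hz x)
  rw [← dotProduct_mulVec_symm (maskM_transpose z), Matrix.mulVec_mulVec (P *ᵥ x), maskM_mul_self,
    ← dotProduct_mulVec_symm hP, Matrix.mulVec_mulVec, Matrix.mulVec_mulVec, Matrix.mul_assoc]

lemma proj_mask_le (hP : Pᵀ = P) (hPP : P * P = P)
    (hz : ∀ x : ι → ℝ, x ⬝ᵥ ((P * maskM z * P) *ᵥ x) ≤ τ * (x ⬝ᵥ x)) (x : ι → ℝ) :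
    (P *ᵥ (maskM z *ᵥ x)) ⬝ᵥ (P *ᵥ (maskM z *ᵥ x)) ≤ τ * (x ⬝ᵥ x) := by
  set y := P *ᵥ (maskM z *ᵥ x) with hy
  have hPy : P *ᵥ y = y := by rw [hy, Matrix.mulVec_mulVec, hPP]
  have h1 : y ⬝ᵥ y = x ⬝ᵥ (maskM z *ᵥ (P *ᵥ y)) := by
    rw [dotProduct_mulVec_symm (maskM_transpose z), dotProduct_mulVec_symm hP, dotProduct_comm]
  have h2 := dotProduct_sq_le x (maskM z *ᵥ (P *ᵥ y))
  rw [← h1] at h2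
  have h3 := mul_le_mul_of_nonneg_left (mask_proj_le hP hz y) (dotProduct_self_nonneg' x)
  rcases (dotProduct_self_nonneg' y).eq_or_lt with h | h
  · rw [← h] at h2 ⊢
    rcases (dotProduct_self_nonneg' x).eq_or_lt with h' | h'
    · rw [← h']; simp
    · have := (dotProduct_self_nonneg' _).trans (mask_proj_le hP hz x)
      exact this
  · nlinarith

/-- The Neumann inverse of `1 - D P D` on the support `z`. -/
lemma exists_neumann (hP : Pᵀ = P) (hPP : P * P = P) (hτ0 : 0 ≤ τ) (hτ : τ ≤ 1 / 2)
    (hz : ∀ x : ι → ℝ, x ⬝ᵥ ((P * maskM z * P) *ᵥ x) ≤ τ * (x ⬝ᵥ x)) :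
    ∃ G B : Matrix ι ι ℝ, B = maskM z * P * maskM z ∧ Gᵀ = G ∧ Bᵀ = B ∧ G = 1 + B * G ∧
      (∀ v, (G *ᵥ v) ⬝ᵥ (G *ᵥ v) ≤ 4 * (v ⬝ᵥ v)) ∧
      ∀ v, (B *ᵥ v) ⬝ᵥ (B *ᵥ v) ≤ τ ^ 2 * (v ⬝ᵥ v) := by
  set B := maskM z * P * maskM z with hB
  have hBt : Bᵀ = B := by
    rw [hB, Matrix.transpose_mul, Matrix.transpose_mul, hP, maskM_transpose, Matrix.mul_assoc]
  have hBv : ∀ v, B *ᵥ v = maskM z *ᵥ (P *ᵥ (P *ᵥ (maskM z *ᵥ v))) := fun v => by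
    rw [Matrix.mulVec_mulVec (maskM z *ᵥ v), hPP, Matrix.mulVec_mulVec, Matrix.mulVec_mulVec, hB,
      Matrix.mul_assoc]
  have hBsq : ∀ v, (B *ᵥ v) ⬝ᵥ (B *ᵥ v) ≤ τ ^ 2 * (v ⬝ᵥ v) := fun v => by
    rw [hBv]
    have h1 := mask_proj_le hP hz (P *ᵥ (maskM z *ᵥ v))
    have h2 := mul_le_mul_of_nonneg_left (proj_mask_le hP hPP hz v) hτ0
    linarith
  have hlow : ∀ v, v ⬝ᵥ v ≤ 4 * (((1 - B) *ᵥ v) ⬝ᵥ ((1 - B) *ᵥ v)) := fun v => by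
    have h1 := hBsq v
    have h0 := dotProduct_self_nonneg' v
    have h2 : τ ^ 2 * (v ⬝ᵥ v) ≤ 1 / 4 * (v ⬝ᵥ v) :=
      mul_le_mul_of_nonneg_right (by nlinarith) h0
    rw [Matrix.sub_mulVec, Matrix.one_mulVec, sub_dotProduct, dotProduct_sub, dotProduct_sub,
      dotProduct_comm (B *ᵥ v) v]
    have h3 := dotProduct_self_nonneg' (v - (2 : ℝ) • (B *ᵥ v))
    simp only [sub_dotProduct, dotProduct_sub, smul_dotProduct, dotProduct_smul, smul_eq_mul,
      dotProduct_comm (B *ᵥ v) v] at h3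
    linarith
  have hinj : Function.Injective (1 - B).mulVec := by
    intro u v huv
    have h1 : (1 - B) *ᵥ (u - v) = 0 := by
      rw [Matrix.mulVec_sub]; exact sub_eq_zero.mpr huv
    have h2 := hlow (u - v)
    rw [h1] at h2
    simp only [dotProduct_zero, mul_zero] at h2
    have h3 : (u - v) ⬝ᵥ (u - v) = 0 := le_antisymm h2 (dotProduct_self_nonneg' _)
    exact sub_eq_zero.mp (dotProduct_self_eq_zero.mp h3)
  have hunit : IsUnit (1 - B) := Matrix.mulVec_injective_iff_isUnit.mp hinj
  have hdet := (Matrix.isUnit_iff_isUnit_det _).mp hunit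
  have hG : (1 - B) * (1 - B)⁻¹ = 1 := Matrix.mul_nonsing_inv _ hdet
  refine ⟨(1 - B)⁻¹, B, rfl, ?_, hBt, ?_, fun v => ?_, hBsq⟩
  · rw [Matrix.transpose_nonsing_inv, Matrix.transpose_sub, hBt, Matrix.transpose_one]
  · rw [Matrix.sub_mul, Matrix.one_mul] at hG
    exact eq_add_of_sub_eq hG
  · have := hlow ((1 - B)⁻¹ *ᵥ v)
    rwa [Matrix.mulVec_mulVec, hG, Matrix.one_mulVec] at this

end Neumann

section SignCertificate

variable {n1 n2 : ℕ} {P : Matrix (Fin n1 × Fin n2) (Fin n1 × Fin n2) ℝ}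

lemma bil_eq_dotProduct (X : Fin n1 × Fin n2 → ℝ) (x : Fin n1 → ℝ) (y : Fin n2 → ℝ) :
    bil X x y = (fun p => x p.1 * y p.2) ⬝ᵥ X := rfl

lemma mgf_dot_sparseSgn {ι : Type*} [Fintype ι] [DecidableEq ι] (z : ι → Bool) (u : ι → ℝ)
    {c : ℝ} (hu : u ⬝ᵥ u ≤ 2 * c) (θ : ℝ) :
    bernE (1 / 2) (fun s => Real.exp (θ * (u ⬝ᵥ sparseSgn z s))) ≤ Real.exp (c * θ ^ 2) := by
  have hm := mgf_sgn (fun i => θ * (if z i then u i else 0))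
  refine le_trans (le_of_eq ?_) (hm.trans (Real.exp_le_exp.mpr ?_))
  · congr 1; funext s; congr 1
    simp only [dotProduct, sparseSgn, Finset.mul_sum]
    refine Finset.sum_congr rfl fun i _ => ?_
    split_ifs <;> ring
  · have : ∑ i, (θ * (if z i then u i else 0)) ^ 2 / 2 ≤ θ ^ 2 / 2 * (u ⬝ᵥ u) := by
      rw [dotProduct, Finset.mul_sum]
      refine Finset.sum_le_sum fun i _ => ?_
      split_ifs
      · exact le_of_eq (by ring)
      · have := mul_nonneg (sq_nonneg θ) (mul_self_nonneg (u i)); linarith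
    nlinarith [mul_le_mul_of_nonneg_left hu (sq_nonneg θ)]

lemma dot_sparseSgn_tail {ι : Type*} [Fintype ι] [DecidableEq ι] (z : ι → Bool) (u : ι → ℝ)
    {c a : ℝ} (hc : 0 < c) (ha : 0 ≤ a) (hu : u ⬝ᵥ u ≤ 2 * c) :
    bernE (1 / 2) (fun s => ind (a < |u ⬝ᵥ sparseSgn z s|))
      ≤ 2 * Real.exp (-(a ^ 2 / (4 * c))) := by
  have key : ∀ v : ι → ℝ, v ⬝ᵥ v ≤ 2 * c →
      bernE (1 / 2) (fun s => ind (a < v ⬝ᵥ sparseSgn z s)) ≤ Real.exp (-(a ^ 2 / (4 * c))) := by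
    intro v hv
    refine (bernE_chernoff (by norm_num) (by norm_num) _ (θ := a / (2 * c)) (by positivity)
      (mgf_dot_sparseSgn z v hv _)).trans (Real.exp_le_exp.mpr (le_of_eq ?_))
    field_simp; ring
  refine (bernE_mono (by norm_num) (by norm_num) fun s => ind_abs_le _ _).trans ?_
  rw [bernE_add]
  have k1 := key u hu
  have k2 := key (-u) (by simpa using hu)
  simp only [neg_dotProduct] at k2
  linarith

/-- A sign certificate in the kernel of `P`, agreeing with the signs on `z` and small off `z`. -/
def SignCert (P : Matrix (Fin n1 × Fin n2) (Fin n1 × Fin n2) ℝ)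
    (z s : Fin n1 × Fin n2 → Bool) : Prop :=
  ∃ W : Fin n1 × Fin n2 → ℝ, P *ᵥ W = 0 ∧ (∀ i, z i = true → W i = sgn (s i)) ∧
    (∀ i, z i = false → |W i| ≤ 1 / 4) ∧ SpecLE W (Real.sqrt n1 / 8)

lemma sparseSgn_spec_tail (hn : n2 ≤ n1) {ρ : ℝ} (h0 : 0 ≤ ρ) (h1 : ρ ≤ 1)
    (hρ : ρ * Real.exp 151552 ≤ 1 / 75776) :
    bernE ρ (fun z => bernE (1 / 2) fun s =>
      ind (¬SpecLE (sparseSgn z s : Fin n1 × Fin n2 → ℝ) (Real.sqrt n1 / 16)))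
      ≤ Real.exp (-n1) := by
  have hpair : ∀ f : (Fin n1 × Fin n2 → Bool) → (Fin n1 × Fin n2 → Bool) → ℝ,
      ∑ ω : (Fin n1 × Fin n2 → Bool) × (Fin n1 × Fin n2 → Bool),
        (bernWeight ρ ω.1 * bernWeight (1 / 2) ω.2) * f ω.1 ω.2
        = bernE ρ (fun z => bernE (1 / 2) fun s => f z s) := by
    intro f
    rw [Fintype.sum_prod_type]
    simp only [bernE, Finset.mul_sum, mul_assoc]
  have h := spec_tail (n1 := n1) (n2 := n2)
    (fun ω : (Fin n1 × Fin n2 → Bool) × (Fin n1 × Fin n2 → Bool) =>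
      bernWeight ρ ω.1 * bernWeight (1 / 2) ω.2)
    (fun ω => mul_nonneg (bernWeight_nonneg h0 h1 _)
      (bernWeight_nonneg (by norm_num) (by norm_num) _))
    (fun ω => sparseSgn ω.1 ω.2) (κ := 1 / 151552) (s := Real.sqrt n1 / 32)
    (by norm_num) (by positivity) (by
      intro x y hx hy θ
      rw [hpair fun z s => Real.exp (θ * bil (sparseSgn z s) x y)]
      have hm := mgf_sparseSgn (ι := Fin n1 × Fin n2) (κ := 1 / 151552) h0 h1 (by norm_num)
        (by norm_num at hρ ⊢; exact hρ) (fun p => θ * (x p.1 * y p.2))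
      refine le_trans (le_of_eq ?_) (hm.trans (Real.exp_le_exp.mpr ?_))
      · congr 1; funext z; congr 1; funext s; congr 1
        simp only [bil, Finset.mul_sum]
        exact Finset.sum_congr rfl fun i _ => by ring
      · rw [← Finset.mul_sum]
        simp only [mul_pow θ, ← Finset.mul_sum]
        nlinarith [mul_le_mul_of_nonneg_left (sum_bil_sq_le x y hx hy) (sq_nonneg θ)])
  rw [hpair fun z s => ind (¬SpecLE (sparseSgn z s) (2 * (Real.sqrt n1 / 32)))] at h
  have e1 : 2 * (Real.sqrt n1 / 32) = Real.sqrt n1 / 16 := by ring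
  rw [e1] at h
  refine h.trans (Real.exp_le_exp.mpr ?_)
  have e2 : (Real.sqrt n1 / 32) ^ 2 / (4 * (1 / 151552)) = 37 * (n1 : ℝ) := by
    rw [div_pow, Real.sq_sqrt (Nat.cast_nonneg _)]; ring
  have : (n2 : ℝ) ≤ n1 := by exact_mod_cast hn
  rw [e2]
  linarith

lemma symm_spec_tail (hn : n2 ≤ n1) {G B : Matrix (Fin n1 × Fin n2) (Fin n1 × Fin n2) ℝ}
    (hG : Gᵀ = G) (hB : Bᵀ = B) (hGn : ∀ v, (G *ᵥ v) ⬝ᵥ (G *ᵥ v) ≤ 4 * (v ⬝ᵥ v))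
    (hBn : ∀ v, (B *ᵥ v) ⬝ᵥ (B *ᵥ v) ≤ (1 / 1000) ^ 2 * (v ⬝ᵥ v))
    (z : Fin n1 × Fin n2 → Bool) :
    bernE (1 / 2) (fun s => ind (¬SpecLE (B *ᵥ (G *ᵥ sparseSgn z s)) (Real.sqrt n1 / 16)))
      ≤ Real.exp (-n1) := by
  have h := spec_tail (n1 := n1) (n2 := n2) (bernWeight (1 / 2))
    (bernWeight_nonneg (by norm_num) (by norm_num))
    (fun s => B *ᵥ (G *ᵥ sparseSgn z s)) (κ := 2 * (1 / 1000) ^ 2) (s := Real.sqrt n1 / 32)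
    (by norm_num) (by positivity) (by
      intro x y hx hy θ
      have hw : (fun p : Fin n1 × Fin n2 => x p.1 * y p.2) ⬝ᵥ (fun p => x p.1 * y p.2) ≤ 1 := by
        refine le_trans (le_of_eq ?_) (sum_bil_sq_le x y hx hy)
        simp [dotProduct, sq]
      have hm := mgf_dot_sparseSgn z (c := 2 * (1 / 1000) ^ 2)
        (G *ᵥ (B *ᵥ fun p => x p.1 * y p.2)) (by
          have h1 := hGn (B *ᵥ fun p => x p.1 * y p.2)
          have h2 := hBn fun p => x p.1 * y p.2
          linarith) θ
      refine le_trans (le_of_eq ?_) hm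
      unfold bernE
      refine Finset.sum_congr rfl fun s _ => ?_
      rw [bil_eq_dotProduct, dotProduct_mulVec_symm hB, dotProduct_mulVec_symm hG])
  have e1 : 2 * (Real.sqrt n1 / 32) = Real.sqrt n1 / 16 := by ring
  rw [e1] at h
  refine h.trans (Real.exp_le_exp.mpr ?_)
  have e2 : (Real.sqrt n1 / 32) ^ 2 / (4 * (2 * (1 / 1000) ^ 2)) = 15625 / 128 * (n1 : ℝ) := by
    rw [div_pow, Real.sq_sqrt (Nat.cast_nonneg _)]; ring
  have : (n2 : ℝ) ≤ n1 := by exact_mod_cast hn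
  rw [e2]
  nlinarith [(Nat.cast_nonneg n1 : (0 : ℝ) ≤ n1)]

lemma signCert_of_good
    (hspec : ∀ X c, SpecLE X c → SpecLE ((1 - P) *ᵥ X) c) (hPP : P * P = P)
    {z s : Fin n1 × Fin n2 → Bool} {G B : Matrix (Fin n1 × Fin n2) (Fin n1 × Fin n2) ℝ}
    (hP : Pᵀ = P) (hBdef : B = maskM z * P * maskM z) (hGt : Gᵀ = G) (hG : G = 1 + B * G)
    (h1 : SpecLE (sparseSgn z s : Fin n1 × Fin n2 → ℝ) (Real.sqrt n1 / 16))
    (h2 : SpecLE (B *ᵥ (G *ᵥ sparseSgn z s)) (Real.sqrt n1 / 16))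
    (h3 : ∀ p, |(G *ᵥ (maskM z *ᵥ P.col p)) ⬝ᵥ sparseSgn z s| ≤ 1 / 4) :
    SignCert P z s := by
  set E : Fin n1 × Fin n2 → ℝ := sparseSgn z s with hE
  set v := G *ᵥ E with hv
  have hvE : v = E + B *ᵥ v := by
    conv_lhs => rw [hv, hG]
    rw [Matrix.add_mulVec, Matrix.one_mulVec, ← Matrix.mulVec_mulVec]
  have hDE : maskM z *ᵥ E = E := by
    funext i; rw [maskM_mulVec, hE, sparseSgn]; split_ifs <;> rfl
  have hDB : maskM z * B = B := by
    rw [hBdef, ← Matrix.mul_assoc, ← Matrix.mul_assoc, maskM_mul_self]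
  have hDv : maskM z *ᵥ v = v := by
    conv_lhs => rw [hvE]
    rw [Matrix.mulVec_add, hDE, Matrix.mulVec_mulVec, hDB, ← hvE]
  have hDPv : maskM z *ᵥ (P *ᵥ v) = B *ᵥ v := by
    conv_lhs => rw [← hDv]
    rw [Matrix.mulVec_mulVec, Matrix.mulVec_mulVec, hBdef]
  refine ⟨(1 - P) *ᵥ v, ?_, ?_, ?_, ?_⟩
  · rw [Matrix.mulVec_mulVec, Matrix.mul_sub, Matrix.mul_one, hPP, sub_self, Matrix.zero_mulVec]
  · intro i hi
    have e1 := congrFun hDPv i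
    rw [maskM_mulVec, if_pos hi] at e1
    have e2 := congrFun hvE i
    rw [Pi.add_apply] at e2
    rw [Matrix.sub_mulVec, Matrix.one_mulVec, Pi.sub_apply, e1]
    have e3 : E i = sgn (s i) := by rw [hE, sparseSgn, if_pos hi]
    linarith
  · intro i hi
    have e1 := congrFun hDv i
    rw [maskM_mulVec, hi] at e1
    simp only [Bool.false_eq_true, if_false] at e1
    rw [Matrix.sub_mulVec, Matrix.one_mulVec, Pi.sub_apply, ← e1, zero_sub, abs_neg]
    refine le_trans (le_of_eq ?_) (h3 i)
    congr 1
    rw [← dotProduct_mulVec_symm hGt, ← dotProduct_mulVec_symm (maskM_transpose z), ← hv, hDv]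
    simp only [Matrix.mulVec, dotProduct, Matrix.col]
    refine Finset.sum_congr rfl fun k _ => ?_
    have : P k i = P i k := by conv_lhs => rw [← hP, Matrix.transpose_apply]
    simp [this]
  · refine hspec _ _ ?_
    rw [hvE]
    exact (h1.add h2).mono (by linarith)

lemma signCert_tail (hn : n2 ≤ n1) (hP : Pᵀ = P) (hPP : P * P = P) {μ : ℝ} (hμ0 : 0 < μ)
    (hμ : ∀ i, P i i ≤ μ) (hspec : ∀ X c, SpecLE X c → SpecLE ((1 - P) *ᵥ X) c)
    {ρ : ℝ} (h0 : 0 ≤ ρ) (h1 : ρ ≤ 1) (hρ : ρ * Real.exp 151552 ≤ 1 / 75776) :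
    bernE ρ (fun z => bernE (1 / 2) fun s => ind (¬SignCert P z s))
      ≤ bernE ρ (fun z => ind (∃ x, 1 / 1000 * (x ⬝ᵥ x) < x ⬝ᵥ ((P * maskM z * P) *ᵥ x)))
        + (2 * Real.exp (-n1) + 2 * (n1 * n2) * Real.exp (-(1 / (128 * μ)))) := by
  have hhalf0 : (0 : ℝ) ≤ 1 / 2 := by norm_num
  have hhalf1 : (1 / 2 : ℝ) ≤ 1 := by norm_num
  have hz : ∀ z, bernE (1 / 2) (fun s => ind (¬SignCert P z s))
      ≤ (bernE (1 / 2) fun s =>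
        ind (¬SpecLE (sparseSgn z s : Fin n1 × Fin n2 → ℝ) (Real.sqrt n1 / 16)))
        + (ind (∃ x, 1 / 1000 * (x ⬝ᵥ x) < x ⬝ᵥ ((P * maskM z * P) *ᵥ x))
        + (Real.exp (-n1) + 2 * (n1 * n2) * Real.exp (-(1 / (128 * μ))))) := by
    intro z
    have hn0 := bernE_nonneg hhalf0 hhalf1 fun s =>
      ind_nonneg (¬SpecLE (sparseSgn z s : Fin n1 × Fin n2 → ℝ) (Real.sqrt n1 / 16))
    have hc0 : 0 ≤ Real.exp (-n1) + 2 * (n1 * n2) * Real.exp (-(1 / (128 * μ))) := by positivity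
    by_cases hgood : ∃ x, 1 / 1000 * (x ⬝ᵥ x) < x ⬝ᵥ ((P * maskM z * P) *ᵥ x)
    · rw [ind_of hgood]
      have := bernE_mono hhalf0 hhalf1 fun s => ind_le_one (¬SignCert P z s)
      rw [bernE_one] at this
      linarith
    · rw [ind_of_not hgood, zero_add]
      push Not at hgood
      obtain ⟨G, B, hBdef, hGt, hBt, hG, hGn, hBn⟩ :=
        exists_neumann hP hPP (by norm_num) (by norm_num) hgood
      refine (bernE_mono hhalf0 hhalf1 (g := fun s =>
        ind (¬SpecLE (sparseSgn z s : Fin n1 × Fin n2 → ℝ) (Real.sqrt n1 / 16))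
        + (ind (¬SpecLE (B *ᵥ (G *ᵥ sparseSgn z s)) (Real.sqrt n1 / 16))
        + ∑ p, ind (1 / 4 < |(G *ᵥ (maskM z *ᵥ P.col p)) ⬝ᵥ sparseSgn z s|))) fun s => ?_).trans ?_
      · refine (ind_mono (p' := _ ∨ (_ ∨ ∃ p ∈ Finset.univ, _)) fun h => ?_).trans
          ((ind_or_le _ _).trans (add_le_add le_rfl ((ind_or_le _ _).trans
            (add_le_add le_rfl (ind_exists_le _ _)))))
        by_contra hcon
        simp only [not_or, not_exists, not_and, not_lt, not_not, Finset.mem_univ,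
          forall_true_left] at hcon
        exact h (signCert_of_good hspec hPP hP hBdef hGt hG hcon.1 hcon.2.1 hcon.2.2)
      · rw [bernE_add, bernE_add, bernE_sum]
        refine add_le_add le_rfl (add_le_add (symm_spec_tail hn hGt hBt hGn hBn z) ?_)
        have hp : ∀ p, bernE (1 / 2) (fun s =>
            ind (1 / 4 < |(G *ᵥ (maskM z *ᵥ P.col p)) ⬝ᵥ sparseSgn z s|))
            ≤ 2 * Real.exp (-(1 / (128 * μ))) := by
          intro p
          refine (dot_sparseSgn_tail z _ (c := 2 * μ) (by positivity) (by norm_num) ?_).trans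
            (le_of_eq ?_)
          · have e1 := hGn (maskM z *ᵥ P.col p)
            have e2 := maskM_contract z (P.col p)
            have e3 : P.col p ⬝ᵥ P.col p = P p p := by
              have := sum_sq_row hP hPP p
              rw [← this, dotProduct]
              refine Finset.sum_congr rfl fun k _ => ?_
              have : P k p = P p k := by conv_lhs => rw [← hP, Matrix.transpose_apply]
              simp [Matrix.col, this, sq]
            have := hμ p
            linarith
          · congr 2; congr 1; field_simp; norm_num
        refine (Finset.sum_le_sum fun p _ => hp p).trans (le_of_eq ?_)
        simp only [Finset.sum_const, Finset.card_univ, Fintype.card_prod, Fintype.card_fin,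
          nsmul_eq_mul]
        push_cast; ring
  refine (bernE_mono h0 h1 hz).trans ?_
  rw [bernE_add, bernE_add, bernE_const]
  linarith [sparseSgn_spec_tail (n1 := n1) (n2 := n2) hn h0 h1 hρ]

end SignCertificate

section Tangent

open scoped Kronecker

variable {n1 n2 r : ℕ}

/-- The orthogonal projection onto the column space of a matrix with orthonormal columns,
subtracted from the identity. -/
noncomputable def coproj {n : ℕ} (U : Matrix (Fin n) (Fin r) ℝ) : Matrix (Fin n) (Fin n) ℝ :=
  1 - U * Uᵀ

/-- The orthogonal projection onto the tangent space, acting on matrices viewed as vectors. -/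
noncomputable def tproj (U : Matrix (Fin n1) (Fin r) ℝ) (V : Matrix (Fin n2) (Fin r) ℝ) :
    Matrix (Fin n1 × Fin n2) (Fin n1 × Fin n2) ℝ :=
  1 - coproj U ⊗ₖ coproj V

lemma coproj_transpose {n : ℕ} (U : Matrix (Fin n) (Fin r) ℝ) : (coproj U)ᵀ = coproj U := by
  simp [coproj]

lemma coproj_mul_self {n : ℕ} {U : Matrix (Fin n) (Fin r) ℝ} (hU : Uᵀ * U = 1) :
    coproj U * coproj U = coproj U := by
  have : U * Uᵀ * (U * Uᵀ) = U * Uᵀ := by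
    rw [Matrix.mul_assoc, ← Matrix.mul_assoc Uᵀ, hU, Matrix.one_mul]
  simp only [coproj, Matrix.mul_sub, Matrix.sub_mul, Matrix.one_mul, Matrix.mul_one, this]
  abel

lemma coproj_mulVec_col {n : ℕ} {U : Matrix (Fin n) (Fin r) ℝ} (hU : Uᵀ * U = 1) (k : Fin r) :
    coproj U *ᵥ U.col k = 0 := by
  have h : coproj U * U = 0 := by
    rw [coproj, Matrix.sub_mul, Matrix.one_mul, Matrix.mul_assoc, hU, Matrix.mul_one, sub_self]
  funext i
  have := congrFun (congrFun h i) k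
  simpa [Matrix.mul_apply, Matrix.mulVec, dotProduct] using this

lemma norm_split {n : ℕ} {U : Matrix (Fin n) (Fin r) ℝ} (hU : Uᵀ * U = 1) (x : Fin n → ℝ) :
    (Uᵀ *ᵥ x) ⬝ᵥ (Uᵀ *ᵥ x) + (coproj U *ᵥ x) ⬝ᵥ (coproj U *ᵥ x) = x ⬝ᵥ x := by
  rw [← dotProduct_mulVec_symm (coproj_transpose U), Matrix.mulVec_mulVec, coproj_mul_self hU,
    coproj, Matrix.sub_mulVec, Matrix.one_mulVec, dotProduct_sub, ← Matrix.mulVec_mulVec]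
  have : x ⬝ᵥ (U *ᵥ (Uᵀ *ᵥ x)) = (Uᵀ *ᵥ x) ⬝ᵥ (Uᵀ *ᵥ x) := by
    rw [Matrix.dotProduct_mulVec, ← Matrix.mulVec_transpose]
  linarith

lemma one_sub_tproj (U : Matrix (Fin n1) (Fin r) ℝ) (V : Matrix (Fin n2) (Fin r) ℝ) :
    1 - tproj U V = coproj U ⊗ₖ coproj V := by
  simp [tproj]

lemma tproj_transpose (U : Matrix (Fin n1) (Fin r) ℝ) (V : Matrix (Fin n2) (Fin r) ℝ) :
    (tproj U V)ᵀ = tproj U V := by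
  rw [tproj, Matrix.transpose_sub, Matrix.transpose_one, ← Matrix.kroneckerMap_transpose,
    coproj_transpose, coproj_transpose]

lemma tproj_mul_self {U : Matrix (Fin n1) (Fin r) ℝ} {V : Matrix (Fin n2) (Fin r) ℝ}
    (hU : Uᵀ * U = 1) (hV : Vᵀ * V = 1) : tproj U V * tproj U V = tproj U V := by
  have : (coproj U ⊗ₖ coproj V) * (coproj U ⊗ₖ coproj V) = coproj U ⊗ₖ coproj V := by
    rw [← Matrix.mul_kronecker_mul, coproj_mul_self hU, coproj_mul_self hV]
  simp only [tproj, Matrix.mul_sub, Matrix.sub_mul, Matrix.one_mul, Matrix.mul_one, this]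
  abel

lemma tproj_diag_le (U : Matrix (Fin n1) (Fin r) ℝ) (V : Matrix (Fin n2) (Fin r) ℝ) {α β : ℝ}
    (hα : ∀ i, ∑ k, U i k ^ 2 ≤ α) (hβ : ∀ j, ∑ k, V j k ^ 2 ≤ β) (p : Fin n1 × Fin n2) :
    tproj U V p p ≤ α + β := by
  have h1 : ∀ {n : ℕ} (U : Matrix (Fin n) (Fin r) ℝ) (i : Fin n),
      coproj U i i = 1 - ∑ k, U i k ^ 2 := by
    intro n U i; simp [coproj, Matrix.mul_apply, sq]
  rw [tproj, Matrix.sub_apply, Matrix.one_apply_eq, Matrix.kroneckerMap_apply, h1, h1]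
  have h2 : 0 ≤ (∑ k, U p.1 k ^ 2) * ∑ k, V p.2 k ^ 2 := by positivity
  nlinarith [hα p.1, hβ p.2]

lemma kronecker_mulVec_tensor (A : Matrix (Fin n1) (Fin n1) ℝ) (B : Matrix (Fin n2) (Fin n2) ℝ)
    (x : Fin n1 → ℝ) (y : Fin n2 → ℝ) :
    (A ⊗ₖ B) *ᵥ (fun p => x p.1 * y p.2) = fun p => (A *ᵥ x) p.1 * (B *ᵥ y) p.2 := by
  funext p
  simp only [Matrix.mulVec, dotProduct, Matrix.kroneckerMap_apply]
  rw [Fintype.sum_prod_type, Finset.sum_mul_sum]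
  exact Finset.sum_congr rfl fun i _ => Finset.sum_congr rfl fun j _ => by ring

lemma bil_tperp (U : Matrix (Fin n1) (Fin r) ℝ) (V : Matrix (Fin n2) (Fin r) ℝ)
    (X : Fin n1 × Fin n2 → ℝ) (x : Fin n1 → ℝ) (y : Fin n2 → ℝ) :
    bil ((1 - tproj U V) *ᵥ X) x y = bil X (coproj U *ᵥ x) (coproj V *ᵥ y) := by
  have h : (1 - tproj U V)ᵀ = 1 - tproj U V := by
    rw [Matrix.transpose_sub, Matrix.transpose_one, tproj_transpose]
  rw [bil_eq_dotProduct, dotProduct_mulVec_symm h, one_sub_tproj, kronecker_mulVec_tensor]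
  rfl

lemma specLE_tperp {U : Matrix (Fin n1) (Fin r) ℝ} {V : Matrix (Fin n2) (Fin r) ℝ}
    (hU : Uᵀ * U = 1) (hV : Vᵀ * V = 1) (X : Fin n1 × Fin n2 → ℝ) (c : ℝ) (h : SpecLE X c) :
    SpecLE ((1 - tproj U V) *ᵥ X) c := by
  intro x y hx hy
  rw [bil_tperp]
  refine h _ _ ?_ ?_
  · have := proj_contract (coproj_transpose U) (coproj_mul_self hU) x
    simp only [dotProduct, ← sq] at this
    exact this.trans hx
  · have := proj_contract (coproj_transpose V) (coproj_mul_self hV) y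
    simp only [dotProduct, ← sq] at this
    exact this.trans hy

/-- The matrix `U Vᵀ` viewed as a vector. -/
noncomputable def uvVec (U : Matrix (Fin n1) (Fin r) ℝ) (V : Matrix (Fin n2) (Fin r) ℝ) :
    Fin n1 × Fin n2 → ℝ := fun p => ∑ k, U p.1 k * V p.2 k

lemma tproj_uvVec {U : Matrix (Fin n1) (Fin r) ℝ} (V : Matrix (Fin n2) (Fin r) ℝ)
    (hU : Uᵀ * U = 1) : tproj U V *ᵥ uvVec U V = uvVec U V := by
  have h0 : uvVec U V = ∑ k, fun p : Fin n1 × Fin n2 => U.col k p.1 * V.col k p.2 := by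
    funext p; simp [uvVec, Finset.sum_apply]
  have h1 : (coproj U ⊗ₖ coproj V) *ᵥ uvVec U V = 0 := by
    rw [h0, Matrix.mulVec_sum]
    refine Finset.sum_eq_zero fun k _ => ?_
    rw [kronecker_mulVec_tensor, coproj_mulVec_col hU]
    funext p; simp
  rw [tproj, Matrix.sub_mulVec, Matrix.one_mulVec, h1, sub_zero]

lemma bil_uvVec (U : Matrix (Fin n1) (Fin r) ℝ) (V : Matrix (Fin n2) (Fin r) ℝ)
    (x : Fin n1 → ℝ) (y : Fin n2 → ℝ) :
    bil (uvVec U V) x y = (Uᵀ *ᵥ x) ⬝ᵥ (Vᵀ *ᵥ y) := by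
  simp only [bil, uvVec, dotProduct, Matrix.mulVec, Matrix.transpose_apply]
  rw [Fintype.sum_prod_type]
  simp only [Finset.mul_sum, Finset.sum_mul]
  rw [Finset.sum_comm' (t' := Finset.univ) (s' := fun _ => Finset.univ) (by simp)]
  rw [Finset.sum_congr rfl fun j _ => Finset.sum_comm, Finset.sum_comm]
  refine Finset.sum_congr rfl fun k _ => Finset.sum_congr rfl fun j _ =>
    Finset.sum_congr rfl fun i _ => by ring

end Tangent

section Norms

/-- The Euclidean norm of a vector. -/
noncomputable def l2 {ι : Type*} [Fintype ι] (v : ι → ℝ) : ℝ := Real.sqrt (v ⬝ᵥ v)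

variable {ι : Type*} [Fintype ι]

lemma l2_nonneg (v : ι → ℝ) : 0 ≤ l2 v := Real.sqrt_nonneg _

lemma l2_sq (v : ι → ℝ) : l2 v ^ 2 = v ⬝ᵥ v := Real.sq_sqrt (dotProduct_self_nonneg' v)

lemma l2_eq_norm (v : ι → ℝ) : l2 v = ‖WithLp.toLp 2 v‖ := by
  rw [EuclideanSpace.norm_eq, l2]
  congr 1
  simp [dotProduct, sq]

lemma l2_add_le (u v : ι → ℝ) : l2 (u + v) ≤ l2 u + l2 v := by
  simp only [l2_eq_norm, WithLp.toLp_add]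
  exact norm_add_le _ _

lemma l2_sub_le (u v : ι → ℝ) : l2 (u - v) ≤ l2 u + l2 v := by
  simp only [l2_eq_norm, WithLp.toLp_sub]
  exact norm_sub_le _ _

lemma dotProduct_le_l2 (u v : ι → ℝ) : u ⬝ᵥ v ≤ l2 u * l2 v := by
  rw [l2, l2, ← Real.sqrt_mul (dotProduct_self_nonneg' u)]
  exact Real.le_sqrt_of_sq_le (dotProduct_sq_le u v)

lemma l2_smul (a : ℝ) (ha : 0 ≤ a) (v : ι → ℝ) : l2 (a • v) = a * l2 v := by
  rw [l2_eq_norm, l2_eq_norm, WithLp.toLp_smul, norm_smul, Real.norm_of_nonneg ha]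

lemma l2_le_sum_abs (v : ι → ℝ) : l2 v ≤ ∑ i, |v i| := by
  have h0 : 0 ≤ ∑ i, |v i| := Finset.sum_nonneg fun _ _ => abs_nonneg _
  refine Real.sqrt_le_iff.mpr ⟨h0, ?_⟩
  rw [sq, Finset.sum_mul]
  refine Finset.sum_le_sum fun i _ => ?_
  rw [← abs_mul_abs_self]
  exact mul_le_mul_of_nonneg_left
    (Finset.single_le_sum (f := fun i => |v i|) (fun _ _ => abs_nonneg _) (Finset.mem_univ i))
    (abs_nonneg _)

lemma sum_abs_le_l2 (v : ι → ℝ) : ∑ i, |v i| ≤ Real.sqrt (Fintype.card ι) * l2 v := by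
  have h := dotProduct_le_l2 (fun _ : ι => (1 : ℝ)) fun i => |v i|
  have e1 : l2 (fun _ : ι => (1 : ℝ)) = Real.sqrt (Fintype.card ι) := by simp [l2, dotProduct]
  have e2 : l2 (fun i => |v i|) = l2 v := by simp [l2, dotProduct]
  rw [e1, e2] at h
  simpa [dotProduct] using h

lemma l2_eq_zero {v : ι → ℝ} (h : l2 v = 0) : v = 0 := by
  have := l2_sq v
  rw [h] at this
  exact dotProduct_self_eq_zero.mp (by rw [← this]; norm_num)

variable {n1 n2 : ℕ}

/-- A matrix viewed as a vector indexed by pairs. -/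
def vecM (M : Matrix (Fin n1) (Fin n2) ℝ) : Fin n1 × Fin n2 → ℝ := fun p => M p.1 p.2

lemma frob_eq_l2 (M : Matrix (Fin n1) (Fin n2) ℝ) : frob M = l2 (vecM M) := by
  rw [frob, l2, dotProduct, Fintype.sum_prod_type]
  simp [vecM, sq]

lemma l1norm_eq (M : Matrix (Fin n1) (Fin n2) ℝ) : l1norm M = ∑ p, |vecM M p| := by
  rw [l1norm, Fintype.sum_prod_type]; rfl

lemma minner_eq (A B : Matrix (Fin n1) (Fin n2) ℝ) : minner A B = vecM A ⬝ᵥ vecM B := by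
  rw [minner, dotProduct, Fintype.sum_prod_type]; rfl

lemma bil_smul_left (X : Fin n1 × Fin n2 → ℝ) (a : ℝ) (x : Fin n1 → ℝ) (y : Fin n2 → ℝ) :
    bil X (a • x) y = a * bil X x y := by
  simp only [bil, Finset.mul_sum, Pi.smul_apply, smul_eq_mul]
  exact Finset.sum_congr rfl fun _ _ => by ring

lemma bil_smul_right (X : Fin n1 × Fin n2 → ℝ) (a : ℝ) (x : Fin n1 → ℝ) (y : Fin n2 → ℝ) :
    bil X x (a • y) = a * bil X x y := by
  simp only [bil, Finset.mul_sum, Pi.smul_apply, smul_eq_mul]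
  exact Finset.sum_congr rfl fun _ _ => by ring

lemma sum_sq_eq_l2 (v : ι → ℝ) : ∑ i, v i ^ 2 = l2 v ^ 2 := by
  rw [l2_sq]; simp [dotProduct, sq]

lemma SpecLE.bil_le {X : Fin n1 × Fin n2 → ℝ} {c : ℝ} (h : SpecLE X c) (x : Fin n1 → ℝ)
    (y : Fin n2 → ℝ) : bil X x y ≤ c * (l2 x * l2 y) := by
  rcases (l2_nonneg x).eq_or_lt with hx | hx
  · rw [l2_eq_zero hx.symm]; simp [bil, l2]
  rcases (l2_nonneg y).eq_or_lt with hy | hy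
  · rw [l2_eq_zero hy.symm]; simp [bil, l2]
  have h1 := h ((l2 x)⁻¹ • x) ((l2 y)⁻¹ • y)
    (by rw [sum_sq_eq_l2, l2_smul _ (inv_nonneg.mpr hx.le), inv_mul_cancel₀ hx.ne']; norm_num)
    (by rw [sum_sq_eq_l2, l2_smul _ (inv_nonneg.mpr hy.le), inv_mul_cancel₀ hy.ne']; norm_num)
  rw [bil_smul_left, bil_smul_right, ← mul_assoc, ← mul_inv,
    inv_mul_le_iff₀ (by positivity)] at h1
  linarith

lemma bil_le_l2 (X : Fin n1 × Fin n2 → ℝ) : SpecLE X (l2 X) := by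
  intro x y hx hy
  rw [bil_eq_dotProduct]
  refine (dotProduct_le_l2 _ _).trans (mul_le_of_le_one_left (l2_nonneg _) ?_)
  have := sum_bil_sq_le x y hx hy
  rw [sum_sq_eq_l2] at this
  exact (sq_le_one_iff₀ (l2_nonneg _)).mp this

lemma bil_eq_mulVec (B : Matrix (Fin n1) (Fin n2) ℝ) (x : Fin n1 → ℝ) (y : Fin n2 → ℝ) :
    bil (vecM B) x y = x ⬝ᵥ (B *ᵥ y) := by
  simp only [bil, vecM, dotProduct, Matrix.mulVec, Finset.mul_sum]
  rw [Fintype.sum_prod_type]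
  exact Finset.sum_congr rfl fun i _ => Finset.sum_congr rfl fun j _ => by ring

lemma spec_set_eq (B : Matrix (Fin n1) (Fin n2) ℝ) (x : Fin n2 → ℝ) :
    Real.sqrt (∑ i, (∑ j, B i j * x j) ^ 2) = l2 (B *ᵥ x) := by
  simp [l2, dotProduct, Matrix.mulVec, sq]

lemma l2_mulVec_le {B : Matrix (Fin n1) (Fin n2) ℝ} {c : ℝ} (h : SpecLE (vecM B) c)
    {x : Fin n2 → ℝ} (hx : ∑ j, x j ^ 2 ≤ 1) (hc : 0 ≤ c) : l2 (B *ᵥ x) ≤ c := by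
  rcases (l2_nonneg (B *ᵥ x)).eq_or_lt with h0 | h0
  · rwa [← h0]
  have h1 := h.bil_le (B *ᵥ x) x
  rw [bil_eq_mulVec, ← l2_sq] at h1
  have h2 : l2 x ≤ 1 := by
    rw [sum_sq_eq_l2] at hx; exact (sq_le_one_iff₀ (l2_nonneg _)).mp hx
  have h3 : c * (l2 (B *ᵥ x) * l2 x) ≤ c * l2 (B *ᵥ x) :=
    mul_le_mul_of_nonneg_left (mul_le_of_le_one_right h0.le h2) hc
  nlinarith

lemma spec_le_iff (B : Matrix (Fin n1) (Fin n2) ℝ) {c : ℝ} (hc : 0 ≤ c) :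
    spec B ≤ c ↔ SpecLE (vecM B) c := by
  constructor
  · intro h x y hx hy
    rw [bil_eq_mulVec]
    have hx' : l2 x ≤ 1 := by
      rw [sum_sq_eq_l2] at hx; exact (sq_le_one_iff₀ (l2_nonneg _)).mp hx
    refine (dotProduct_le_l2 _ _).trans
      ((mul_le_of_le_one_left (l2_nonneg _) hx').trans (le_trans ?_ h))
    refine le_csSup ⟨l2 (vecM B), ?_⟩ ⟨y, hy, (spec_set_eq B y).symm⟩
    rintro _ ⟨w, hw, rfl⟩
    rw [spec_set_eq]
    exact l2_mulVec_le (bil_le_l2 _) hw (l2_nonneg _)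
  · intro h
    refine csSup_le ⟨_, 0, by simp, rfl⟩ ?_
    rintro _ ⟨w, hw, rfl⟩
    rw [spec_set_eq]
    exact l2_mulVec_le h hw hc

lemma abs_entry_le_of_specLE {X : Fin n1 × Fin n2 → ℝ} {c : ℝ} (h : SpecLE X c)
    (p : Fin n1 × Fin n2) : |X p| ≤ c := by
  have key : ∀ σ : ℝ, σ ^ 2 = 1 → σ * X p ≤ c := by
    intro σ hσ
    have h1 := h (Pi.single p.1 σ) (Pi.single p.2 1)
      (by simp [Pi.single_apply, hσ]) (by simp [Pi.single_apply])
    refine le_trans (le_of_eq ?_) h1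
    rw [bil, Finset.sum_eq_single p]
    · simp
    · intro q _ hq
      by_cases h1 : q.1 = p.1
      · have h2 : q.2 ≠ p.2 := fun h2 => hq (Prod.ext h1 h2)
        simp [h2]
      · simp [h1]
    · simp
  refine abs_le.mpr ⟨?_, ?_⟩
  · have := key (-1) (by norm_num); linarith
  · have := key 1 (by norm_num); linarith

lemma nuc_bddAbove (A : Matrix (Fin n1) (Fin n2) ℝ) :
    BddAbove {c : ℝ | ∃ B : Matrix (Fin n1) (Fin n2) ℝ, spec B ≤ 1 ∧ c = minner A B} := by
  refine ⟨∑ p, |vecM A p|, ?_⟩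
  rintro _ ⟨B, hB, rfl⟩
  rw [minner_eq]
  refine Finset.sum_le_sum fun p _ => (le_abs_self _).trans ?_
  rw [abs_mul]
  exact mul_le_of_le_one_right (abs_nonneg _)
    (abs_entry_le_of_specLE ((spec_le_iff B zero_le_one).mp hB) p)

lemma dot_le_nuc (A : Matrix (Fin n1) (Fin n2) ℝ) {X : Fin n1 × Fin n2 → ℝ} (hX : SpecLE X 1) :
    vecM A ⬝ᵥ X ≤ nuc A :=
  le_csSup (nuc_bddAbove A) ⟨Matrix.of fun i j => X (i, j),
    (spec_le_iff _ zero_le_one).mpr hX, by rw [minner_eq]; rfl⟩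

variable {r : ℕ}

lemma vecM_svd (U : Matrix (Fin n1) (Fin r) ℝ) (V : Matrix (Fin n2) (Fin r) ℝ) (σ : Fin r → ℝ)
    (X : Fin n1 × Fin n2 → ℝ) :
    vecM (U * Matrix.diagonal σ * Vᵀ) ⬝ᵥ X = ∑ k, σ k * bil X (U.col k) (V.col k) := by
  simp only [dotProduct, vecM, bil, Finset.mul_sum]
  rw [Finset.sum_comm]
  refine Finset.sum_congr rfl fun p _ => ?_
  rw [Matrix.mul_apply, Finset.sum_mul]
  refine Finset.sum_congr rfl fun k _ => ?_
  rw [Matrix.mul_diagonal, Matrix.transpose_apply]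
  simp only [Matrix.col_apply]
  ring

lemma sum_col_sq {n : ℕ} {U : Matrix (Fin n) (Fin r) ℝ} (hU : Uᵀ * U = 1) (k : Fin r) :
    ∑ i, U.col k i ^ 2 = 1 := by
  have := congrFun (congrFun hU k) k
  rw [Matrix.mul_apply, Matrix.one_apply_eq] at this
  rw [← this]
  exact Finset.sum_congr rfl fun i _ => by simp [sq]

lemma transpose_mulVec_col {n : ℕ} {U : Matrix (Fin n) (Fin r) ℝ} (hU : Uᵀ * U = 1) (k : Fin r) :
    Uᵀ *ᵥ U.col k = Pi.single k 1 := by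
  funext i
  have := congrFun (congrFun hU i) k
  rw [Matrix.mul_apply, Matrix.one_apply] at this
  simp only [Matrix.mulVec, dotProduct, Matrix.col_apply]
  rw [this]; simp [Pi.single_apply]

lemma nuc_svd_le {U : Matrix (Fin n1) (Fin r) ℝ} {V : Matrix (Fin n2) (Fin r) ℝ} {σ : Fin r → ℝ}
    (hU : Uᵀ * U = 1) (hV : Vᵀ * V = 1) (hσ : ∀ k, 0 < σ k) :
    nuc (U * Matrix.diagonal σ * Vᵀ) ≤ ∑ k, σ k := by
  refine csSup_le ⟨_, 0, (spec_le_iff _ zero_le_one).mpr ?_, rfl⟩ ?_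
  · intro x y _ _; simp [bil, vecM]
  · rintro _ ⟨B, hB, rfl⟩
    rw [minner_eq, vecM_svd]
    refine Finset.sum_le_sum fun k _ => mul_le_of_le_one_right (hσ k).le ?_
    exact (spec_le_iff B zero_le_one).mp hB _ _ (sum_col_sq hU k).le (sum_col_sq hV k).le

/-- Lower bound for the nuclear norm near `U Σ Vᵀ` from a dual certificate. -/
lemma nuc_lower {U : Matrix (Fin n1) (Fin r) ℝ} {V : Matrix (Fin n2) (Fin r) ℝ} {σ : Fin r → ℝ}
    (hU : Uᵀ * U = 1) (hV : Vᵀ * V = 1) {Y : Fin n1 × Fin n2 → ℝ}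
    (hPY : tproj U V *ᵥ Y = uvVec U V) (hY : SpecLE ((1 - tproj U V) *ᵥ Y) (1 / 2))
    (L : Matrix (Fin n1) (Fin n2) ℝ) :
    ∑ k, σ k + Y ⬝ᵥ vecM (L - U * Matrix.diagonal σ * Vᵀ)
      + l2 ((1 - tproj U V) *ᵥ vecM (L - U * Matrix.diagonal σ * Vᵀ)) / 2 ≤ nuc L := by
  set Q := 1 - tproj U V with hQ
  have hQt : Qᵀ = Q := by rw [hQ, Matrix.transpose_sub, Matrix.transpose_one, tproj_transpose]
  have hQQ : Q * Q = Q := by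
    rw [hQ]
    simp only [Matrix.mul_sub, Matrix.sub_mul, Matrix.one_mul, Matrix.mul_one,
      tproj_mul_self hU hV]
    abel
  set L0 := U * Matrix.diagonal σ * Vᵀ with hL0
  set H := vecM (L - L0) with hH
  set a := l2 (Q *ᵥ H) with ha
  set R := Y + (2 * a)⁻¹ • H with hR
  have ha0 : 0 ≤ a := l2_nonneg _
  have hQR : Q *ᵥ R = Q *ᵥ Y + (2 * a)⁻¹ • (Q *ᵥ H) := by
    rw [hR, Matrix.mulVec_add, Matrix.mulVec_smul]
  have hRspec : SpecLE (Q *ᵥ R) 1 := by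
    rw [hQR]
    refine (hY.add ((bil_le_l2 (Q *ᵥ H)).smul (inv_nonneg.mpr (by linarith : 0 ≤ 2 * a)))).mono ?_
    rw [← ha]
    have : (2 * a)⁻¹ * a ≤ 1 / 2 := by
      rcases ha0.eq_or_lt with h | h
      · rw [← h]; norm_num
      · rw [mul_inv, mul_assoc, inv_mul_cancel₀ h.ne']; norm_num
    linarith
  set N := uvVec U V + Q *ᵥ R with hN
  have hbilN : ∀ x y, bil N x y
      = (Uᵀ *ᵥ x) ⬝ᵥ (Vᵀ *ᵥ y) + bil (Q *ᵥ R) (coproj U *ᵥ x) (coproj V *ᵥ y) := by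
    intro x y
    have h1 : bil N x y = bil (uvVec U V) x y + bil (Q *ᵥ R) x y := by
      simp [hN, bil, mul_add, Finset.sum_add_distrib]
    have h2 : bil (Q *ᵥ R) x y = bil (Q *ᵥ R) (coproj U *ᵥ x) (coproj V *ᵥ y) := by
      conv_lhs => rw [← hQQ, ← Matrix.mulVec_mulVec, hQ, bil_tperp]
    rw [h1, bil_uvVec, h2]
  have hNspec : SpecLE N 1 := by
    intro x y hx hy
    rw [hbilN]
    have h1 := dotProduct_le_l2 (Uᵀ *ᵥ x) (Vᵀ *ᵥ y)
    have h2 := hRspec.bil_le (coproj U *ᵥ x) (coproj V *ᵥ y)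
    have h3 := norm_split hU x
    have h4 := norm_split hV y
    rw [← l2_sq, ← l2_sq, ← l2_sq, ← sum_sq_eq_l2 x] at h3
    rw [← l2_sq, ← l2_sq, ← l2_sq, ← sum_sq_eq_l2 y] at h4
    nlinarith [sq_nonneg (l2 (Uᵀ *ᵥ x) - l2 (Vᵀ *ᵥ y)),
      sq_nonneg (l2 (coproj U *ᵥ x) - l2 (coproj V *ᵥ y))]
  have hNL0 : vecM L0 ⬝ᵥ N = ∑ k, σ k := by
    rw [hL0, vecM_svd]
    refine Finset.sum_congr rfl fun k _ => ?_
    rw [hbilN, transpose_mulVec_col hU, transpose_mulVec_col hV, coproj_mulVec_col hU]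
    simp [bil]
  have hNH : N ⬝ᵥ H = Y ⬝ᵥ H + a / 2 := by
    have e1 : N = Y + (2 * a)⁻¹ • (Q *ᵥ H) := by
      rw [hN, hQR, ← hPY, hQ, Matrix.sub_mulVec, Matrix.one_mulVec]; abel
    have e2 : (Q *ᵥ H) ⬝ᵥ H = a ^ 2 := by
      rw [ha, l2_sq, dotProduct_mulVec_symm hQt (Q *ᵥ H), Matrix.mulVec_mulVec, hQQ]
    rw [e1, add_dotProduct, smul_dotProduct, e2, smul_eq_mul]
    rcases ha0.eq_or_lt with h | h
    · rw [← h]; norm_num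
    · field_simp
  have hL : vecM L = vecM L0 + H := by funext p; simp [hH, vecM]
  have := dot_le_nuc L hNspec
  rw [hL, add_dotProduct, hNL0, dotProduct_comm H, hNH] at this
  linarith

end Norms

section Deterministic

variable {n1 n2 r : ℕ}

/-- An approximate dual certificate for the support pattern `z` and sign pattern `s`. -/
def DualCert (U : Matrix (Fin n1) (Fin r) ℝ) (V : Matrix (Fin n2) (Fin r) ℝ)
    (z s : Fin n1 × Fin n2 → Bool) : Prop :=
  ∃ Y Z : Fin n1 × Fin n2 → ℝ, tproj U V *ᵥ Y = uvVec U V ∧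
    SpecLE ((1 - tproj U V) *ᵥ Y) (1 / 2) ∧
    (∀ i, z i = true → Y i = (Real.sqrt n1)⁻¹ * sgn (s i) + Z i) ∧
    (∀ i, z i = false → |Y i| ≤ (Real.sqrt n1)⁻¹ / 2) ∧
    l2 Z ≤ (Real.sqrt n1)⁻¹ / 100 ∧
    ∀ x, x ⬝ᵥ ((tproj U V * maskM z * tproj U V) *ᵥ x) ≤ 1 / 4 * (x ⬝ᵥ x)

lemma abs_le_l2 {ι : Type*} [Fintype ι] (v : ι → ℝ) (i : ι) : |v i| ≤ l2 v := by
  rw [← Real.sqrt_sq_eq_abs, l2]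
  refine Real.sqrt_le_sqrt ?_
  rw [sq]
  exact Finset.single_le_sum (f := fun i => v i * v i) (fun i _ => mul_self_nonneg _)
    (Finset.mem_univ i)

lemma l2_le_of_abs_le {ι : Type*} [Fintype ι] {v : ι → ℝ} {c : ℝ} (hc : 0 ≤ c)
    (h : ∀ i, |v i| ≤ c) : l2 v ≤ Real.sqrt (Fintype.card ι) * c := by
  rw [l2, ← Real.sqrt_sq hc, ← Real.sqrt_mul (Nat.cast_nonneg _)]
  refine Real.sqrt_le_sqrt ?_
  refine (Finset.sum_le_sum fun i _ => (?_ : v i * v i ≤ c ^ 2)).trans (by simp)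
  rw [← abs_mul_abs_self, sq]
  exact mul_self_le_mul_self (abs_nonneg _) (h i)

lemma abs_sgn (b : Bool) : |sgn b| = 1 := by cases b <;> simp [sgn]

/-- Lower bound on the growth of the `ℓ¹` norm from a dual certificate. -/
lemma l1_lower {ι : Type*} [Fintype ι] [DecidableEq ι] {lam : ℝ} (hlam : 0 < lam)
    {z s : ι → Bool} {Y Z s0 : ι → ℝ} (g : ι → ℝ)
    (hon : ∀ i, z i = true → Y i = lam * sgn (s i) + Z i)
    (hoff : ∀ i, z i = false → |Y i| ≤ lam / 2)
    (hs : ∀ i, |s0 i| = sgn (s i) * s0 i) (hz : ∀ i, z i = false → s0 i = 0) :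
    Y ⬝ᵥ g - l2 Z * l2 g + lam / 2 * l2 (g - maskM z *ᵥ g)
      ≤ lam * (∑ i, |s0 i + g i| - ∑ i, |s0 i|) := by
  have h1 : ∀ i, Y i * g i - |Z i| * |g i| + lam / 2 * |(g - maskM z *ᵥ g) i|
      ≤ lam * (|s0 i + g i| - |s0 i|) := by
    intro i
    rw [Pi.sub_apply, maskM_mulVec]
    have hZ : -(|Z i| * |g i|) ≤ 0 := by have := abs_nonneg (Z i); have := abs_nonneg (g i); nlinarith
    cases hb : z i with
    | true =>
      have h2 : sgn (s i) * (s0 i + g i) ≤ |s0 i + g i| := by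
        refine (le_abs_self _).trans ?_
        rw [abs_mul, abs_sgn, one_mul]
      have h3 : Z i * g i ≤ |Z i| * |g i| := by rw [← abs_mul]; exact le_abs_self _
      rw [hon i hb, hs i]
      have h4 := mul_le_mul_of_nonneg_left h2 hlam.le
      simp only [if_true, sub_self, abs_zero, mul_zero, add_zero]
      nlinarith
    | false =>
      have h2 : Y i * g i ≤ lam / 2 * |g i| := by
        refine (le_abs_self _).trans ?_
        rw [abs_mul]
        exact mul_le_mul_of_nonneg_right (hoff i hb) (abs_nonneg _)
      rw [hz i hb]
      simp only [Bool.false_eq_true, if_false, sub_zero, abs_zero, zero_add]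
      linarith
  have h2 := Finset.sum_le_sum fun i (_ : i ∈ Finset.univ) => h1 i
  rw [← Finset.mul_sum, Finset.sum_sub_distrib, Finset.sum_add_distrib, Finset.sum_sub_distrib,
    ← Finset.mul_sum] at h2
  have h3 := dotProduct_le_l2 (fun i => |Z i|) (fun i => |g i|)
  have e : ∀ v : ι → ℝ, l2 (fun i => |v i|) = l2 v := fun v => by simp [l2, dotProduct]
  rw [e, e] at h3
  have h4 := mul_le_mul_of_nonneg_left (l2_le_sum_abs (g - maskM z *ᵥ g)) (half_pos hlam).le
  simp only [dotProduct] at h3 ⊢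
  linarith

lemma recovery_arith {t N zn a b p G H k : ℝ} (ht : 100 ≤ t) (hN : 100 ≤ N) (hzn : 0 ≤ zn)
    (ha : 0 ≤ a) (hb : 0 ≤ b) (hp : 0 ≤ p) (hG : 0 ≤ G) (hH : 0 ≤ H)
    (hk : k = N * zn)
    (h1 : t * a + b ≤ 604 / 100 * k + 2 / 100 * G)
    (h2 : 3 / 4 * p ^ 2 ≤ (2 * zn + a + b) ^ 2)
    (h3 : H ≤ p + a) (h4 : G ≤ 2 * zn + H) :
    H ^ 2 + G ^ 2 ≤ 720 * k ^ 2 := by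
  have hkz : 100 * zn ≤ k := by rw [hk]; exact mul_le_mul_of_nonneg_right hN hzn
  have hta : 100 * a ≤ t * a := mul_le_mul_of_nonneg_right ht ha
  have hp' : p ≤ 116 / 100 * (2 * zn + a + b) := by
    refine abs_le_of_sq_le_sq' ?_ (by positivity) |>.2
    nlinarith
  have hG' : G ≤ 73 / 10 * k := by linarith
  have hH' : H ≤ 73 / 10 * k := by linarith
  have hk0 : 0 ≤ k := by linarith
  nlinarith

lemma l2_sub_mask_le {ι : Type*} [Fintype ι] [DecidableEq ι] (z : ι → Bool) (v : ι → ℝ) :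
    l2 (v - maskM z *ᵥ v) ≤ l2 v := by
  refine Real.sqrt_le_sqrt (Finset.sum_le_sum fun i _ => ?_)
  rw [Pi.sub_apply, maskM_mulVec]
  split_ifs <;> nlinarith [mul_self_nonneg (v i)]

lemma compress_gap {ι : Type*} [Fintype ι] [DecidableEq ι] {P : Matrix ι ι ℝ} (hP : Pᵀ = P)
    {z : ι → Bool} (hz : ∀ x, x ⬝ᵥ ((P * maskM z * P) *ᵥ x) ≤ 1 / 4 * (x ⬝ᵥ x))
    {w : ι → ℝ} (hw : P *ᵥ w = w) : 3 / 4 * l2 w ^ 2 ≤ l2 (w - maskM z *ᵥ w) ^ 2 := by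
  have h1 : (maskM z *ᵥ w) ⬝ᵥ (maskM z *ᵥ w) ≤ 1 / 4 * (w ⬝ᵥ w) := by
    have := mask_proj_le hP hz w
    rwa [hw] at this
  have h2 : (maskM z *ᵥ w) ⬝ᵥ w = (maskM z *ᵥ w) ⬝ᵥ (maskM z *ᵥ w) := by
    rw [dotProduct_mulVec_symm (maskM_transpose z) (maskM z *ᵥ w), Matrix.mulVec_mulVec,
      maskM_mul_self]
  rw [l2_sq, l2_sq, dotProduct_sub, sub_dotProduct, sub_dotProduct,
    dotProduct_comm w (maskM z *ᵥ w), h2]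
  linarith

set_option maxHeartbeats 1000000 in
/-- A dual certificate implies recovery with the stated error. -/
theorem recovery_of_dualCert {U : Matrix (Fin n1) (Fin r) ℝ} {V : Matrix (Fin n2) (Fin r) ℝ}
    {σ : Fin r → ℝ} (hU : Uᵀ * U = 1) (hV : Vᵀ * V = 1) (hσ : ∀ k, 0 < σ k)
    {z s : Fin n1 × Fin n2 → Bool} (hcert : DualCert U V z s) (hn1 : 10000 ≤ n1) (hn2 : 0 < n2)
    {S0 : Matrix (Fin n1) (Fin n2) ℝ}
    (hs : ∀ p, |vecM S0 p| = sgn (s p) * vecM S0 p) (hz : ∀ p, z p = false → vecM S0 p = 0)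
    {δ : ℝ} {Z0 : Matrix (Fin n1) (Fin n2) ℝ} (hδ : 0 ≤ δ) (hδZ : δ ≤ frob Z0)
    {Lh Sh : Matrix (Fin n1) (Fin n2) ℝ}
    (hmin : IsStablePCPMin (U * Matrix.diagonal σ * Vᵀ + S0 + Z0) (Real.sqrt n1)⁻¹ δ Lh Sh) :
    pairDist Lh Sh (U * Matrix.diagonal σ * Vᵀ) S0
      ≤ Real.sqrt (720 * (n1 : ℝ) * n2 + 2) * frob Z0 := by
  obtain ⟨Y, Z, hPY, hQY, hon, hoff, hZ, hcomp⟩ := hcert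
  obtain ⟨hfeas, hopt⟩ := hmin
  set L0 := U * Matrix.diagonal σ * Vᵀ with hL0
  set P := tproj U V with hP
  have hPt : Pᵀ = P := tproj_transpose U V
  have hPP : P * P = P := tproj_mul_self hU hV
  set t := Real.sqrt n1 with ht
  have hn1' : (10000 : ℝ) ≤ n1 := by exact_mod_cast hn1
  have ht100 : 100 ≤ t := by
    rw [ht]; exact Real.le_sqrt_of_sq_le (by linarith)
  have ht0 : 0 < t := by linarith
  set lam := t⁻¹ with hlam
  have hlam0 : 0 < lam := inv_pos.mpr ht0
  set zn := frob Z0 with hzn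
  have hzn0 : 0 ≤ zn := Real.sqrt_nonneg _
  set h := vecM (Lh - L0) with hh
  set g := vecM (Sh - S0) with hg
  set N := Real.sqrt (Fintype.card (Fin n1 × Fin n2)) with hN
  have hN2 : N ^ 2 = n1 * n2 := by
    rw [hN, Real.sq_sqrt (Nat.cast_nonneg _)]; simp
  have hN0 : 0 ≤ N := Real.sqrt_nonneg _
  have hN100 : 100 ≤ N := by
    have : (1 : ℝ) ≤ n2 := by exact_mod_cast hn2
    refine abs_le_of_sq_le_sq' ?_ hN0 |>.2
    rw [hN2]; nlinarith
  have hsum : l2 (h + g) ≤ 2 * zn := by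
    have e : h + g = vecM (Lh + Sh - (L0 + S0 + Z0)) + vecM Z0 := by
      funext p; simp only [hh, hg, vecM, Pi.add_apply, Matrix.sub_apply, Matrix.add_apply]; ring
    rw [e]
    refine (l2_add_le _ _).trans ?_
    rw [← frob_eq_l2, ← frob_eq_l2]
    linarith
  have hcompet : nuc Lh + lam * l1norm Sh ≤ ∑ k, σ k + lam * (∑ p, |vecM S0 p| + N * zn) := by
    have h1 := hopt L0 (S0 + Z0) (by
      have : L0 + (S0 + Z0) - (L0 + S0 + Z0) = 0 := by abel
      rw [this]
      simpa [frob] using hδ)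
    refine h1.trans (add_le_add (nuc_svd_le hU hV hσ) (mul_le_mul_of_nonneg_left ?_ hlam0.le))
    rw [l1norm_eq, hzn, frob_eq_l2]
    refine le_trans ?_ (add_le_add_right (sum_abs_le_l2 (vecM Z0)) _)
    rw [← Finset.sum_add_distrib]
    exact Finset.sum_le_sum fun p _ => abs_add_le _ _
  have hnuc := nuc_lower (σ := σ) hU hV hPY hQY Lh
  have hl1 := l1_lower hlam0 g hon hoff hs hz
  have hSh : ∑ p, |vecM S0 p + g p| = l1norm Sh := by
    rw [l1norm_eq]
    exact Finset.sum_congr rfl fun p _ => by simp [hg, vecM]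
  rw [hSh] at hl1
  rw [← hL0, ← hP, ← hh] at hnuc
  set Q := 1 - P with hQ
  set a := l2 (Q *ᵥ h) with ha
  set b := l2 (g - maskM z *ᵥ g) with hb
  have hYabs : ∀ p, |Y p| ≤ 101 / 100 * lam := by
    intro p
    cases hzp : z p with
    | true =>
      rw [hon p hzp]
      refine (abs_add_le _ _).trans ?_
      rw [abs_mul, abs_sgn, abs_of_pos hlam0]
      have := abs_le_l2 Z p
      linarith
    | false => have := hoff p hzp; linarith
  have hY := l2_le_of_abs_le (by positivity) hYabs
  rw [← hN] at hY
  have hYhg : -(2 * zn * (N * (101 / 100 * lam))) ≤ Y ⬝ᵥ h + Y ⬝ᵥ g := by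
    have h1 := dotProduct_le_l2 (-Y) (h + g)
    have e1 : l2 (-Y) = l2 Y := by simp [l2]
    rw [e1, neg_dotProduct, dotProduct_add] at h1
    have h2 : l2 Y * l2 (h + g) ≤ N * (101 / 100 * lam) * (2 * zn) :=
      mul_le_mul hY hsum (l2_nonneg _) (by positivity)
    linarith
  have hmain : t * a + b ≤ 604 / 100 * (N * zn) + 2 / 100 * l2 g := by
    have hZg := mul_le_mul_of_nonneg_right hZ (l2_nonneg g)
    have h1 : a / 2 + lam / 2 * b ≤ lam * (N * zn) + 2 * zn * (N * (101 / 100 * lam))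
        + lam / 100 * l2 g := by linarith
    have h2 := mul_le_mul_of_nonneg_left h1 (by linarith : 0 ≤ 2 * t)
    have e : t * lam = 1 := mul_inv_cancel₀ ht0.ne'
    have e1 : 2 * t * (a / 2 + lam / 2 * b) = t * a + (t * lam) * b := by ring
    have e2 : 2 * t * (lam * (N * zn) + 2 * zn * (N * (101 / 100 * lam)) + lam / 100 * l2 g)
        = (t * lam) * (604 / 100 * (N * zn) + 2 / 100 * l2 g) := by ring
    rw [e1, e2, e, one_mul, one_mul] at h2
    exact h2
  have hPh : 3 / 4 * l2 (P *ᵥ h) ^ 2 ≤ (2 * zn + a + b) ^ 2 := by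
    set w := P *ᵥ h with hw
    have hPw : P *ᵥ w = w := by rw [hw, Matrix.mulVec_mulVec, hPP]
    have h3 := compress_gap hPt hcomp hPw
    have e : w - maskM z *ᵥ w = ((h + g) - maskM z *ᵥ (h + g))
        - (Q *ᵥ h - maskM z *ᵥ (Q *ᵥ h)) - (g - maskM z *ᵥ g) := by
      have : w = h - Q *ᵥ h := by
        rw [hQ, Matrix.sub_mulVec, Matrix.one_mulVec, sub_sub_cancel]
      rw [this, Matrix.mulVec_add, Matrix.mulVec_sub]
      abel
    have h4 : l2 (w - maskM z *ᵥ w) ≤ 2 * zn + a + b := by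
      rw [e]
      refine (l2_sub_le _ _).trans (add_le_add ((l2_sub_le _ _).trans (add_le_add ?_ ?_)) le_rfl)
      · exact (l2_sub_mask_le z _).trans hsum
      · exact l2_sub_mask_le z _
    exact h3.trans (pow_le_pow_left₀ (l2_nonneg _) h4 2)
  have hH : l2 h ≤ l2 (P *ᵥ h) + a := by
    have : h = P *ᵥ h + Q *ᵥ h := by rw [hQ, Matrix.sub_mulVec, Matrix.one_mulVec]; abel
    conv_lhs => rw [this]
    exact l2_add_le _ _
  have hG : l2 g ≤ 2 * zn + l2 h := by
    have : g = (h + g) - h := by abel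
    conv_lhs => rw [this]
    exact (l2_sub_le _ _).trans (by linarith)
  have hfin := recovery_arith ht100 hN100 hzn0 (l2_nonneg _) (l2_nonneg _) (l2_nonneg _)
    (l2_nonneg g) (l2_nonneg h) rfl hmain hPh hH hG
  rw [pairDist, frob_eq_l2, frob_eq_l2, ← hh, ← hg]
  refine Real.sqrt_le_iff.mpr ⟨by positivity, ?_⟩
  rw [mul_pow, Real.sq_sqrt (by positivity)]
  rw [mul_pow, hN2] at hfin
  nlinarith [sq_nonneg zn]

end Deterministic

section Transfer

set_option linter.unusedSectionVars false

variable {ι : Type*} [Fintype ι] [DecidableEq ι]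

open scoped FinsetFamily

open Classical in
/-- The proportion of `k`-element subsets satisfying a property. -/
noncomputable def levelFrac (E : Finset ι → Prop) (k : ℕ) : ℝ :=
  (((Finset.univ.powersetCard k).filter E).card : ℝ) / (Fintype.card ι).choose k

lemma levelFrac_antitone {E : Finset ι → Prop} (hE : ∀ A B, A ⊆ B → E B → E A) :
    Antitone (levelFrac E) := by
  classical
  refine antitone_nat_of_succ_le fun k => ?_
  set 𝒜 := (Finset.univ.powersetCard (k + 1)).filter E with h𝒜
  have hsized : (𝒜 : Set (Finset ι)).Sized (k + 1) := by
    intro A hA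
    have := Finset.mem_coe.mp hA
    rw [h𝒜, Finset.mem_filter, Finset.mem_powersetCard] at this
    exact this.1.2
  have h := Finset.local_lubell_yamamoto_meshalkin_inequality_div (𝕜 := ℝ) k.succ_ne_zero hsized
  rw [levelFrac, levelFrac]
  refine le_trans (le_of_eq ?_) (h.trans ?_)
  · rw [h𝒜]
  · rw [Nat.succ_eq_add_one, Nat.add_sub_cancel]
    refine div_le_div_of_nonneg_right ?_ (Nat.cast_nonneg _)
    norm_cast
    refine Finset.card_le_card fun B hB => ?_
    obtain ⟨A, hA, x, hx, rfl⟩ := Finset.mem_shadow_iff.mp hB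
    have hA' := hA
    rw [h𝒜, Finset.mem_filter, Finset.mem_powersetCard] at hA'
    rw [Finset.mem_filter, Finset.mem_powersetCard]
    refine ⟨⟨Finset.subset_univ _, ?_⟩, hE _ _ (Finset.erase_subset _ _) hA'.2⟩
    rw [Finset.card_erase_of_mem hx, hA'.1.2, Nat.add_sub_cancel]

/-- The set of coordinates at which a Boolean vector is true. -/
def trueSet (z : ι → Bool) : Finset ι := Finset.univ.filter fun i => z i = true

lemma bernWeight_eq (q : ℝ) (z : ι → Bool) :
    bernWeight q z = q ^ (trueSet z).card * (1 - q) ^ (Fintype.card ι - (trueSet z).card) := by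
  rw [bernWeight, Finset.prod_ite, Finset.prod_const, Finset.prod_const, trueSet,
    ← Finset.card_compl]
  congr 3
  ext i; simp

lemma sum_trueSet (f : Finset ι → ℝ) : ∑ z : ι → Bool, f (trueSet z) = ∑ A, f A := by
  refine Finset.sum_bij' (fun z _ => trueSet z) (fun A _ i => decide (i ∈ A)) (by simp) (by simp)
    ?_ ?_ (by simp)
  · intro z _; funext i; simp [trueSet]
  · intro A _; ext i; simp [trueSet]

lemma sum_level (h : ℕ → ℝ) (f : Finset ι → ℝ) :
    ∑ A, h A.card * f A = ∑ k ∈ Finset.range (Fintype.card ι + 1),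
      h k * ∑ A ∈ Finset.univ.powersetCard k, f A := by
  rw [← Finset.powerset_univ, Finset.sum_powerset, Finset.card_univ]
  refine Finset.sum_congr rfl fun k _ => ?_
  rw [Finset.mul_sum]
  refine Finset.sum_congr rfl fun A hA => ?_
  rw [(Finset.mem_powersetCard.mp hA).2]

lemma sum_ind_not_level (E : Finset ι → Prop) {k : ℕ} (hk : k ≤ Fintype.card ι) :
    ∑ A ∈ Finset.univ.powersetCard k, ind (¬E A)
      = (1 - levelFrac E k) * (Fintype.card ι).choose k := by
  classical
  have h1 : ∑ A ∈ Finset.univ.powersetCard k, ind (E A)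
      = (((Finset.univ.powersetCard k).filter E).card : ℝ) := by
    rw [← Finset.sum_boole]
    refine Finset.sum_congr rfl fun A _ => ?_
    unfold ind; congr
  have h2 : ∀ A, ind (¬E A) = 1 - ind (E A) := by
    intro A
    by_cases h : E A
    · rw [ind_of h, ind_of_not (not_not.mpr h)]; ring
    · rw [ind_of_not h, ind_of h]; ring
  have h3 : (0 : ℝ) < (Fintype.card ι).choose k := by exact_mod_cast Nat.choose_pos hk
  simp_rw [h2]
  rw [Finset.sum_sub_distrib, h1, Finset.sum_const, Finset.card_powersetCard, Finset.card_univ,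
    nsmul_one, levelFrac, sub_mul, one_mul, div_mul_cancel₀ _ h3.ne']

/-- Comparison of the uniform model on `m`-subsets with the Bernoulli model. -/
lemma levelFrac_le_bernE {E : Finset ι → Prop} (hE : ∀ A B, A ⊆ B → E B → E A) {q : ℝ}
    (h0 : 0 ≤ q) (h1 : q ≤ 1) {m : ℕ} :
    (1 - levelFrac E m) * bernE q (fun z : ι → Bool => ind (m ≤ (trueSet z).card))
      ≤ bernE q (fun z => ind (¬E (trueSet z))) := by
  set h : ℕ → ℝ := fun k => q ^ k * (1 - q) ^ (Fintype.card ι - k) with hh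
  have hnn : ∀ k, 0 ≤ h k := fun k => mul_nonneg (pow_nonneg h0 _) (pow_nonneg (by linarith) _)
  have e : ∀ F : Finset ι → Prop, bernE q (fun z => ind (F (trueSet z)))
      = ∑ k ∈ Finset.range (Fintype.card ι + 1),
        h k * ∑ A ∈ Finset.univ.powersetCard k, ind (F A) := by
    intro F
    rw [← sum_level, ← sum_trueSet, bernE]
    exact Finset.sum_congr rfl fun z _ => by rw [bernWeight_eq]
  rw [e (fun A => m ≤ A.card), e (fun A => ¬E A), Finset.mul_sum]
  refine Finset.sum_le_sum fun k hk => ?_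
  have hk' : k ≤ Fintype.card ι := Nat.lt_succ_iff.mp (Finset.mem_range.mp hk)
  rw [mul_left_comm]
  refine mul_le_mul_of_nonneg_left ?_ (hnn k)
  have e2 : ∑ A ∈ (Finset.univ : Finset ι).powersetCard k, ind (m ≤ A.card)
      = ind (m ≤ k) * (Fintype.card ι).choose k := by
    rw [Finset.sum_congr rfl fun A hA => by rw [(Finset.mem_powersetCard.mp hA).2]]
    rw [Finset.sum_const, Finset.card_powersetCard, Finset.card_univ, nsmul_eq_mul, mul_comm]
  by_cases hmk : m ≤ k
  · rw [e2, ind_of hmk, one_mul, sum_ind_not_level E hk']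
    refine mul_le_mul_of_nonneg_right ?_ (Nat.cast_nonneg _)
    linarith [levelFrac_antitone hE hmk]
  · rw [e2, ind_of_not hmk, zero_mul, mul_zero]
    exact Finset.sum_nonneg fun _ _ => ind_nonneg _

lemma half_le_bernE_card {q : ℝ} (h0 : 0 ≤ q) (h1 : q ≤ 1) {m : ℕ}
    (hm : (m : ℝ) ≤ q * Fintype.card ι / 2) (hq : 10 ≤ q * Fintype.card ι) :
    1 / 2 ≤ bernE q (fun z : ι → Bool => ind (m ≤ (trueSet z).card)) := by
  set f : (ι → Bool) → ℝ := fun z => ∑ i, (if z i then (-1 : ℝ) else 0) with hf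
  have hfc : ∀ z, f z = -((trueSet z).card : ℝ) := by
    intro z
    simp only [hf, trueSet]
    rw [← Finset.sum_filter, Finset.sum_const]
    simp
  have he : Real.exp (-1) ≤ 3 / 8 := by
    have := Real.exp_neg_one_lt_d9; linarith
  have hmgf : bernE q (fun z : ι → Bool => Real.exp (1 * f z))
      ≤ Real.exp (∑ _i : ι, -(q * (5 / 8))) := by
    simp only [one_mul, hf]
    refine bernE_exp_sum_le h0 h1 (fun _ b => if b then (-1 : ℝ) else 0) _ fun i => ?_
    simp only [if_true, Bool.false_eq_true, if_false, Real.exp_zero]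
    have := Real.add_one_le_exp (-(q * (5 / 8)))
    nlinarith
  have hc := bernE_chernoff h0 h1 f (a := -(m : ℝ)) zero_le_one hmgf
  have hsmall : Real.exp (∑ _i : ι, -(q * (5 / 8)) - 1 * -(m : ℝ)) ≤ 1 / 2 := by
    have h2 : ∑ _i : ι, -(q * (5 / 8)) - 1 * -(m : ℝ) ≤ -1 := by
      rw [Finset.sum_const, Finset.card_univ, nsmul_eq_mul]
      nlinarith
    exact (Real.exp_le_exp.mpr h2).trans (by linarith)
  have h3 : bernE q (fun _ : ι → Bool => (1 : ℝ)) ≤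
      bernE q (fun z => ind (m ≤ (trueSet z).card) + ind (-(m : ℝ) < f z)) := by
    refine bernE_mono h0 h1 fun z => ?_
    by_cases h : m ≤ (trueSet z).card
    · rw [ind_of h]; linarith [ind_nonneg (-(m : ℝ) < f z)]
    · rw [ind_of_not h, ind_of, zero_add]
      rw [hfc]
      exact neg_lt_neg (by exact_mod_cast not_le.mp h)
  rw [bernE_one, bernE_add] at h3
  linarith

lemma bernE_half (f : (ι → Bool) → ℝ) :
    bernE (1 / 2) f = (∑ s, f s) / 2 ^ Fintype.card ι := by
  rw [bernE, Finset.sum_div]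
  refine Finset.sum_congr rfl fun s _ => ?_
  have : bernWeight (1 / 2) s = (1 / 2) ^ Fintype.card ι := by
    rw [bernWeight, Finset.prod_congr rfl fun i _ => (by split_ifs <;> norm_num :
      (if s i then (1 / 2 : ℝ) else 1 - 1 / 2) = 1 / 2), Finset.prod_const, Finset.card_univ]
  rw [this, one_div, inv_pow, div_eq_inv_mul]

/-- Transfer of failure probabilities from the Bernoulli model to the uniform model. -/
theorem unifProb_transfer {n1 n2 m : ℕ}
    {C : (Fin n1 × Fin n2 → Bool) → (Fin n1 × Fin n2 → Bool) → Prop} {q : ℝ}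
    (h0 : 0 ≤ q) (h1 : q ≤ 1) (hm : (m : ℝ) ≤ q * (n1 * n2) / 2) (hq : 10 ≤ q * (n1 * n2))
    {E : SampleSpace n1 n2 m → Prop}
    (hE : ∀ ω z, (∀ i ∈ ω.1.1, z i = true) → C z ω.2 → E ω) :
    1 - 2 * bernE q (fun z => bernE (1 / 2) fun s => ind (¬C z s)) ≤ unifProb E := by
  classical
  have hcard : (Fintype.card (Fin n1 × Fin n2) : ℝ) = n1 * n2 := by simp
  have hmN : m ≤ Fintype.card (Fin n1 × Fin n2) := by
    have : (m : ℝ) ≤ Fintype.card (Fin n1 × Fin n2) := by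
      rw [hcard]; have : (0 : ℝ) ≤ n1 * n2 := by positivity
      nlinarith
    exact_mod_cast this
  set G : (Fin n1 × Fin n2 → Bool) → Finset (Fin n1 × Fin n2) → Prop := fun s A => ∃ z, (∀ i ∈ A, z i = true) ∧ C z s with hG
  have hGdown : ∀ s A B, A ⊆ B → G s B → G s A := by
    rintro s A B hAB ⟨z, hz, hC⟩
    exact ⟨z, fun i hi => hz i (hAB hi), hC⟩
  have hfrac : ∀ s, 1 - levelFrac (G s) m ≤ 2 * bernE q (fun z => ind (¬C z s)) := by
    intro s
    have h2 := levelFrac_le_bernE (hGdown s) h0 h1 (m := m)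
    have h3 := half_le_bernE_card (ι := Fin n1 × Fin n2) h0 h1 (m := m) (by rw [hcard]; exact hm)
      (by rw [hcard]; exact hq)
    have h4 : bernE q (fun z => ind (¬G s (trueSet z))) ≤ bernE q (fun z => ind (¬C z s)) := by
      refine bernE_mono h0 h1 fun z => ind_mono fun h hC => h ⟨z, fun i hi => ?_, hC⟩
      simpa [trueSet] using hi
    have h5 : 0 ≤ bernE q (fun z => ind (¬C z s)) := bernE_nonneg h0 h1 fun _ => ind_nonneg _
    rcases le_or_gt (1 - levelFrac (G s) m) 0 with h6 | h6
    · linarith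
    · nlinarith
  have hchoose : (0 : ℝ) < (Fintype.card (Fin n1 × Fin n2)).choose m := by exact_mod_cast Nat.choose_pos hmN
  have hcount : ∑ s : Fin n1 × Fin n2 → Bool, levelFrac (G s) m * (Fintype.card (Fin n1 × Fin n2)).choose m
      ≤ ((Finset.univ.filter fun ω => E ω).card : ℝ) := by
    have e1 : ∀ s, levelFrac (G s) m * (Fintype.card (Fin n1 × Fin n2)).choose m
        = (((Finset.univ.powersetCard m).filter (G s)).card : ℝ) := by
      intro s
      rw [levelFrac, div_mul_cancel₀ _ hchoose.ne']
      congr!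
    simp_rw [e1]
    rw [← Nat.cast_sum, ← Finset.card_sigma, Nat.cast_le]
    refine Finset.card_le_card_of_injOn
      (fun x => if h : x.2.card = m then ((⟨x.2, h⟩, x.1) : SampleSpace n1 n2 m)
        else Classical.choice (α := SampleSpace n1 n2 m) ?_) ?_ ?_
    · obtain ⟨A, -, hA⟩ := Finset.exists_subset_card_eq (s := (Finset.univ : Finset (Fin n1 × Fin n2))) (n := m)
        (by rwa [Finset.card_univ])
      exact ⟨(⟨A, hA⟩, fun _ => true)⟩
    · rintro ⟨s, A⟩ hx
      have hx := Finset.mem_coe.mp hx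
      simp only [Finset.mem_sigma, Finset.mem_univ, true_and, Finset.mem_filter,
        Finset.mem_powersetCard] at hx
      obtain ⟨⟨-, hA⟩, z, hz, hC⟩ := hx
      simp only [hA, dif_pos, Finset.coe_filter, Finset.mem_univ, true_and, Set.mem_ofPred_eq]
      exact hE _ z hz hC
    · rintro ⟨s, A⟩ hx ⟨s', A'⟩ hx' heq
      have hx := Finset.mem_coe.mp hx
      have hx' := Finset.mem_coe.mp hx'
      simp only [Finset.mem_sigma, Finset.mem_univ, true_and, Finset.mem_filter,
        Finset.mem_powersetCard] at hx hx'
      simp only [hx.1.2, hx'.1.2, dif_pos, Prod.mk.injEq, Subtype.mk.injEq] at heq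
      rw [heq.1, heq.2]
  have htot : (Fintype.card (SampleSpace n1 n2 m) : ℝ)
      = (Fintype.card (Fin n1 × Fin n2)).choose m * 2 ^ Fintype.card (Fin n1 × Fin n2) := by
    rw [Fintype.card_prod, Fintype.card_finset_len, Fintype.card_fun, Fintype.card_bool]
    push_cast; rfl
  have hmain : 1 - 2 * bernE q (fun z => bernE (1 / 2) fun s => ind (¬C z s))
      ≤ (∑ s : Fin n1 × Fin n2 → Bool, levelFrac (G s) m) / 2 ^ Fintype.card (Fin n1 × Fin n2) := by
    have h2 : bernE (1 / 2) (fun s : Fin n1 × Fin n2 → Bool => 1 - 2 * bernE q (fun z => ind (¬C z s)))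
        ≤ bernE (1 / 2) (fun s : Fin n1 × Fin n2 → Bool => levelFrac (G s) m) :=
      bernE_mono (by norm_num) (by norm_num) fun s => by linarith [hfrac s]
    rw [bernE_half (fun s : Fin n1 × Fin n2 → Bool => levelFrac (G s) m)] at h2
    refine le_trans (le_of_eq ?_) h2
    rw [bernE_comm]
    have h3 := bernE_add (1 / 2) (fun _ : Fin n1 × Fin n2 → Bool => (1 : ℝ))
      (fun s => -2 * bernE q (fun z => ind (¬C z s)))
    rw [bernE_one, bernE_mul_left] at h3
    rw [sub_eq_add_neg, ← neg_mul, ← h3]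
    congr 1; funext s; ring
  refine hmain.trans ?_
  rw [unifProb, htot, div_le_div_iff₀ (by positivity) (by positivity)]
  rw [← Finset.sum_mul] at hcount
  have h2 : (0 : ℝ) < 2 ^ Fintype.card (Fin n1 × Fin n2) := by positivity
  calc (∑ s : Fin n1 × Fin n2 → Bool, levelFrac (G s) m) * ((Fintype.card (Fin n1 × Fin n2)).choose m * 2 ^ Fintype.card (Fin n1 × Fin n2))
      = ((∑ s : Fin n1 × Fin n2 → Bool, levelFrac (G s) m) * (Fintype.card (Fin n1 × Fin n2)).choose m) * 2 ^ Fintype.card (Fin n1 × Fin n2) := by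
        ring
    _ ≤ _ := by
        refine mul_le_mul_of_nonneg_right (hcount.trans (le_of_eq ?_)) h2.le
        congr!

end Transfer

section Assembly

variable {n1 n2 r : ℕ} {U : Matrix (Fin n1) (Fin r) ℝ} {V : Matrix (Fin n2) (Fin r) ℝ}

/-- The golfing and sign certificates combine to a dual certificate. -/
lemma dualCert_of_golfed (hn1 : 0 < n1) (hn2 : 0 < n2) {q ε η : ℝ} {k : ℕ} (h0 : 0 < q)
    (hη : 208 * η ≤ q)
    (hk : Real.sqrt (n1 * n2) * (ε ^ k * η) ≤ 1 / 100)
    {z s : Fin n1 × Fin n2 → Bool}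
    (hgolf : Golfed (tproj U V) q ε k (η * (Real.sqrt n1)⁻¹) (uvVec U V) z)
    (hsign : SignCert (tproj U V) z s)
    (hcomp : ¬∃ x, 1 / 1000 * (x ⬝ᵥ x)
      < x ⬝ᵥ ((tproj U V * maskM z * tproj U V) *ᵥ x)) : DualCert U V z s := by
  obtain ⟨Y, Z, hYz, hPZ, hPY, hZ, hYspec, hY⟩ := hgolf
  obtain ⟨W, hPW, hWon, hWoff, hWspec⟩ := hsign
  have hn1' : (1 : ℝ) ≤ n1 := by exact_mod_cast hn1
  have hn2' : (1 : ℝ) ≤ n2 := by exact_mod_cast hn2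
  have ht : 0 < Real.sqrt n1 := Real.sqrt_pos.mpr (by linarith)
  set t := Real.sqrt n1 with htdef
  have hl : 0 < t⁻¹ := inv_pos.mpr ht
  have hηq : η / q ≤ 1 / 208 := by rw [div_le_iff₀ h0]; linarith
  have hZl2 : l2 Z ≤ t⁻¹ / 100 := by
    have hnn : 0 ≤ ε ^ k * (η * t⁻¹) :=
      (abs_nonneg _).trans (hZ (⟨0, hn1⟩, ⟨0, hn2⟩))
    refine (l2_le_of_abs_le hnn hZ).trans ?_
    have e : (Fintype.card (Fin n1 × Fin n2) : ℝ) = n1 * n2 := by simp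
    rw [e]
    calc Real.sqrt (n1 * n2) * (ε ^ k * (η * t⁻¹))
        = Real.sqrt (n1 * n2) * (ε ^ k * η) * t⁻¹ := by ring
      _ ≤ 1 / 100 * t⁻¹ := mul_le_mul_of_nonneg_right hk hl.le
      _ = t⁻¹ / 100 := by ring
  refine ⟨Y + Z + t⁻¹ • W, Z, ?_, ?_, ?_, ?_, hZl2, ?_⟩
  · rw [Matrix.mulVec_add, Matrix.mulVec_add, Matrix.mulVec_smul, hPW, hPZ, hPY]
    simp
  · have e : (1 - tproj U V) *ᵥ (Y + Z + t⁻¹ • W) = (1 - tproj U V) *ᵥ Y + t⁻¹ • W := by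
      rw [Matrix.mulVec_add, Matrix.mulVec_add, Matrix.mulVec_smul, Matrix.sub_mulVec _ _ Z,
        Matrix.sub_mulVec _ _ W, hPW, hPZ, Matrix.one_mulVec, Matrix.one_mulVec]
      simp
    rw [e]
    refine (hYspec.add (hWspec.smul hl.le)).mono ?_
    have e1 : 52 * t / q * (η * t⁻¹) = 52 * (η / q) := by field_simp
    have e2 : t⁻¹ * (t / 8) = 1 / 8 := by field_simp
    rw [e1, e2]; linarith
  · intro i hi
    simp only [Pi.add_apply, Pi.smul_apply, smul_eq_mul, hYz i hi, hWon i hi]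
    ring
  · intro i hi
    have h1 := hY i
    have h2 := (abs_le_l2 Z i).trans hZl2
    have h3 := hWoff i hi
    have e1 : 2 / q * (η * t⁻¹) = 2 * (η / q) * t⁻¹ := by ring
    have h4 : 2 * (η / q) * t⁻¹ ≤ 2 * (1 / 208) * t⁻¹ := by
      refine mul_le_mul_of_nonneg_right ?_ hl.le; linarith
    have h5 : |(t⁻¹ • W) i| ≤ t⁻¹ * (1 / 4) := by
      rw [Pi.smul_apply, smul_eq_mul, abs_mul, abs_of_pos hl]
      exact mul_le_mul_of_nonneg_left h3 hl.le
    have h6 : |(Y + Z + t⁻¹ • W) i| ≤ |Y i| + |Z i| + |(t⁻¹ • W) i| := abs_add_three _ _ _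
    rw [e1] at h1
    linarith
  · intro x
    have h1 := not_lt.mp fun h => hcomp ⟨x, h⟩
    have h2 := dotProduct_self_nonneg' x
    linarith

lemma dualCert_tail (hn1 : 0 < n1) (hn2 : 0 < n2) (hn : n2 ≤ n1) (hU : Uᵀ * U = 1)
    (hV : Vᵀ * V = 1) {μ : ℝ} (hμ0 : 0 < μ) (hμ1 : μ ≤ 1) (hμ : ∀ p, tproj U V p p ≤ μ)
    {q ε η : ℝ} {k K : ℕ} (h0 : 0 < q) (h1 : q ≤ 1) (hε : 0 < ε) (hε2 : ε ≤ 1 / 2) (hη0 : 0 < η)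
    (hη : 208 * η ≤ q) (hk : Real.sqrt (n1 * n2) * (ε ^ k * η) ≤ 1 / 100)
    (hinf : ∀ p, |uvVec U V p| ≤ η * (Real.sqrt n1)⁻¹)
    (hρ : (1 - q) ^ k * Real.exp 151552 ≤ 1 / 75776) (hK : 0 < K)
    (hγ1 : 4 * (1 - q) ^ k ≤ Real.exp (-1) / 1000)
    (hγ2 : (K + 1) * μ ≤ Real.exp (-1) / 1000) :
    bernE ((1 - q) ^ k) (fun z => bernE (1 / 2) fun s => ind (¬DualCert U V z s))
      ≤ k * (2 * (n1 * n2) * Real.exp (-(q * ε ^ 2 / (4 * μ))) + Real.exp (-(6 * n1)))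
        + 2 * (n1 * n2 * Real.exp (-K))
        + (2 * Real.exp (-n1) + 2 * (n1 * n2) * Real.exp (-(1 / (128 * μ)))) := by
  have hP := tproj_transpose U V
  have hPP := tproj_mul_self hU hV
  have hspec := specLE_tperp hU hV
  set P := tproj U V with hPdef
  set ρ := (1 - q) ^ k with hρdef
  have hρ0 : 0 ≤ ρ := pow_nonneg (by linarith) _
  have hρ1 : ρ ≤ 1 := pow_le_one₀ (by linarith) (by linarith)
  have ht : 0 < Real.sqrt n1 := Real.sqrt_pos.mpr (by exact_mod_cast hn1)
  have hgolf := golfed_tail hn hP hPP hμ0 hμ hspec h0 h1 hε hε2 k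
    (M := η * (Real.sqrt n1)⁻¹) (by positivity) (tproj_uvVec V hU) hinf
  have hsign := signCert_tail hn hP hPP hμ0 hμ hspec hρ0 hρ1 hρ
  have hcomp := bernE_compress_tail hP hPP hK hμ hρ0 hρ1 hγ1 hμ0.le hγ2
    (by norm_num : (0 : ℝ) < 1 / 1000)
  have htrace : P.trace ≤ n1 * n2 := by
    have : P.trace ≤ ∑ _p : Fin n1 × Fin n2, (1 : ℝ) :=
      Finset.sum_le_sum fun p _ => (hμ p).trans hμ1
    simpa using this
  have hpow : (Real.exp (-1) / 1000 / (1 / 1000)) ^ K = Real.exp (-K) := by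
    rw [div_div, mul_one_div_cancel (by norm_num), div_one, ← Real.exp_nat_mul]
    congr 1; ring
  rw [hpow] at hcomp
  have hcomp' := hcomp.trans (mul_le_mul_of_nonneg_right htrace (Real.exp_pos _).le)
  have hpt : ∀ z s, ind (¬DualCert U V z s)
      ≤ (ind (¬Golfed P q ε k (η * (Real.sqrt n1)⁻¹) (uvVec U V) z)
        + ind (∃ x, 1 / 1000 * (x ⬝ᵥ x) < x ⬝ᵥ ((P * maskM z * P) *ᵥ x)))
        + ind (¬SignCert P z s) := by
    intro z s
    refine (ind_mono (p' := (¬Golfed P q ε k (η * (Real.sqrt n1)⁻¹) (uvVec U V) z ∨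
      ∃ x, 1 / 1000 * (x ⬝ᵥ x) < x ⬝ᵥ ((P * maskM z * P) *ᵥ x)) ∨ ¬SignCert P z s) ?_).trans
      ((ind_or_le _ _).trans (add_le_add (ind_or_le _ _) le_rfl))
    intro h
    by_contra hcon
    push Not at hcon
    exact h (dualCert_of_golfed hn1 hn2 h0 hη hk hcon.1.1 hcon.2
      (by push Not; exact hcon.1.2))
  have hsum : bernE ρ (fun z => bernE (1 / 2) fun s => ind (¬DualCert U V z s))
      ≤ bernE ρ (fun z => ind (¬Golfed P q ε k (η * (Real.sqrt n1)⁻¹) (uvVec U V) z))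
        + bernE ρ (fun z => ind (∃ x, 1 / 1000 * (x ⬝ᵥ x) < x ⬝ᵥ ((P * maskM z * P) *ᵥ x)))
        + bernE ρ (fun z => bernE (1 / 2) fun s => ind (¬SignCert P z s)) := by
    rw [← bernE_add, ← bernE_add]
    refine bernE_mono hρ0 hρ1 fun z => ?_
    refine (bernE_mono (by norm_num) (by norm_num) (hpt z)).trans (le_of_eq ?_)
    rw [bernE_add, bernE_const]
  linarith

/-- Numerical facts about the parameters of the golfing scheme. -/
lemma golfing_params {ℓ : ℝ} (hℓ : 1000000 ≤ ℓ) {k : ℕ} (hk : k = ⌈2 * ℓ⌉₊) {q : ℝ}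
    (hq : q = 303104 / k) :
    2 * ℓ ≤ k ∧ (k : ℝ) ≤ 3 * ℓ ∧ 0 < q ∧ q ≤ 1 / 2 ∧ Real.exp (-606208) ≤ (1 - q) ^ k ∧
      (1 - q) ^ k ≤ Real.exp (-303104) := by
  have h1 : 2 * ℓ ≤ k := by rw [hk]; exact Nat.le_ceil _
  have h2 : (k : ℝ) ≤ 3 * ℓ := by
    have := Nat.ceil_lt_add_one (by linarith : 0 ≤ 2 * ℓ)
    rw [hk]; linarith
  have hk0 : (0 : ℝ) < k := by linarith
  have hq0 : 0 < q := by rw [hq]; positivity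
  have hq2 : q ≤ 1 / 2 := by rw [hq, div_le_iff₀ hk0]; linarith
  have hqk : k * q = 303104 := by rw [hq]; field_simp
  refine ⟨h1, h2, hq0, hq2, ?_, ?_⟩
  · have h3 : Real.exp (-(2 * q)) ≤ 1 - q := by
      have h4 : (1 - q)⁻¹ ≤ Real.exp (2 * q) := by
        refine le_trans ?_ (Real.add_one_le_exp _)
        rw [inv_le_iff_one_le_mul₀ (by linarith)]
        nlinarith
      rw [Real.exp_neg]
      exact inv_le_of_inv_le₀ (by linarith) h4
    have h5 := pow_le_pow_left₀ (Real.exp_pos _).le h3 k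
    rw [← Real.exp_nat_mul] at h5
    refine le_trans (le_of_eq ?_) h5
    congr 1; linarith
  · have h3 : 1 - q ≤ Real.exp (-q) := by have := Real.add_one_le_exp (-q); linarith
    have h5 := pow_le_pow_left₀ (by linarith) h3 k
    rw [← Real.exp_nat_mul] at h5
    refine h5.trans (le_of_eq ?_)
    congr 1; linarith

lemma exp_neg_le_inv {a : ℝ} (ha : 0 < a) : Real.exp (-a) ≤ 1 / a := by
  rw [Real.exp_neg, inv_eq_one_div]
  exact one_div_le_one_div_of_le ha (by linarith [Real.add_one_le_exp a])

end Assembly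

section LargeDimension

/-- The failure terms of the certificate construction, in terms of the logarithm of `n1`. -/
lemma failure_sum_le {x w ℓ a b d : ℝ} {k K : ℕ} (hx : 0 < x) (hℓ : ℓ = Real.log x)
    (hℓ6 : 1000000 ≤ ℓ) (hw0 : 0 ≤ w) (hwx : w ≤ x) (hk : (k : ℝ) ≤ 3 * ℓ)
    (hK : 13 * ℓ ≤ K) (ha : 13 * ℓ ≤ a) (hb : 12 * ℓ ≤ b) (hd : d = 6 * x) :
    k * (2 * (x * w) * Real.exp (-a) + Real.exp (-d)) + 2 * (x * w * Real.exp (-K))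
      + (2 * Real.exp (-x) + 2 * (x * w) * Real.exp (-b)) ≤ 9 * (x ^ 10)⁻¹ := by
  have hexp : Real.exp ℓ = x := by rw [hℓ, Real.exp_log hx]
  have hxℓ : 11 * ℓ ≤ x := by
    have := Real.quadratic_le_exp_of_nonneg (by linarith : 0 ≤ ℓ)
    rw [hexp] at this
    nlinarith
  have hx1 : 1 ≤ x := by linarith
  have hy : ∀ j : ℕ, Real.exp (-(j * ℓ)) = (x ^ j)⁻¹ := by
    intro j; rw [Real.exp_neg, Real.exp_nat_mul, hexp]
  have hmono : ∀ (j : ℕ) {c : ℝ}, j * ℓ ≤ c → Real.exp (-c) ≤ (x ^ j)⁻¹ := by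
    intro j c h; rw [← hy]; exact Real.exp_le_exp.mpr (by linarith)
  have e1 := hmono 13 (c := a) (by exact_mod_cast ha)
  have e2 := hmono 11 (c := d) (by push_cast; linarith)
  have e3 := hmono 13 (c := K) (by exact_mod_cast hK)
  have e4 := hmono 10 (c := x) (by push_cast; linarith)
  have e5 := hmono 12 (c := b) (by exact_mod_cast hb)
  have hkx : (k : ℝ) ≤ x := by linarith
  have hxw : x * w ≤ x ^ 2 := by nlinarith
  have hxw0 : 0 ≤ x * w := by positivity
  have f1 : k * (2 * (x * w) * Real.exp (-a)) ≤ x * (2 * x ^ 2 * (x ^ 13)⁻¹) := by gcongr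
  have f2 : k * Real.exp (-d) ≤ x * (x ^ 11)⁻¹ := by gcongr
  have f3 : x * w * Real.exp (-K) ≤ x ^ 2 * (x ^ 13)⁻¹ := by gcongr
  have f5 : 2 * (x * w) * Real.exp (-b) ≤ 2 * x ^ 2 * (x ^ 12)⁻¹ := by gcongr
  have g1 : x * (2 * x ^ 2 * (x ^ 13)⁻¹) = 2 * (x ^ 10)⁻¹ := by field_simp
  have g2 : x * (x ^ 11)⁻¹ = (x ^ 10)⁻¹ := by field_simp
  have g3 : x ^ 2 * (x ^ 13)⁻¹ ≤ (x ^ 10)⁻¹ := by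
    have : x ^ 2 * (x ^ 13)⁻¹ = (x ^ 11)⁻¹ := by field_simp
    rw [this]
    exact inv_anti₀ (by positivity) (pow_le_pow_right₀ hx1 (by norm_num))
  have g5 : 2 * x ^ 2 * (x ^ 12)⁻¹ = 2 * (x ^ 10)⁻¹ := by field_simp
  rw [mul_add]
  linarith

variable {n1 n2 r : ℕ} {U : Matrix (Fin n1) (Fin r) ℝ} {V : Matrix (Fin n2) (Fin r) ℝ}

set_option maxHeartbeats 1000000 in
lemma dualCert_failure_le (hn2 : 0 < n2) (hn : n2 ≤ n1) (hU : Uᵀ * U = 1) (hV : Vᵀ * V = 1)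
    {ν : ℝ} (hν : 0 < ν)
    (hUi : ∀ i : Fin n1, (∑ k, U i k ^ 2) ≤ ν * r / n1)
    (hVj : ∀ j : Fin n2, (∑ k, V j k ^ 2) ≤ ν * r / n2)
    (hUV : ∀ i j, |∑ k, U i k * V j k| ≤ Real.sqrt (ν * r / (n1 * n2)))
    (hr : (r : ℝ) ≤ 1 / 100000 * n2 * ν⁻¹ * ((Real.log n1) ^ 2)⁻¹)
    (hℓ : 1000000 ≤ Real.log n1) {k : ℕ} (hk : k = ⌈2 * Real.log n1⌉₊) {q : ℝ}
    (hq : q = 303104 / k) :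
    bernE ((1 - q) ^ k) (fun z => bernE (1 / 2) fun s => ind (¬DualCert U V z s))
      ≤ 9 * ((n1 : ℝ) ^ 10)⁻¹ := by
  obtain ⟨hk1, hk2, hq0, hq2, -, hρ⟩ := golfing_params hℓ hk hq
  have hn1 : 0 < n1 := hn2.trans_le hn
  have hn1' : (0 : ℝ) < n1 := by exact_mod_cast hn1
  have hn2' : (0 : ℝ) < n2 := by exact_mod_cast hn2
  have hn' : (n2 : ℝ) ≤ n1 := by exact_mod_cast hn
  set ℓ := Real.log n1 with hℓdef
  have hℓ0 : 0 < ℓ := by linarith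
  have hexp : Real.exp ℓ = n1 := Real.exp_log hn1'
  have hνr : ν * r ≤ 1 / 100000 * n2 / ℓ ^ 2 := by
    calc ν * r ≤ ν * (1 / 100000 * n2 * ν⁻¹ * (ℓ ^ 2)⁻¹) := mul_le_mul_of_nonneg_left hr hν.le
      _ = 1 / 100000 * n2 / ℓ ^ 2 := by field_simp
  have hνr0 : 0 ≤ ν * r := by positivity
  have hV2 : ν * r / n2 ≤ 1 / 100000 / ℓ ^ 2 := by
    rw [div_le_iff₀ hn2']; refine hνr.trans (le_of_eq ?_); ring
  have hU2 : ν * r / n1 ≤ 1 / 100000 / ℓ ^ 2 :=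
    (div_le_div_of_nonneg_left hνr0 hn2' hn').trans hV2
  set μ : ℝ := 1 / 50000 / ℓ ^ 2 with hμdef
  have hμ0 : 0 < μ := by positivity
  have hμℓ : μ * ℓ ^ 2 = 1 / 50000 := by rw [hμdef]; field_simp
  have hℓμ : ℓ * μ ≤ 1 / 50000 := by
    rw [← hμℓ, sq, mul_comm μ, mul_assoc]
    exact le_mul_of_one_le_left (by positivity) (by linarith)
  have hμ1 : μ ≤ 1 := by
    have := le_mul_of_one_le_left hμ0.le (by linarith : 1 ≤ ℓ)
    linarith
  have hμ : ∀ p, tproj U V p p ≤ μ := by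
    intro p
    refine (tproj_diag_le U V (fun i => (hUi i).trans hU2) (fun j => (hVj j).trans hV2) p).trans
      (le_of_eq ?_)
    rw [hμdef]; ring
  have hinf : ∀ p, |uvVec U V p| ≤ ℓ⁻¹ * (Real.sqrt n1)⁻¹ := by
    intro p
    refine (hUV p.1 p.2).trans (Real.sqrt_le_iff.mpr ⟨by positivity, ?_⟩)
    rw [mul_pow, inv_pow, inv_pow, Real.sq_sqrt hn1'.le, mul_comm (n1 : ℝ), ← div_div,
      div_le_iff₀ hn1']
    rw [mul_assoc, inv_mul_cancel₀ hn1'.ne', mul_one]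
    refine hV2.trans ?_
    rw [div_eq_mul_inv]
    exact mul_le_of_le_one_left (by positivity) (by norm_num)
  have hk0 : (0 : ℝ) < k := by linarith
  have hη : 208 * ℓ⁻¹ ≤ q := by
    rw [hq, ← div_eq_mul_inv, div_le_div_iff₀ hℓ0 hk0]; linarith
  have he1 : Real.exp (-1) ≤ 1 / 2 := by have := Real.exp_neg_one_lt_d9; linarith
  have he2 : 1 / 3 ≤ Real.exp (-1) := by have := Real.exp_neg_one_gt_d9; linarith
  have hkexp : Real.sqrt (n1 * n2) * (Real.exp (-1) ^ k * ℓ⁻¹) ≤ 1 / 100 := by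
    have h1 : Real.sqrt (n1 * n2) ≤ n1 := Real.sqrt_le_iff.mpr ⟨hn1'.le, by nlinarith⟩
    have h2 : Real.exp (-1) ^ k ≤ Real.exp (-ℓ) := by
      rw [← Real.exp_nat_mul]; exact Real.exp_le_exp.mpr (by linarith)
    have h3 : ℓ⁻¹ ≤ 1 / 100 := by
      rw [inv_eq_one_div]; exact one_div_le_one_div_of_le (by norm_num) (by linarith)
    calc Real.sqrt (n1 * n2) * (Real.exp (-1) ^ k * ℓ⁻¹)
        ≤ n1 * (Real.exp (-ℓ) * (1 / 100)) := by gcongr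
      _ = 1 / 100 := by rw [Real.exp_neg, hexp]; field_simp
  have hρ1 : (1 - q) ^ k * Real.exp 151552 ≤ 1 / 75776 := by
    calc (1 - q) ^ k * Real.exp 151552 ≤ Real.exp (-303104) * Real.exp 151552 := by gcongr
      _ = Real.exp (-151552) := by rw [← Real.exp_add]; norm_num
      _ ≤ 1 / 151552 := exp_neg_le_inv (by norm_num)
      _ ≤ 1 / 75776 := by norm_num
  have hγ1 : 4 * (1 - q) ^ k ≤ Real.exp (-1) / 1000 := by
    have : Real.exp (-303104) ≤ 1 / 303104 := exp_neg_le_inv (by norm_num)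
    linarith
  set K := ⌈13 * ℓ⌉₊ with hKdef
  have hK1 : 13 * ℓ ≤ K := Nat.le_ceil _
  have hK2 : (K : ℝ) ≤ 13 * ℓ + 1 := (Nat.ceil_lt_add_one (by linarith)).le
  have hK0 : 0 < K := Nat.ceil_pos.mpr (by linarith)
  have hγ2 : (K + 1) * μ ≤ Real.exp (-1) / 1000 := by
    have h1 : (K + 1) * μ ≤ 14 * ℓ * μ := mul_le_mul_of_nonneg_right (by linarith) hμ0.le
    linarith
  have ha : 13 * ℓ ≤ q * Real.exp (-1) ^ 2 / (4 * μ) := by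
    rw [le_div_iff₀ (by positivity)]
    have h1 : 1 / 9 ≤ Real.exp (-1) ^ 2 := by
      have := pow_le_pow_left₀ (by norm_num) he2 2
      linarith
    have h2 : 100000 / ℓ ≤ q := by
      rw [hq, div_le_div_iff₀ hℓ0 hk0]; linarith
    have h3 : 13 * ℓ * (4 * μ) = 52 * (1 / 50000) / ℓ := by
      rw [← hμℓ]; field_simp; ring
    rw [h3]
    calc 52 * (1 / 50000) / ℓ ≤ 100000 / ℓ * (1 / 9) := by
          rw [div_mul_eq_mul_div]; exact div_le_div_of_nonneg_right (by norm_num) hℓ0.le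
      _ ≤ q * Real.exp (-1) ^ 2 := by gcongr
  have hb : 12 * ℓ ≤ 1 / (128 * μ) := by
    rw [le_div_iff₀ (by positivity)]
    linarith
  refine (dualCert_tail hn1 hn2 hn hU hV hμ0 hμ1 hμ hq0 (by linarith) (Real.exp_pos _) he1
    (inv_pos.mpr hℓ0) hη hkexp hinf hρ1 hK0 hγ1 hγ2).trans ?_
  exact failure_sum_le hn1' hℓdef hℓ hn2'.le hn' hk2 hK1 ha hb rfl

end LargeDimension

lemma unifProb_nonneg {α : Type*} [Fintype α] (E : α → Prop) : 0 ≤ unifProb E := by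
  unfold unifProb; positivity

lemma abs_sparseOf {n1 n2 m : ℕ} {a : Fin n1 × Fin n2 → ℝ} (ha : ∀ p, 0 < a p)
    (ω : SampleSpace n1 n2 m) (p : Fin n1 × Fin n2) :
    |vecM (sparseOf a ω) p| = sgn (ω.2 p) * vecM (sparseOf a ω) p := by
  have := ha p
  simp only [vecM, sparseOf, Matrix.of_apply, sgn]
  split_ifs <;> simp [abs_of_pos this]

end StablePCP

/-- StablePCP_c(δ) with λ = 1/√n1 recovers (L0, S0) with error
√(720·n1·n2 + 2)·‖Z0‖_F for every δ ≥ 0 and noise Z0 with ‖Z0‖_F ≥ δ,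
with probability ≥ 1 − c′·n1⁻¹⁰ over the random support and signs. -/
theorem stablePCP_recovery_large_noise :
    ∃ ρr' ρs' c' : ℝ, 0 < ρr' ∧ 0 < ρs' ∧ 0 < c' ∧
      ∀ (n1 n2 r m : ℕ) (ν : ℝ), 0 < n2 → n2 ≤ n1 → 0 < ν →
        ∀ (U : Matrix (Fin n1) (Fin r) ℝ) (V : Matrix (Fin n2) (Fin r) ℝ)
          (σ : Fin r → ℝ) (a : Fin n1 × Fin n2 → ℝ),
          Uᵀ * U = 1 → Vᵀ * V = 1 → (∀ k, 0 < σ k) → (∀ p, 0 < a p) →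
          (∀ i : Fin n1, (∑ k, U i k ^ 2) ≤ ν * r / n1) →
          (∀ j : Fin n2, (∑ k, V j k ^ 2) ≤ ν * r / n2) →
          (∀ i j, |∑ k, U i k * V j k| ≤ Real.sqrt (ν * r / (n1 * n2))) →
          (r : ℝ) ≤ ρr' * n2 * ν⁻¹ * ((Real.log n1) ^ 2)⁻¹ →
          (m : ℝ) ≤ ρs' * n1 * n2 →
          1 - c' * ((n1 : ℝ) ^ 10)⁻¹ ≤
            unifProb (fun ω : SampleSpace n1 n2 m =>
              ∀ (δ : ℝ) (Z0 : Matrix (Fin n1) (Fin n2) ℝ), 0 ≤ δ → δ ≤ frob Z0 →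
                ∀ Lh Sh : Matrix (Fin n1) (Fin n2) ℝ,
                  IsStablePCPMin (U * Matrix.diagonal σ * Vᵀ + sparseOf a ω + Z0)
                      (Real.sqrt n1)⁻¹ δ Lh Sh →
                    pairDist Lh Sh (U * Matrix.diagonal σ * Vᵀ) (sparseOf a ω) ≤
                      Real.sqrt (720 * (n1 : ℝ) * n2 + 2) * frob Z0) := by
  refine ⟨1 / 100000, Real.exp (-606208) / 2, Real.exp (10 * 1000000) + 18, by norm_num,
    by positivity, by positivity, ?_⟩
  intro n1 n2 r m ν hn2 hn hν U V σ a hU hV hσ ha hUi hVj hUV hr hm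
  have hn1 : 0 < n1 := hn2.trans_le hn
  have hn1' : (0 : ℝ) < n1 := by exact_mod_cast hn1
  have hn2' : (1 : ℝ) ≤ n2 := by exact_mod_cast hn2
  rcases lt_or_ge (Real.log n1) 1000000 with hsmall | hℓ
  · refine le_trans ?_ (StablePCP.unifProb_nonneg _)
    have h1 : (n1 : ℝ) ^ 10 ≤ Real.exp (10 * 1000000) := by
      have h2 : Real.exp (Real.log n1) ≤ Real.exp 1000000 := Real.exp_le_exp.mpr hsmall.le
      rw [Real.exp_log hn1'] at h2
      have h3 := pow_le_pow_left₀ hn1'.le h2 10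
      rwa [← Real.exp_nat_mul] at h3
    rw [sub_nonpos, ← div_eq_mul_inv, one_le_div (by positivity)]
    linarith
  · set k := ⌈2 * Real.log n1⌉₊ with hk
    set q : ℝ := 303104 / k with hq
    obtain ⟨-, -, hq0, hq2, hρ1, hρ2⟩ := StablePCP.golfing_params hℓ hk hq
    have hfail := StablePCP.dualCert_failure_le hn2 hn hU hV hν hUi hVj hUV hr hℓ hk hq
    have hn1exp : Real.exp (Real.log n1) = n1 := Real.exp_log hn1'
    have hn1big : 10000 ≤ n1 := by
      have := Real.add_one_le_exp (Real.log n1)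
      rw [hn1exp] at this
      have h2 : (10000 : ℝ) ≤ n1 := by linarith
      exact_mod_cast h2
    have hρn : 10 ≤ (1 - q) ^ k * (n1 * n2) := by
      have h1 : (10 : ℝ) ≤ Real.exp (-606208 + Real.log n1) := by
        have := Real.add_one_le_exp (-606208 + Real.log n1)
        linarith
      rw [Real.exp_add, hn1exp] at h1
      have h2 : Real.exp (-606208) * n1 ≤ (1 - q) ^ k * n1 :=
        mul_le_mul_of_nonneg_right hρ1 hn1'.le
      nlinarith
    have hm' : (m : ℝ) ≤ (1 - q) ^ k * (n1 * n2) / 2 := by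
      have h1 : Real.exp (-606208) * (n1 * n2) ≤ (1 - q) ^ k * (n1 * n2) :=
        mul_le_mul_of_nonneg_right hρ1 (by positivity)
      linarith
    refine le_trans ?_ (StablePCP.unifProb_transfer (C := StablePCP.DualCert U V)
      (pow_nonneg (by linarith) k) (pow_le_one₀ (by linarith) (by linarith)) hm' hρn ?_)
    · have h1 : 0 ≤ ((n1 : ℝ) ^ 10)⁻¹ := by positivity
      have h2 : 0 ≤ Real.exp (10 * 1000000) * ((n1 : ℝ) ^ 10)⁻¹ := by positivity
      linarith
    · intro ω z hz hC δ Z0 hδ hδZ Lh Sh hmin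
      refine StablePCP.recovery_of_dualCert hU hV hσ hC hn1big hn2
        (StablePCP.abs_sparseOf ha ω) (fun p hp => ?_) hδ hδZ hmin
      have : p ∉ ω.1.1 := fun h => by simp [hz p h] at hp
      simp [StablePCP.vecM, sparseOf, this]
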